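/- Let p > 3 be a prime. If p ≡ 1 (mod 3), write p = x^2 + 3y^2 with integers x, y; then Σ_{k=0}^{p−1} k^2·C(2k,k)^3/16^k ≡ (4/9)x^2 − (5/9)p + p^2/(36x^2) (mod p^3) and Σ_{k=0}^{p−1} k^3·C(2k,k)^3/16^k ≡ −(2/9)x^2 + (4/9)p − 7p^2/(72x^2) (mod p^3). If p ≡ 2 (mod 3), then Σ_{k=0}^{p−1} k^2·C(2k,k)^3/16^k ≡ −(2/9)R_3(p) − (1/3)p (mod p^2) and Σ_{k=0}^{p−1} k^3·C(2k,k)^3/16^k ≡ (4/9)R_3(p) + (1/3)p (mod p^2). -/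

import Mathlib

/-- `a ≡ b (mod p^r)` for rationals: the numerator of `a - b` in lowest terms
is divisible by `p^r`. -/
def ratCongr (p r : ℕ) (a b : ℚ) : Prop := (p : ℤ)^r ∣ (a - b).num
/-- `R_3(p)`. -/
def R3 (p : ℕ) : ℚ :=
  (1 + 2*(p:ℚ) + 4/3*(2^(p-1) - 1) - 3/2*(3^(p-1) - 1)) *
    (((p-1)/2).choose (p/6) : ℚ)^2


def tE (n k : ℕ) : ℚ :=
  ∏ i ∈ Finset.range k, ((i:ℚ)-n)*(n+1+i)*(i+1/2)*4/((i+1)*(2*n+2+i)*(i-2*n))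

lemma tE_zero (n : ℕ) : tE n 0 = 1 := by simp [tE]

lemma tE_succ (n k : ℕ) : tE n (k+1) =
    tE n k * (((k:ℚ)-n)*(n+1+k)*(k+1/2)*4/((k+1)*(2*n+2+k)*(k-2*n))) := by
  rw [tE, Finset.prod_range_succ, ← tE]

lemma tE_vanish (n : ℕ) : tE n (n+1) = 0 := by
  rw [tE_succ]; simp

lemma tE_shift (n : ℕ) (hn : 1 ≤ n) (k : ℕ) (hk : k ≤ n+1) :
    tE n k = tE (n+1) k * ((2*n+1)*(n+1-k)*(2*n+3+k)*(2*n+2+k)) /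
      ((2*n+3)*(2*n+2-k)*(2*n+1-k)*(n+1+k)) := by
  induction k with
  | zero =>
    simp only [tE_zero]
    have h1 : (2*(n:ℚ)+3) ≠ 0 := by positivity
    have h2 : (2*(n:ℚ)+2) ≠ 0 := by positivity
    have h3 : (2*(n:ℚ)+1) ≠ 0 := by positivity
    have h4 : ((n:ℚ)+1) ≠ 0 := by positivity
    push_cast
    simp only [sub_zero, add_zero]
    field_simp
  | succ k ih =>
    rw [tE_succ, ih (by omega), tE_succ]
    have hk' : (k:ℚ) ≤ n := by exact_mod_cast (by omega : k ≤ n)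
    have hn' : (1:ℚ) ≤ n := by exact_mod_cast hn
    have h0 : (0:ℚ) ≤ k := by positivity
    push_cast
    have e1 : (2*(n:ℚ)+3) ≠ 0 := by positivity
    have e2 : (2*(n:ℚ)+2-k) ≠ 0 := by linarith
    have e3 : (2*(n:ℚ)+1-k) ≠ 0 := by linarith
    have e4 : ((n:ℚ)+1+k) ≠ 0 := by positivity
    have e5 : ((k:ℚ)+1) ≠ 0 := by positivity
    have e6 : (2*(n:ℚ)+2+k) ≠ 0 := by positivity
    have e7 : ((k:ℚ)-2*n) ≠ 0 := by linarith
    have e8 : (2*((n:ℚ)+1)+2+k) ≠ 0 := by positivity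
    have e9 : ((k:ℚ)-2*(n+1)) ≠ 0 := by linarith
    have e10 : (2*(n:ℚ)+2-(k+1)) ≠ 0 := by linarith
    have e11 : (2*(n:ℚ)+1-(k+1)) ≠ 0 := by linarith
    have e12 : ((n:ℚ)+1+(k+1)) ≠ 0 := by positivity
    have hz : ((2*n+1)*(n+1-k)*(2*n+3+k)*(2*n+2+k)) / ((2*n+3)*(2*n+2-k)*(2*n+1-k)*(n+1+k)) *
       (((k:ℚ)-n)*(n+1+k)*(k+1/2)*4/((k+1)*(2*n+2+k)*(k-2*n))) =
       (((k:ℚ)-(n+1))*(n+1+1+k)*(k+1/2)*4/((k+1)*(2*(n+1)+2+k)*(k-2*(n+1)))) *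
       (((2*n+1)*(n+1-(k+1))*(2*n+3+(k+1))*(2*n+2+(k+1))) /
        ((2*n+3)*(2*n+2-(k+1))*(2*n+1-(k+1))*(n+1+(k+1)))) := by
      rw [div_mul_div_comm, div_mul_div_comm, div_eq_div_iff (by positivity) (by positivity)]
      ring
    linear_combination (tE (n+1) k) * hz

/-- telescoping for the E-family -/
lemma tE_tele (n : ℕ) (hn : 1 ≤ n) (q P : ℕ → ℚ) (ρ : ℚ)
    (hid : ∀ k : ℕ, k ≤ n + 1 →
      ρ * q k * ((2*n+2-k)*(2*n+1-k)*(n+1+k)) * (2*n+3)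
        - q k * ((2*n+1)*(n+1-k)*(2*n+3+k)*(2*n+2+k)) =
      (4*(n+1-k)*(k+1/2)*(n+1+k)*P (k+1) - k*(2*n+3+k)*(2*n+1-k)*P k) * (2*n+3)) :
    ∑ k ∈ Finset.range (n+1), q k * tE n k
      = ρ * ∑ k ∈ Finset.range (n+2), q k * tE (n+1) k := by
  have key : ∀ K : ℕ, K ≤ n + 2 →
      ρ * ∑ k ∈ Finset.range K, q k * tE (n+1) k - ∑ k ∈ Finset.range K, q k * tE n k
       = tE (n+1) K * (K*(2*n+3+K)*P K/((2*n+2-K)*(n+1+K))) := by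
    intro K
    induction K with
    | zero => simp
    | succ k ih =>
      intro hk
      have ih := ih (by omega)
      have hkk := hid k (by omega)
      rw [Finset.sum_range_succ, Finset.sum_range_succ, mul_add]
      have : ρ * ∑ k ∈ Finset.range k, q k * tE (n+1) k + ρ * (q k * tE (n+1) k) -
        (∑ k ∈ Finset.range k, q k * tE n k + q k * tE n k) =
        tE (n+1) k * (k*(2*n+3+k)*P k/((2*n+2-k)*(n+1+k))) +
        (ρ * (q k * tE (n+1) k) - q k * tE n k) := by rw [← ih]; ring
      rw [this, tE_succ, tE_shift n hn k (by omega)]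
      have hk' : (k:ℚ) ≤ n+1 := by exact_mod_cast (by omega : k ≤ n+1)
      have hn' : (1:ℚ) ≤ n := by exact_mod_cast hn
      have h0 : (0:ℚ) ≤ k := by positivity
      push_cast
      have e1 : (2*(n:ℚ)+3) ≠ 0 := by positivity
      have e2 : (2*(n:ℚ)+2-k) ≠ 0 := by linarith
      have e3 : (2*(n:ℚ)+1-k) ≠ 0 := by linarith
      have e4 : ((n:ℚ)+1+k) ≠ 0 := by positivity
      have e5 : ((k:ℚ)+1) ≠ 0 := by positivity
      have e8 : (2*((n:ℚ)+1)+2+k) ≠ 0 := by positivity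
      have e9 : ((k:ℚ)-2*(n+1)) ≠ 0 := by linarith
      have e10 : (2*(n:ℚ)+2-(k+1)) ≠ 0 := by linarith
      have e12 : ((n:ℚ)+1+(k+1)) ≠ 0 := by positivity
      have main : k*(2*n+3+k)*P k/((2*n+2-k)*(n+1+k)) + (ρ * q k - q k *
          (((2*n+1)*(n+1-k)*(2*n+3+k)*(2*n+2+k)) / ((2*n+3)*(2*n+2-k)*(2*n+1-k)*(n+1+k))))
          = (((k:ℚ)-(n+1))*(n+1+1+k)*(k+1/2)*4/((k+1)*(2*(n+1)+2+k)*(k-2*(n+1)))) *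
           ((k+1)*(2*n+3+(k+1))*P (k+1)/((2*n+2-(k+1))*(n+1+(k+1)))) := by
        have r1 : (((k:ℚ)-(n+1))*(n+1+1+k)*(k+1/2)*4/((k+1)*(2*(n+1)+2+k)*(k-2*(n+1)))) *
           ((k+1)*(2*n+3+(k+1))*P (k+1)/((2*n+2-(k+1))*(n+1+(k+1)))) =
           4*(n+1-k)*(k+1/2)*P (k+1) / ((2*n+2-k)*(2*n+1-k)) := by
          rw [div_mul_div_comm, div_eq_div_iff (by positivity) (by positivity)]
          ring
        have r2 : ρ * q k - q k *
          (((2*n+1)*(n+1-k)*(2*n+3+k)*(2*n+2+k)) / ((2*n+3)*(2*n+2-k)*(2*n+1-k)*(n+1+k)))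
          = ((4*(n+1-k)*(k+1/2)*(n+1+k)*P (k+1) - k*(2*n+3+k)*(2*n+1-k)*P k) * (2*n+3)) /
             ((2*n+3)*(2*n+2-k)*(2*n+1-k)*(n+1+k)) := by
          rw [← hkk, eq_div_iff (by positivity), sub_mul, mul_assoc (q k), div_mul_cancel₀ _ (by positivity)]; ring
        rw [r1, r2]; field_simp; ring
      linear_combination (tE (n+1) k) * main
  have h := key (n+2) le_rfl
  rw [tE_vanish (n+1), zero_mul, Finset.sum_range_succ (fun k => q k * tE n k) (n+1), tE_vanish] at h
  linarith

lemma E_b (n : ℕ) (hn : 1 ≤ n) :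
    ∑ k ∈ Finset.range (n+1), (3*(k:ℚ)+1) * tE n k = 2*n+1 := by
  induction n, hn using Nat.le_induction with
  | base => norm_num [Finset.sum_range_succ, tE, Finset.prod_range_succ]
  | succ n hn ih =>
    have e1 : (2*(n:ℚ)+3) ≠ 0 := by positivity
    have e2 : (2*(n:ℚ)+1) ≠ 0 := by positivity
    have h := tE_tele n hn (fun k => 3*(k:ℚ)+1) (fun k => -(k:ℚ)*(2*(2*n+1)/(2*n+3))) ((2*n+1)/(2*n+3)) (by
      intro k hk
      push_cast
      field_simp
      ring)
    rw [ih] at h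
    push_cast
    field_simp at h
    linarith

lemma E_a (n : ℕ) (hn : 1 ≤ n) :
    ∑ k ∈ Finset.range (n+1), tE n k = (2*n+1) * ∏ i ∈ Finset.range n, (3*(i:ℚ)+2)/(3*i+4) := by
  induction n, hn using Nat.le_induction with
  | base => norm_num [Finset.sum_range_succ, tE, Finset.prod_range_succ]
  | succ n hn ih =>
    have e1 : (2*(n:ℚ)+3) ≠ 0 := by positivity
    have e2 : (2*(n:ℚ)+1) ≠ 0 := by positivity
    have e3 : (3*(n:ℚ)+2) ≠ 0 := by positivity
    have e4 : (3*(n:ℚ)+4) ≠ 0 := by positivity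
    have h := tE_tele n hn (fun k => 1) (fun k => -((2*n+1)*(2*n+2)/((2*n+3)*(3*n+2))))
      ((2*n+1)*(3*n+4)/((2*n+3)*(3*n+2))) (by
      intro k hk
      field_simp
      ring)
    simp only [one_mul] at h
    rw [ih] at h
    rw [Finset.prod_range_succ]
    push_cast
    have h2 : ∑ k ∈ Finset.range (n+2), tE (n+1) k = ((2*(n:ℚ)+1)*(3*n+4)/((2*n+3)*(3*n+2)))⁻¹ *
      ((2*n+1) * ∏ i ∈ Finset.range n, (3*(i:ℚ)+2)/(3*i+4)) := by
      rw [h, ← mul_assoc, inv_mul_cancel₀ (by positivity), one_mul]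
    rw [h2]
    field_simp
    ring

lemma E_c (n : ℕ) (hn : 1 ≤ n) :
    ∑ k ∈ Finset.range (n+1), ((3*(k:ℚ)+1)*(3*k+2)) * tE n k
      = 2*(2*n+1) * ∏ i ∈ Finset.range n, (3*(i:ℚ)+4)/(3*i+2) := by
  induction n, hn using Nat.le_induction with
  | base => norm_num [Finset.sum_range_succ, tE, Finset.prod_range_succ]
  | succ n hn ih =>
    have e1 : (2*(n:ℚ)+3) ≠ 0 := by positivity
    have e2 : (2*(n:ℚ)+1) ≠ 0 := by positivity
    have e3 : (3*(n:ℚ)+2) ≠ 0 := by positivity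
    have e4 : (3*(n:ℚ)+4) ≠ 0 := by positivity
    have h := tE_tele n hn (fun k => (3*(k:ℚ)+1)*(3*k+2))
      (fun k => -(2*(n+1)*(2*n+1)*(3*k+2)*(3*k-1)/((2*n+3)*(3*n+4))))
      ((2*n+1)*(3*n+2)/((2*n+3)*(3*n+4))) (by
      intro k hk
      push_cast
      field_simp
      ring)
    rw [ih] at h
    rw [Finset.prod_range_succ]
    push_cast
    have h2 : ∑ k ∈ Finset.range (n+2), ((3*(k:ℚ)+1)*(3*k+2)) * tE (n+1) k
       = ((2*(n:ℚ)+1)*(3*n+2)/((2*n+3)*(3*n+4)))⁻¹ *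
      (2*(2*n+1) * ∏ i ∈ Finset.range n, (3*(i:ℚ)+4)/(3*i+2)) := by
      rw [h, ← mul_assoc, inv_mul_cancel₀ (by positivity), one_mul]
    rw [h2]
    field_simp
    ring


def tF (n : ℕ) (x : ℚ) (k : ℕ) : ℚ :=
  ∏ i ∈ Finset.range k, ((i:ℚ)-n)*(x+i)*((1/2-n-x)+i)*4/((i+1)*(2*x+i)*(2*(1/2-n-x)+i))

lemma tF_zero (n : ℕ) (x : ℚ) : tF n x 0 = 1 := by simp [tF]

lemma tF_succ (n : ℕ) (x : ℚ) (k : ℕ) : tF n x (k+1) =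
    tF n x k * (((k:ℚ)-n)*(x+k)*((1/2-n-x)+k)*4/((k+1)*(2*x+k)*(2*(1/2-n-x)+k))) := by
  rw [tF, Finset.prod_range_succ, ← tF]

lemma tF_vanish (n : ℕ) (x : ℚ) : tF n x (n+1) = 0 := by
  rw [tF_succ]; simp

def okx (x : ℚ) : Prop := x = 1/2 ∨ ∃ z : ℤ, 4*x = 2*z+1

lemma okx_1 {x : ℚ} (h : okx x) (k : ℕ) : 2*x+k ≠ 0 := by
  rcases h with h | ⟨z, hz⟩
  · subst h; positivity
  · intro h0
    have : (2*z+1 + 2*k : ℚ) = 0 := by linarith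
    have h2 : (2*z+1 + 2*k : ℤ) = 0 := by exact_mod_cast this
    omega

lemma okx_2 {x : ℚ} (h : okx x) (n k : ℕ) (hk : k ≤ n+1) : 2*(-1/2-n-x)+k ≠ 0 := by
  rcases h with h | ⟨z, hz⟩
  · subst h
    have : (k:ℚ) ≤ n+1 := by exact_mod_cast hk
    have h3 : (0:ℚ) ≤ n := by positivity
    intro h4
    linarith
  · intro h0
    have : (-2-4*n-(2*z+1) + 2*k : ℚ) = 0 := by linarith
    have h2 : (-2-4*n-(2*z+1) + 2*k : ℤ) = 0 := by exact_mod_cast this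
    omega

lemma okx_3 {x : ℚ} (h : okx x) (n : ℕ) : 3*(-1/2-n-x)+2*n+2 ≠ 0 := by
  rcases h with h | ⟨z, hz⟩
  · subst h
    have h3 : (0:ℚ) ≤ n := by positivity
    intro h4
    linarith
  · intro h0
    have : (2-4*n-3*(2*z+1) : ℚ) = 0 := by linarith
    have h2 : (2-4*n-3*(2*z+1) : ℤ) = 0 := by exact_mod_cast this
    omega

lemma tF_shift (n : ℕ) (x y : ℚ) (hx : okx x) (hy : y = -1/2-n-x) (k : ℕ) (hk : k ≤ n) :
    tF n x k = tF (n+1) x k * ((n+1-k)*(y+k)*(2*(2*y+1)) / ((n+1)*(2*y+k)*(2*y+1+k))) := by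
  have hx1 := okx_1 hx
  have hy1 : ∀ j : ℕ, j ≤ n+1 → 2*y+j ≠ 0 := by
    intro j hj; rw [hy]; exact okx_2 hx n j hj
  have hn : (n:ℚ)+1 ≠ 0 := by positivity
  induction k with
  | zero =>
    simp only [tF_zero]
    have h0 := hy1 0 (by omega)
    have h1 := hy1 1 (by omega)
    push_cast at h0 h1 ⊢
    simp only [sub_zero, add_zero] at h0 h1 ⊢
    have h2 : y ≠ 0 := by intro h; apply h0; rw [h]; ring
    rw [one_mul, eq_comm, div_eq_one_iff_eq (by positivity)]
    ring
  | succ k ih =>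
    rw [tF_succ, ih (by omega), tF_succ]
    have e1 := hx1 k
    have e2 := hy1 k (by omega)
    have e3 := hy1 (k+1) (by omega)
    have e4 := hy1 (k+2) (by omega)
    have e5 : (k:ℚ)+1 ≠ 0 := by positivity
    push_cast at *
    have f1 : (1/2 - (n:ℚ) - x) = y+1 := by rw [hy]; ring
    have f2 : (1/2 - ((n:ℚ)+1) - x) = y := by rw [hy]; ring
    rw [f1, f2]
    have e6 : 2*(y+1)+(k:ℚ) ≠ 0 := by convert e4 using 1; ring
    have e7 : 2*y+1+(k:ℚ) ≠ 0 := by convert e3 using 1; ring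
    have e8 : 2*y+1+((k:ℚ)+1) ≠ 0 := by convert e4 using 1; ring
    have hz : ((n+1-k)*(y+k)*(2*(2*y+1)) / ((n+1)*(2*y+k)*(2*y+1+k))) *
      (((k:ℚ)-n)*(x+k)*((y+1)+k)*4/((k+1)*(2*x+k)*(2*(y+1)+k))) =
      (((k:ℚ)-(n+1))*(x+k)*(y+k)*4/((k+1)*(2*x+k)*(2*y+k))) *
      ((n+1-(k+1))*(y+(k+1))*(2*(2*y+1)) / ((n+1)*(2*y+(k+1))*(2*y+1+(k+1)))) := by
      rw [div_mul_div_comm, div_mul_div_comm, div_eq_div_iff (by positivity) (by positivity)]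
      ring
    linear_combination (tF (n+1) x k) * hz

lemma tF_tele (n : ℕ) (x y : ℚ) (hx : okx x) (hy : y = -1/2-n-x) (q lam P : ℕ → ℚ)
    (hid : ∀ k : ℕ, k ≤ n →
      q k * ((2*y+k)*(2*y+1+k)*(n+1)) = 2*(2*y+1)*lam k*(n+1-k)*(y+k)
      + (n+1)*(4*(k-n-1)*(x+k)*(y+k)*P (k+1) - k*(2*x+k-1)*(2*y+1+k)*P k))
    (hlast : q (n+1) = (n+1)*P (n+1)) :
    ∑ k ∈ Finset.range (n+2), q k * tF (n+1) x k = ∑ k ∈ Finset.range (n+1), lam k * tF n x k := by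
  have hx1 := okx_1 hx
  have hy1 : ∀ j : ℕ, j ≤ n+1 → 2*y+j ≠ 0 := by
    intro j hj; rw [hy]; exact okx_2 hx n j hj
  have hn : (n:ℚ)+1 ≠ 0 := by positivity
  have key : ∀ K : ℕ, K ≤ n + 1 →
      ∑ k ∈ Finset.range K, q k * tF (n+1) x k - ∑ k ∈ Finset.range K, lam k * tF n x k
       = tF (n+1) x K * (K*(2*x+K-1)*P K/(2*y+K)) := by
    intro K
    induction K with
    | zero => simp
    | succ k ih =>
      intro hk
      have ih := ih (by omega)
      have hkk := hid k (by omega)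
      rw [Finset.sum_range_succ, Finset.sum_range_succ]
      have e1 := hx1 k
      have e2 := hy1 k (by omega)
      have e3 := hy1 (k+1) (by omega)
      have e5 : (k:ℚ)+1 ≠ 0 := by positivity
      rw [tF_succ, tF_shift n x y hx hy k (by omega)]
      push_cast at *
      have f2 : (1/2 - ((n:ℚ)+1) - x) = y := by rw [hy]; ring
      rw [f2]
      have e7 : 2*y+1+(k:ℚ) ≠ 0 := by convert e3 using 1; ring
      have e9 : 2*y+((k:ℚ)+1) ≠ 0 := by convert e3 using 1
      have main : k*(2*x+k-1)*P k/(2*y+k) + (q k - lam k *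
          ((n+1-k)*(y+k)*(2*(2*y+1)) / ((n+1)*(2*y+k)*(2*y+1+k))))
          = (((k:ℚ)-(n+1))*(x+k)*(y+k)*4/((k+1)*(2*x+k)*(2*y+k))) *
            ((k+1)*(2*x+(k+1)-1)*P (k+1)/(2*y+(k+1))) := by
        have r1 : (((k:ℚ)-(n+1))*(x+k)*(y+k)*4/((k+1)*(2*x+k)*(2*y+k))) *
            ((k+1)*(2*x+(k+1)-1)*P (k+1)/(2*y+(k+1))) =
            (4*(k-n-1)*(x+k)*(y+k)*P (k+1)*(n+1)) / ((n+1)*(2*y+k)*(2*y+1+k)) := by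
          rw [div_mul_div_comm, div_eq_div_iff (by positivity) (by positivity)]
          ring
        have r2 : q k = (2*(2*y+1)*lam k*(n+1-k)*(y+k)
      + (n+1)*(4*(k-n-1)*(x+k)*(y+k)*P (k+1) - k*(2*x+k-1)*(2*y+1+k)*P k)) /
          ((n+1)*(2*y+k)*(2*y+1+k)) := by
          rw [← hkk, eq_div_iff (by positivity)]; ring
        rw [r1, r2, mul_div_assoc', ← sub_div, div_add_div _ _ (by positivity) (by positivity),
          div_eq_div_iff (by positivity) (by positivity)]
        ring
      linear_combination (tF (n+1) x k) * main + ih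
  have h := key (n+1) le_rfl
  have e3 := hy1 (n+1) (by omega)
  rw [Finset.sum_range_succ, hlast]
  push_cast at h e3
  have : ((n:ℚ)+1)*(2*x+(n+1)-1)*P (n+1)/(2*y+(n+1)) = -((n+1)*P (n+1)) := by
    have : 2*x+((n:ℚ)+1)-1 = -(2*y+(n+1)) := by rw [hy]; ring
    rw [this]; field_simp
  rw [this] at h
  linarith

def Fs (j n : ℕ) (x : ℚ) : ℚ := ∑ k ∈ Finset.range (n+1), (k:ℚ)^j * tF n x k

lemma Fs_I (n : ℕ) (x y : ℚ) (hx : okx x) (hy : y = -1/2-n-x) :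
    Fs 0 (n+1) x = 9/(2*(2*y+1)*(3*y+2*n+2)) *
      (Fs 2 n x - (4*n-1)/3 * Fs 1 n x + 2*n*(2*n-1)/9 * Fs 0 n x) := by
  have h1 := okx_2 hx n 1 (by omega)
  have h2 := okx_3 hx n
  have hn : (n:ℚ)+1 ≠ 0 := by positivity
  rw [← hy] at h1 h2
  push_cast at h1
  obtain ⟨D, hD⟩ : ∃ D, D = 3*y+2*n+2 := ⟨_, rfl⟩
  rw [← hD] at h2
  rw [← hD]
  have h := tF_tele n x y hx hy (fun k => 1)
    (fun k => 9/(2*(2*y+1)*D) * ((k:ℚ)^2 - (4*n-1)/3*k + 2*n*(2*n-1)/9))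
    (fun k => (3*k+3*y-n-1)/((n+1)*D))
    (by
      intro k hk
      have hx' : x = -1/2-n-y := by rw [hy]; ring
      rw [hx']
      push_cast
      field_simp
      rw [hD]
      ring)
    (by push_cast; field_simp; rw [hD]; ring)
  simp only [Fs, Finset.mul_sum, ← Finset.sum_sub_distrib, ← Finset.sum_add_distrib]
  simp only [pow_zero]
  rw [h]
  apply Finset.sum_congr rfl
  intro k _
  ring

lemma Fs_II (n : ℕ) (x y : ℚ) (hx : okx x) (hy : y = -1/2-n-x) :
    Fs 1 (n+1) x - 2*(n+1)/3 * Fs 0 (n+1) x =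
      - ((n+1)*(2*n+3+6*y)/(3*(2*y+1))) * Fs 0 n x := by
  have h1 := okx_2 hx n 1 (by omega)
  have hn : (n:ℚ)+1 ≠ 0 := by positivity
  rw [← hy] at h1
  push_cast at h1
  have h := tF_tele n x y hx hy (fun k => k-2*(n+1)/3)
    (fun k => - ((n+1)*(2*n+3+6*y)/(3*(2*y+1))))
    (fun k => 1/3)
    (by
      intro k hk
      have hx' : x = -1/2-n-y := by rw [hy]; ring
      rw [hx']
      field_simp
      ring)
    (by push_cast; ring)
  simp only [Fs, Finset.mul_sum, ← Finset.sum_sub_distrib, ← Finset.sum_add_distrib]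
  simp only [pow_zero, pow_one, one_mul]
  rw [← h]
  apply Finset.sum_congr rfl
  intro k _
  ring

lemma Fs_III (n : ℕ) (x y : ℚ) (hx : okx x) (hy : y = -1/2-n-x) :
    Fs 2 (n+1) x - 2*(n+1)/3 * Fs 1 (n+1) x =
      - ((n+1)/(3*(2*y+1))) * ((2*n+1+6*y) * Fs 1 n x + (2*n+1+2*y) * Fs 0 n x) := by
  have h1 := okx_2 hx n 1 (by omega)
  have hn : (n:ℚ)+1 ≠ 0 := by positivity
  rw [← hy] at h1
  push_cast at h1
  have h := tF_tele n x y hx hy (fun k => k*(k-2*(n+1)/3))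
    (fun k => - ((n+1)/(3*(2*y+1)))*((2*n+1+6*y)*k+(2*n+1+2*y)))
    (fun k => k/3)
    (by
      intro k hk
      have hx' : x = -1/2-n-y := by rw [hy]; ring
      rw [hx']
      push_cast
      field_simp
      ring)
    (by push_cast; ring)
  simp only [Fs, Finset.mul_sum, ← Finset.sum_sub_distrib, ← Finset.sum_add_distrib]
  simp only [pow_zero, pow_one, one_mul]
  refine Eq.trans ?_ (h.trans ?_)
  · apply Finset.sum_congr rfl
    intro k _
    ring
  · apply Finset.sum_congr rfl
    intro k _
    ring


lemma Fs_zero (j : ℕ) (x : ℚ) : Fs j 0 x = if j = 0 then 1 else 0 := by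
  unfold Fs
  rw [Finset.sum_range_one, tF_zero]
  simp [zero_pow_eq]

lemma okx_4 {x : ℚ} (h : okx x) (k : ℕ) : x+k ≠ 0 := by
  rcases h with h | ⟨z, hz⟩
  · subst h; positivity
  · intro h0
    have : (2*z+1 + 4*k : ℚ) = 0 := by linarith
    have h2 : (2*z+1 + 4*k : ℤ) = 0 := by exact_mod_cast this
    omega

lemma okx_5 {x : ℚ} (h : okx x) (k : ℕ) : x+k+1/2 ≠ 0 := by
  rcases h with h | ⟨z, hz⟩
  · subst h; positivity
  · intro h0
    have : (2*z+1 + 4*k + 2: ℚ) = 0 := by linarith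
    have h2 : (2*z+1 + 4*k + 2: ℤ) = 0 := by exact_mod_cast this
    omega

set_option maxHeartbeats 2000000 in
lemma Fs_step (m : ℕ) (x : ℚ) (hx : okx x)
    (h1 : Fs 1 (3*m) x = 2*m*Fs 0 (3*m) x) (h2 : Fs 2 (3*m) x = 4*m^2*Fs 0 (3*m) x) :
    Fs 0 (3*m+3) x = (3/4)*(3*m+1)*(3*m+2)*(2*m+x)*(2*m+1+x)/((3*m+x)*(3*m+1+x)*(3*m+2+x)*(x+m+1/2))
       * Fs 0 (3*m) x ∧
    Fs 1 (3*m+3) x = 2*(m+1)*Fs 0 (3*m+3) x ∧ Fs 2 (3*m+3) x = 4*(m+1)^2*Fs 0 (3*m+3) x := by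
  have a1 := Fs_I (3*m) x _ hx rfl
  have a2 := Fs_II (3*m) x _ hx rfl
  have a3 := Fs_III (3*m) x _ hx rfl
  have b1 := Fs_I (3*m+1) x _ hx rfl
  have b2 := Fs_II (3*m+1) x _ hx rfl
  have b3 := Fs_III (3*m+1) x _ hx rfl
  have c1 := Fs_I (3*m+2) x _ hx rfl
  have c2 := Fs_II (3*m+2) x _ hx rfl
  have c3 := Fs_III (3*m+2) x _ hx rfl
  have e1 := okx_4 hx (3*m)
  have e2 := okx_4 hx (3*m+1)
  have e3 := okx_4 hx (3*m+2)
  have e4 := okx_5 hx m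
  simp only [add_assoc, Nat.reduceAdd] at a1 a2 a3 b1 b2 b3 c1 c2 c3
  set A := Fs 0 (3*m) x
  rw [h1, h2] at a1
  rw [h1] at a3
  push_cast at *
  have A0 : Fs 0 (3*m+1) x = 0 := by rw [a1]; ring
  rw [A0] at a2 b1 b2 b3
  have B1 : Fs 1 (3*m+1) x = -((3*m+1)*(2*m+x)/(3*m+x)) * A := by
    have : Fs 1 (3*m+1) x = Fs 1 (3*m+1) x - 2 * (3 * ↑m + 1) / 3 * 0 := by ring
    rw [this, a2]
    congr 2
    rw [div_eq_div_iff]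
    · ring
    · intro h; apply e1; linarith
    · rw [add_comm]; exact e1
  have B2 : Fs 2 (3*m+1) x = (4*(3*m+1)-1)/3 * Fs 1 (3*m+1) x := by
    rw [eq_comm, ← sub_eq_zero]
    rw [B1] at a3 ⊢
    have : Fs 2 (3*m+1) x = 2 * (3 * ↑m + 1) / 3 * (-((3 * ↑m + 1) * (2 * ↑m + x) / (3 * ↑m + x)) * A) +
      (-((3 * ↑m + 1) / (3 * (2 * (-1 / 2 - 3 * ↑m - x) + 1))) *
      ((2 * (3 * ↑m) + (1 + 6 * (-1 / 2 - 3 * ↑m - x))) * (2 * ↑m * A) +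
        (2 * (3 * ↑m) + (1 + 2 * (-1 / 2 - 3 * ↑m - x))) * A)) := by linarith
    rw [this]
    have e1' : 3*(m:ℚ)+x ≠ 0 := by rw [add_comm]; exact e1
    have : (3 * (2 * (-1 / 2 - 3 * (m:ℚ) - x) + 1)) = -6*(3*m+x) := by ring
    rw [this]
    field_simp
    ring
  rw [B2] at b1
  have C0 : Fs 0 (3*m+2) x = 0 := by
    rw [b1]
    ring
  rw [C0] at b2 c1 c2 c3
  have C1 : Fs 1 (3*m+2) x = 0 := by linarith
  rw [C1] at b3 c1 c3
  have C2 : Fs 2 (3*m+2) x = -((3*m+2)*(2*m+1+x)/(3*m+1+x)) * Fs 1 (3*m+1) x := by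
    have e2' : 3*(m:ℚ)+1+x ≠ 0 := by intro h; apply e2; linarith
    have : (3 * (2 * (-1 / 2 - (3 * (m:ℚ) + 1) - x) + 1)) = -6*(3*m+1+x) := by ring
    rw [this] at b3
    have : Fs 2 (3*m+2) x = -((3 * ↑m + (1 + 1)) / (-6 * (3 * ↑m + 1 + x))) *
      ((2 * (3 * ↑m + 1) + (1 + 6 * (-1 / 2 - (3 * ↑m + 1) - x))) * Fs 1 (3 * m + 1) x) := by
      linear_combination b3
    rw [this]
    field_simp
    ring
  have D0 : Fs 0 (3*m+3) x = 3/4/((3*m+2+x)*(x+m+1/2)) * Fs 2 (3*m+2) x := by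
    rw [c1]
    have e3' : 3*(m:ℚ)+2+x ≠ 0 := by intro h; apply e3; linarith
    have q1 : 2 * (2 * (-1 / 2 - (3 * (m:ℚ) + 2) - x) + 1) * (3 * (-1 / 2 - (3 * ↑m + 2) - x) + (2 * (3 * ↑m + 2) + 2))
      = 12*((3*m+2+x)*(x+m+1/2)) := by ring
    rw [q1, mul_zero, mul_zero, sub_zero, add_zero]
    congr 1
    rw [div_eq_div_iff (by positivity) (by positivity)]
    ring
  refine ⟨?_, ?_, ?_⟩
  · rw [D0, C2, B1]
    have e1' : 3*(m:ℚ)+x ≠ 0 := by rw [add_comm]; exact e1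
    have e2' : 3*(m:ℚ)+1+x ≠ 0 := by intro h; apply e2; linarith
    have e3' : 3*(m:ℚ)+2+x ≠ 0 := by intro h; apply e3; linarith
    have : 3 / 4 / ((3 * ↑m + 2 + x) * (x + ↑m + 1 / 2)) *
       (-((3 * ↑m + 2) * (2 * ↑m + 1 + x) / (3 * ↑m + 1 + x)) *
        (-((3 * ↑m + 1) * (2 * ↑m + x) / (3 * ↑m + x)) * A)) =
       (3 / 4 / ((3 * ↑m + 2 + x) * (x + ↑m + 1 / 2)) *
       (((3 * ↑m + 2) * (2 * ↑m + 1 + x) / (3 * ↑m + 1 + x)) *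
        (((3 * ↑m + 1) * (2 * ↑m + x) / (3 * ↑m + x))))) * A := by ring
    rw [this]
    congr 1
    rw [div_mul_div_comm, div_mul_div_comm, div_eq_div_iff (by positivity) (by positivity)]
    ring
  · linarith
  · have : Fs 1 (3*m+3) x = 2*(m+1)*Fs 0 (3*m+3) x := by linarith
    rw [this] at c3
    linarith

lemma Fs_all (m : ℕ) (x : ℚ) (hx : okx x) :
    (Fs 0 (3*m) x * (∏ i ∈ Finset.range (3*m), (x+i)) * (∏ i ∈ Finset.range m, (x+1/2+i))
      = (3*m).factorial/(4^m * m.factorial) * ∏ i ∈ Finset.range (2*m), (x+i)) ∧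
    Fs 1 (3*m) x = 2*m*Fs 0 (3*m) x ∧ Fs 2 (3*m) x = 4*m^2*Fs 0 (3*m) x := by
  induction m with
  | zero => simp [Fs_zero]
  | succ m ih =>
    obtain ⟨h0, h1, h2⟩ := ih
    obtain ⟨s0, s1, s2⟩ := Fs_step m x hx h1 h2
    have e : 3*(m+1) = 3*m+3 := by ring
    rw [e]
    refine ⟨?_, by push_cast; exact s1, by push_cast; exact s2⟩
    have e' : 2*(m+1) = 2*m+2 := by ring
    rw [s0, e']
    have e1 := okx_4 hx (3*m)
    have e2 := okx_4 hx (3*m+1)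
    have e3 := okx_4 hx (3*m+2)
    have e4 := okx_5 hx m
    push_cast at e1 e2 e3
    have e1' : 3*(m:ℚ)+x ≠ 0 := by rw [add_comm]; exact e1
    have e2' : 3*(m:ℚ)+1+x ≠ 0 := by intro h; apply e2; linarith
    have e3' : 3*(m:ℚ)+2+x ≠ 0 := by intro h; apply e3; linarith
    have e5 : (m.factorial : ℚ) ≠ 0 := by positivity
    rw [Finset.prod_range_succ (fun i : ℕ => x + (i:ℚ)) (3*m+2), Finset.prod_range_succ (fun i : ℕ => x + (i:ℚ)) (3*m+1),
      Finset.prod_range_succ (fun i : ℕ => x + (i:ℚ)) (3*m), Finset.prod_range_succ (fun i : ℕ => x + 1/2 + (i:ℚ)) m,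
      Finset.prod_range_succ (fun i : ℕ => x + (i:ℚ)) (2*m+1), Finset.prod_range_succ (fun i : ℕ => x + (i:ℚ)) (2*m)]
    rw [show (3*m+3).factorial = (3*m+3)*((3*m+2)*((3*m+1)*(3*m).factorial)) by simp only [Nat.factorial_succ], Nat.factorial_succ m]
    push_cast
    have hr : (3*((m:ℚ)+1)*((3*m+2)*((3*m+1)*(3*m).factorial)))/(4^(m+1)*((m+1)*m.factorial)) =
      (3/4)*(3*m+1)*(3*m+2)*((3*m).factorial/(4^m * m.factorial)) := by
      field_simp
      ring
    have e6 : (3*(m:ℚ)+3) = 3*(m+1) := by ring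
    rw [e6, hr]
    generalize hP : ∏ i ∈ Finset.range (3*m), (x+(i:ℚ)) = P3 at *
    generalize hP : ∏ i ∈ Finset.range (2*m), (x+(i:ℚ)) = P2 at *
    generalize hP : ∏ i ∈ Finset.range m, (x+1/2+(i:ℚ)) = P1 at *
    generalize ((3*m).factorial:ℚ)/(4^m * m.factorial) = C at *
    have : (3/4)*(3*m+1)*(3*m+2)*(2*m+x)*(2*m+1+x)/((3*m+x)*(3*m+1+x)*(3*m+2+x)*(x+m+1/2))
       * Fs 0 (3*m) x * (P3*(x+3*m)*(x+(3*m+1))*(x+(3*m+2)))*(P1*(x+1/2+m))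
       = (3/4)*(3*m+1)*(3*m+2)*(2*m+x)*(2*m+1+x)*(Fs 0 (3*m) x*P3*P1) *
        (((3*m+x)*(3*m+1+x)*(3*m+2+x)*(x+m+1/2))/((3*m+x)*(3*m+1+x)*(3*m+2+x)*(x+m+1/2))) := by ring
    rw [this, div_self (by positivity), h0]
    ring

lemma Fs_closed (m : ℕ) (x : ℚ) (hx : okx x) :
    Fs 0 (3*m) x * (∏ i ∈ Finset.range m, (x+2*m+i)) * (∏ i ∈ Finset.range m, (x+1/2+i))
      = (3*m).factorial/(4^m * m.factorial) := by
  have h := (Fs_all m x hx).1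
  rw [show 3*m = 2*m+m by ring, Finset.prod_range_add, show 2*m+m = 3*m by ring] at h
  have h2 : ∏ i ∈ Finset.range (2*m), (x+(i:ℚ)) ≠ 0 :=
    Finset.prod_ne_zero_iff.mpr (fun i _ => okx_4 hx i)
  apply mul_right_cancel₀ h2
  rw [← h]
  have : ∏ i ∈ Finset.range m, (x+2*m+(i:ℚ)) = ∏ i ∈ Finset.range m, (x+((2*m+i:ℕ):ℚ)) := by
    apply Finset.prod_congr rfl; intro i _; push_cast; ring
  rw [this]; ring


section framework

set_option linter.unusedSectionVars false

variable {p : ℕ} [Fact p.Prime]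

def pI (p : ℕ) [Fact p.Prime] (x : ℚ) : Prop := ‖(x : ℚ_[p])‖ ≤ 1
def Un (p : ℕ) [Fact p.Prime] (x : ℚ) : Prop := ‖(x : ℚ_[p])‖ = 1

lemma Un.pI {x : ℚ} (h : Un p x) : pI p x := le_of_eq h

lemma pI_add {x y : ℚ} (hx : pI p x) (hy : pI p y) : pI p (x+y) := by
  unfold pI at *
  push_cast
  exact (Padic.nonarchimedean _ _).trans (max_le hx hy)

lemma pI_mul {x y : ℚ} (hx : pI p x) (hy : pI p y) : pI p (x*y) := by
  unfold pI at *
  push_cast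
  rw [norm_mul]
  exact mul_le_one₀ hx (norm_nonneg _) hy

lemma pI_neg {x : ℚ} (hx : pI p x) : pI p (-x) := by
  unfold pI at *
  push_cast
  rwa [norm_neg]

lemma pI_sub {x y : ℚ} (hx : pI p x) (hy : pI p y) : pI p (x-y) := by
  rw [sub_eq_add_neg]; exact pI_add hx (pI_neg hy)

lemma pI_int (z : ℤ) : pI p (z:ℚ) := by
  unfold pI; push_cast; exact Padic.norm_int_le_one z

lemma pI_nat (z : ℕ) : pI p (z:ℚ) := by
  have := pI_int (p := p) (z:ℤ)
  exact_mod_cast this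

lemma pI_pow {x : ℚ} (hx : pI p x) (k : ℕ) : pI p (x^k) := by
  induction k with
  | zero => rw [pow_zero]; exact_mod_cast pI_nat (p := p) 1
  | succ k ih => rw [pow_succ]; exact pI_mul ih hx

lemma pI_sum {ι : Type*} (s : Finset ι) (f : ι → ℚ) (h : ∀ i ∈ s, pI p (f i)) :
    pI p (∑ i ∈ s, f i) := by
  classical
  induction s using Finset.induction_on with
  | empty => rw [Finset.sum_empty]; exact_mod_cast pI_nat (p := p) 0
  | insert a s ha ih =>
    rw [Finset.sum_insert ha]
    exact pI_add (h a (by simp)) (ih (fun i hi => h i (by simp [hi])))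

lemma pI_prod {ι : Type*} (s : Finset ι) (f : ι → ℚ) (h : ∀ i ∈ s, pI p (f i)) :
    pI p (∏ i ∈ s, f i) := by
  classical
  induction s using Finset.induction_on with
  | empty => rw [Finset.prod_empty]; exact_mod_cast pI_nat (p := p) 1
  | insert a s ha ih =>
    rw [Finset.prod_insert ha]
    exact pI_mul (h a (by simp)) (ih (fun i hi => h i (by simp [hi])))

lemma Un_mul {x y : ℚ} (hx : Un p x) (hy : Un p y) : Un p (x*y) := by
  unfold Un at *; push_cast; rw [norm_mul, hx, hy, one_mul]

lemma Un_inv {x : ℚ} (hx : Un p x) : Un p (x⁻¹) := by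
  unfold Un at *; push_cast; rw [norm_inv, hx, inv_one]

lemma Un_div {x y : ℚ} (hx : Un p x) (hy : Un p y) : Un p (x/y) := by
  rw [div_eq_mul_inv]; exact Un_mul hx (Un_inv hy)

lemma Un_neg {x : ℚ} (hx : Un p x) : Un p (-x) := by
  unfold Un at *; push_cast; rwa [norm_neg]

lemma Un_pow {x : ℚ} (hx : Un p x) (k : ℕ) : Un p (x^k) := by
  unfold Un at *; push_cast; rw [norm_pow, hx, one_pow]

lemma Un_prod {ι : Type*} (s : Finset ι) (f : ι → ℚ) (h : ∀ i ∈ s, Un p (f i)) :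
    Un p (∏ i ∈ s, f i) := by
  classical
  induction s using Finset.induction_on with
  | empty => simp [Un]
  | insert a s ha ih =>
    rw [Finset.prod_insert ha]
    exact Un_mul (h a (by simp)) (ih (fun i hi => h i (by simp [hi])))

lemma pI_div {x y : ℚ} (hx : pI p x) (hy : Un p y) : pI p (x/y) := by
  rw [div_eq_mul_inv]; exact pI_mul hx (Un_inv hy).pI

lemma Un_ne {x : ℚ} (hx : Un p x) : x ≠ 0 := by
  rintro rfl; simp [Un] at hx

lemma Un_int {z : ℤ} (h : ¬ (p:ℤ) ∣ z) : Un p (z:ℚ) := by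
  unfold Un
  push_cast
  have h1 := Padic.norm_int_le_one (p := p) z
  by_contra h2
  exact h (Padic.norm_intCast_lt_one_iff.mp (lt_of_le_of_ne h1 h2))

lemma Un_nat {z : ℕ} (h : ¬ p ∣ z) : Un p (z:ℚ) := by
  have := Un_int (p := p) (z := (z:ℤ)) (by exact_mod_cast h)
  exact_mod_cast this

lemma Un_add_p {x c : ℚ} (hx : Un p x) (hc : pI p c) : Un p (x + c*p) := by
  unfold Un pI at *
  push_cast
  have hp : ‖((p:ℕ):ℚ_[p])‖ < 1 := Padic.norm_p_lt_one
  have h2 : ‖(c:ℚ_[p]) * p‖ < 1 := by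
    rw [norm_mul]
    calc _ ≤ 1 * ‖((p:ℕ):ℚ_[p])‖ := by gcongr
      _ < 1 := by rwa [one_mul]
  rw [Padic.add_eq_max_of_ne (by rw [hx]; exact h2.ne'), hx]
  exact max_eq_left h2.le

noncomputable def lft (p : ℕ) [Fact p.Prime] (x : ℚ) (h : pI p x) : ℤ_[p] := ⟨(x : ℚ_[p]), h⟩

lemma lft_coe {x : ℚ} (h : pI p x) : ((lft p x h : ℤ_[p]) : ℚ_[p]) = x := rfl

open Classical in
noncomputable def iot (p r : ℕ) [Fact p.Prime] (x : ℚ) : ZMod (p^r) :=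
  if h : pI p x then PadicInt.toZModPow r (lft p x h) else 0

variable {r : ℕ}

lemma iot_def {x : ℚ} (h : pI p x) : iot p r x = PadicInt.toZModPow r (lft p x h) := by
  unfold iot; rw [dif_pos h]

lemma iot_add {x y : ℚ} (hx : pI p x) (hy : pI p y) : iot p r (x+y) = iot p r x + iot p r y := by
  rw [iot_def hx, iot_def hy, iot_def (pI_add hx hy), ← map_add]
  refine congrArg _ (Subtype.ext ?_); rw [lft_coe]; push_cast; simp only [lft_coe]

lemma iot_mul {x y : ℚ} (hx : pI p x) (hy : pI p y) : iot p r (x*y) = iot p r x * iot p r y := by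
  rw [iot_def hx, iot_def hy, iot_def (pI_mul hx hy), ← map_mul]
  refine congrArg _ (Subtype.ext ?_); rw [lft_coe]; push_cast; simp only [lft_coe]

lemma iot_int (z : ℤ) : iot p r (z:ℚ) = z := by
  rw [iot_def (pI_int z)]
  have : lft p (z:ℚ) (pI_int z) = (z : ℤ_[p]) := by
    refine Subtype.ext ?_; rw [lft_coe]; push_cast; rfl
  rw [this, map_intCast]

lemma iot_nat (z : ℕ) : iot p r (z:ℚ) = z := by
  have := iot_int (p := p) (r := r) (z:ℤ)
  exact_mod_cast this

lemma iot_zero : iot p r 0 = 0 := by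
  have := iot_nat (p := p) (r := r) 0; exact_mod_cast this

lemma iot_one : iot p r 1 = 1 := by
  have := iot_nat (p := p) (r := r) 1; exact_mod_cast this

lemma iot_neg {x : ℚ} (hx : pI p x) : iot p r (-x) = - iot p r x := by
  have h := iot_add (r := r) hx (pI_neg hx)
  rw [add_neg_cancel, iot_zero] at h
  exact (neg_eq_of_add_eq_zero_right h.symm).symm

lemma iot_sub {x y : ℚ} (hx : pI p x) (hy : pI p y) : iot p r (x-y) = iot p r x - iot p r y := by
  rw [sub_eq_add_neg, iot_add hx (pI_neg hy), iot_neg hy, sub_eq_add_neg]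

lemma iot_pow {x : ℚ} (hx : pI p x) (k : ℕ) : iot p r (x^k) = iot p r x ^ k := by
  induction k with
  | zero => simp [iot_one]
  | succ k ih => rw [pow_succ, pow_succ, iot_mul (pI_pow hx k) hx, ih]

lemma iot_sum {ι : Type*} (s : Finset ι) (f : ι → ℚ) (h : ∀ i ∈ s, pI p (f i)) :
    iot p r (∑ i ∈ s, f i) = ∑ i ∈ s, iot p r (f i) := by
  classical
  induction s using Finset.induction_on with
  | empty => simp [iot_zero]
  | insert a s ha ih =>
    rw [Finset.sum_insert ha, Finset.sum_insert ha, iot_add (h a (by simp))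
      (pI_sum _ _ (fun i hi => h i (by simp [hi]))), ih (fun i hi => h i (by simp [hi]))]

lemma iot_prod {ι : Type*} (s : Finset ι) (f : ι → ℚ) (h : ∀ i ∈ s, pI p (f i)) :
    iot p r (∏ i ∈ s, f i) = ∏ i ∈ s, iot p r (f i) := by
  classical
  induction s using Finset.induction_on with
  | empty => simp [iot_one]
  | insert a s ha ih =>
    rw [Finset.prod_insert ha, Finset.prod_insert ha, iot_mul (h a (by simp))
      (pI_prod _ _ (fun i hi => h i (by simp [hi]))), ih (fun i hi => h i (by simp [hi]))]

lemma iot_div {x y : ℚ} (hx : pI p x) (hy : Un p y) :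
    iot p r (x/y) * iot p r y = iot p r x := by
  rw [← iot_mul (pI_div hx hy) hy.pI, div_mul_cancel₀ _ (Un_ne hy)]

lemma iot_unit {x : ℚ} (hx : Un p x) : IsUnit (iot p r x) := by
  have h : iot p r x * iot p r (x⁻¹) = 1 := by
    rw [← iot_mul hx.pI (Un_inv hx).pI, mul_inv_cancel₀ (Un_ne hx), iot_one]
  exact IsUnit.of_mul_eq_one _ h

lemma iot_eq_imp {x y : ℚ} (hx : pI p x) (hy : pI p y) (h : iot p r x = iot p r y) :
    (p:ℤ)^r ∣ (x-y).num := by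
  have h1 : iot p r (x-y) = 0 := by rw [iot_sub hx hy, h, sub_self]
  rw [iot_def (pI_sub hx hy), ← RingHom.mem_ker, PadicInt.ker_toZModPow,
    ← PadicInt.norm_le_pow_iff_mem_span_pow] at h1
  have h1 : ‖((x-y:ℚ):ℚ_[p])‖ ≤ (p:ℝ)^(-(r:ℤ)) := h1
  have h2 := (Padic.norm_int_le_pow_iff_dvd (p := p) (x-y).num r).mp (by
    have : (((x-y).num : ℤ):ℚ_[p]) = ((x-y:ℚ):ℚ_[p]) * (((x-y).den:ℤ):ℚ_[p]) := by
      have := Rat.mul_den_eq_num (x-y)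
      exact_mod_cast (congrArg (fun q : ℚ => (q:ℚ_[p])) this).symm
    rw [this, norm_mul]
    calc _ ≤ (p:ℝ)^(-(r:ℤ)) * 1 := by
            gcongr
            exact Padic.norm_int_le_one _
      _ = _ := mul_one _)
  exact_mod_cast h2

lemma int_zero_iff (z : ℤ) : ((z:ℤ): ZMod (p^r)) = 0 ↔ (p:ℤ)^r ∣ z := by
  rw [ZMod.intCast_zmod_eq_zero_iff_dvd]; push_cast; rfl

lemma p_pow_zero : (p : ZMod (p^r))^r = 0 := by
  have := ZMod.natCast_self (p^r)
  exact_mod_cast this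

lemma nat_unit {k : ℕ} (h : ¬ p ∣ k) : IsUnit (k : ZMod (p^r)) := by
  rw [← iot_nat]; exact iot_unit (Un_nat h)

lemma nat_unit' {k : ℕ} (h : 0 < k) (h2 : k < p) : IsUnit (k : ZMod (p^r)) :=
  nat_unit (fun hd => absurd (Nat.le_of_dvd h hd) (by omega))

end framework


lemma e_i1 {R : Type*} [CommRing R] (π d v : R) (hπ : π^3=0) (hd : d*v=1) :
    (d*(d^2-π^2))*(v^3*(1+π^2*v^2)) = 1 := by grind
lemma e_i2 {R : Type*} [CommRing R] (π d v : R) (hπ : π^3=0) (hd : d*v=1) :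
    (d^2*(d-π))*(v^3*(1+π*v+π^2*v^2)) = 1 := by grind
lemma e_i3 {R : Type*} [CommRing R] (π d v : R) (hd : d*v=1) :
    d*(2*d-π)^2*v^3 = 4 - 4*π*v+π^2*v^2 := by grind
lemma e_i4 {R : Type*} [CommRing R] (π h v : R) (hπ : π^3=0) (h4 : 4*h^2=1) :
    (4-4*π*v+π^2*v^2)*(h^2*(1+π*v+3*h^2*π^2*v^2))=1 := by grind
lemma e_k1 {R : Type*} [CommRing R] (π c v w s : R) (hπ : π^3=0) (hc : c*w=1) :
    c*(c^2-π^2)*(1+π^2*v^2)*(1+4*π^2*s) = c^3*(1+4*π^2*s+π^2*(v^2-w^2)) := by grind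
lemma e_k2 {R : Type*} [CommRing R] (π c v w s h : R) (hπ : π^3=0) (hc : c*w=1) (h4 : 4*h^2=1) :
    (c*(c-π)^2*(1+π*v+π^2*v^2))*(1+π^2*s) = (c-π)*(2*c-π)^2*(h^2*(1+π*v+3*h^2*π^2*v^2))*(1+π^2*(s+h^2*(v^2-w^2))) := by grind

lemma step1 {R : Type*} [CommRing R] (π d c v w h A A' E E' s : R) (hπ : π^3=0) (hd : d*v=1)
    (hc : c*w=1) (hh : 2*h=1)
    (hA : A'*(2*d^3) = A*c^3) (hE : E'*(2*d*(d^2-π^2)) = E*(c*(c^2-π^2)))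
    (h1 : E = A*(1+4*π^2*s)) :
    E' = A'*(1+4*π^2*(s+(h^2*(v^2-w^2)))) := by
  have hd3 : d^3*v^3 = 1 := by rw [← mul_pow, hd, one_pow]
  have hA2 : A' = A*(c^3*v^3*h) := by
    linear_combination h*v^3*hA - A'*(2*h*hd3 + hh)
  have hi := e_i1 π d v hπ hd
  have hE2 : E' = E*(c*(c^2-π^2)*(v^3*(1+π^2*v^2))*h) := by
    linear_combination h*(v^3*(1+π^2*v^2))*hE - E'*(2*h*hi + hh)
  have h4 : 4*h^2 = 1 := by linear_combination (2*h+1)*hh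
  have key := e_k1 π c v w s hπ hc
  rw [hE2, hA2, h1]
  linear_combination A*v^3*h*key - A*(c^3*v^3*h)*π^2*(v^2-w^2)*h4

lemma step2 {R : Type*} [CommRing R] (π d c v w h M M' G G' s : R) (hπ : π^3=0) (hd : d*v=1)
    (hc : c*w=1) (hh : 2*h=1)
    (hM : M'*(2*d*(2*d-π)^2) = M*((c-π)*(2*c-π)^2)) (hG : G'*(2*d^2*(d-π)) = G*(c*(c-π)^2))
    (h1 : G = M*(1+π^2*s)) :
    G' = M'*(1+π^2*(s+(h^2*(v^2-w^2)))) := by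
  have h4 : 4*h^2 = 1 := by linear_combination (2*h+1)*hh
  have hi := e_i2 π d v hπ hd
  have hj : (d*(2*d-π)^2)*(v^3*(h^2*(1+π*v+3*h^2*π^2*v^2))) = 1 := by
    linear_combination (h^2*(1+π*v+3*h^2*π^2*v^2)) * e_i3 π d v hd + e_i4 π h v hπ h4
  have hG2 : G' = G*(c*(c-π)^2*(v^3*(1+π*v+π^2*v^2))*h) := by
    linear_combination h*(v^3*(1+π*v+π^2*v^2))*hG - G'*(2*h*hi + hh)
  have hM2 : M' = M*((c-π)*(2*c-π)^2*(v^3*(h^2*(1+π*v+3*h^2*π^2*v^2)))*h) := by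
    linear_combination h*(v^3*(h^2*(1+π*v+3*h^2*π^2*v^2)))*hM - M'*(2*h*hj + hh)
  have key := e_k2 π c v w s h hπ hc h4
  rw [hG2, hM2, h1]
  linear_combination M*v^3*h*key

lemma step3 {R : Type*} [CommRing R] (π d c v h A A' M M' w : R) (hd : d*v=1)
    (hh : 2*h=1)
    (hA : A'*(2*d^3) = A*c^3)
    (hM : M'*(2*d*(2*d-π)^2) = M*((c-π)*(2*c-π)^2))
    (h1 : M = A + π*w) : ∃ w', M' = A' + π*w' := by
  have hd3 : d^3*v^3 = 1 := by rw [← mul_pow, hd, one_pow]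
  have h4 : 4*h^2 = 1 := by linear_combination (2*h+1)*hh
  have h8 : 8*h^3 = 1 := by linear_combination (4*h^2)*hh+h4
  refine ⟨h^3*v^3*(w*(4*c^3) + M*(-8*c^2+5*c*π-π^2) + M'*(8*d^2-2*d*π)), ?_⟩
  subst h1
  linear_combination (h^3*v^3)*hM - 4*h^3*v^3*hA - (M'-A')*(8*h^3*hd3+h8)

/-- mod p^2 version -/
lemma step0 {R : Type*} [CommRing R] (π d c v h A A' E E' : R) (hπ : π^2=0) (hd : d*v=1)
    (hh : 2*h=1)
    (hA : A'*(2*d^3) = A*c^3) (hE : E'*(2*d*(d^2-π^2)) = E*(c*(c^2-π^2)))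
    (h1 : E = A) : E' = A' := by
  have hd3 : d^3*v^3 = 1 := by rw [← mul_pow, hd, one_pow]
  subst h1
  rw [hπ, sub_zero, sub_zero] at hE
  linear_combination (h*v^3)*hE - h*v^3*hA - (E'-A')*(2*h*hd3+hh)

lemma indE {R : Type*} [CommRing R] (π h : R) (n : ℕ) (A E G M : ℕ → R) (hπ : π^3=0) (hh : 2*h=1)
    (hd : ∀ k < n, IsUnit ((k:R)+1)) (hc : ∀ k < n, IsUnit (2*(k:R)+1))
    (hA0 : A 0 = 1) (hE0 : E 0 = 1) (hG0 : G 0 = 1) (hM0 : M 0 = 1)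
    (hA : ∀ k < n, A (k+1)*(2*((k:R)+1)^3) = A k*(2*(k:R)+1)^3)
    (hE : ∀ k < n, E (k+1)*(2*((k:R)+1)*(((k:R)+1)^2-π^2)) = E k*((2*(k:R)+1)*((2*(k:R)+1)^2-π^2)))
    (hM : ∀ k < n, M (k+1)*(2*((k:R)+1)*(2*((k:R)+1)-π)^2) = M k*(((2*(k:R)+1)-π)*(2*(2*(k:R)+1)-π)^2))
    (hG : ∀ k < n, G (k+1)*(2*((k:R)+1)^2*(((k:R)+1)-π)) = G k*((2*(k:R)+1)*((2*(k:R)+1)-π)^2))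
    (k : ℕ) (hk : k ≤ n) : ∃ s w, E k = A k*(1+4*π^2*s) ∧ G k = M k*(1+π^2*s) ∧ M k = A k + π*w := by
  induction k with
  | zero => exact ⟨0, 0, by simp [hE0, hA0], by simp [hG0, hM0], by simp [hM0, hA0]⟩
  | succ k ih =>
    obtain ⟨s, w, h1, h2, h3⟩ := ih (by omega)
    obtain ⟨v, hv⟩ := (hd k (by omega)).exists_right_inv
    obtain ⟨u, hu⟩ := (hc k (by omega)).exists_right_inv
    obtain ⟨w', hw'⟩ := step3 π _ _ v h _ _ _ _ w hv hh (hA k (by omega)) (hM k (by omega)) h3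
    exact ⟨_, w', step1 π _ _ v u h _ _ _ _ s hπ hv hu hh (hA k (by omega)) (hE k (by omega)) h1,
      step2 π _ _ v u h _ _ _ _ s hπ hv hu hh (hM k (by omega)) (hG k (by omega)) h2, hw'⟩

lemma indE_res {R : Type*} [CommRing R] (π h : R) (n : ℕ) (A E G M : ℕ → R) (hπ : π^3=0) (hh : 2*h=1)
    (hd : ∀ k < n, IsUnit ((k:R)+1)) (hc : ∀ k < n, IsUnit (2*(k:R)+1))
    (hA0 : A 0 = 1) (hE0 : E 0 = 1) (hG0 : G 0 = 1) (hM0 : M 0 = 1)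
    (hA : ∀ k < n, A (k+1)*(2*((k:R)+1)^3) = A k*(2*(k:R)+1)^3)
    (hE : ∀ k < n, E (k+1)*(2*((k:R)+1)*(((k:R)+1)^2-π^2)) = E k*((2*(k:R)+1)*((2*(k:R)+1)^2-π^2)))
    (hM : ∀ k < n, M (k+1)*(2*((k:R)+1)*(2*((k:R)+1)-π)^2) = M k*(((2*(k:R)+1)-π)*(2*(2*(k:R)+1)-π)^2))
    (hG : ∀ k < n, G (k+1)*(2*((k:R)+1)^2*(((k:R)+1)-π)) = G k*((2*(k:R)+1)*((2*(k:R)+1)-π)^2))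
    (k : ℕ) (hk : k ≤ n) : A k = E k - 4*(G k - M k) ∧ (∃ t, G k - M k = π^2*t) ∧
      ∃ t, M k = A k + π * t := by
  obtain ⟨s, w, h1, h2, h3⟩ := indE π h n A E G M hπ hh hd hc hA0 hE0 hG0 hM0 hA hE hM hG k hk
  refine ⟨?_, ⟨M k * s, by rw [h2]; ring⟩, w, h3⟩
  rw [h2, h1, h3]
  linear_combination 4*w*s*hπ

lemma ind0 {R : Type*} [CommRing R] (π h : R) (n : ℕ) (A E : ℕ → R) (hπ : π^2=0) (hh : 2*h=1)
    (hd : ∀ k < n, IsUnit ((k:R)+1))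
    (hA0 : A 0 = 1) (hE0 : E 0 = 1)
    (hA : ∀ k < n, A (k+1)*(2*((k:R)+1)^3) = A k*(2*(k:R)+1)^3)
    (hE : ∀ k < n, E (k+1)*(2*((k:R)+1)*(((k:R)+1)^2-π^2)) = E k*((2*(k:R)+1)*((2*(k:R)+1)^2-π^2)))
    (k : ℕ) (hk : k ≤ n) : E k = A k := by
  induction k with
  | zero => simp [hE0, hA0]
  | succ k ih =>
    obtain ⟨v, hv⟩ := (hd k (by omega)).exists_right_inv
    exact step0 π _ _ v h _ _ _ _ hπ hv hh (hA k (by omega)) (hE k (by omega)) (ih (by omega))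


section termwise
open Finset

variable {p : ℕ} [Fact p.Prime]

def aS (k : ℕ) : ℚ := ((2*k).choose k : ℚ)^3 / 16^k

lemma aS_zero : aS 0 = 1 := by simp [aS]

lemma aS_succ (k : ℕ) : aS (k+1) * (2*((k:ℚ)+1)^3) = aS k * (2*(k:ℚ)+1)^3 := by
  have h := Nat.succ_mul_centralBinom_succ k
  simp only [Nat.centralBinom] at h
  have h' : ((k:ℚ)+1) * ((2*(k+1)).choose (k+1) : ℚ) = 2*(2*k+1)*((2*k).choose k : ℚ) := by
    exact_mod_cast h
  unfold aS
  have e : ((2*(k+1)).choose (k+1) : ℚ)^3 * ((k:ℚ)+1)^3 = 8*(2*k+1)^3*((2*k).choose k : ℚ)^3 := by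
    rw [← mul_pow, mul_comm, h']; ring
  rw [div_mul_eq_mul_div, div_mul_eq_mul_div, div_eq_div_iff (by positivity) (by positivity), pow_succ]
  linear_combination 2 * 16^k * e

lemma frac_aux (t N D N' D' : ℚ) (hD : D ≠ 0) (h : N*D' = N'*D) : t*(N/D)*D' = t*N' := by
  rw [mul_assoc, div_mul_eq_mul_div, h, mul_div_assoc, div_self hD, mul_one]

lemma Un_small (h : 0 < k) (h2 : k < p) : Un p (k:ℚ) :=
  Un_nat (Nat.not_dvd_of_pos_of_lt h h2)

lemma Un_two (hp : 2 < p) : Un p (2:ℚ) := by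
  have := Un_small (p := p) (k := 2) (by norm_num) hp
  exact_mod_cast this

lemma aS_pI (hp : 2 < p) (k : ℕ) : pI p (aS k) := by
  apply pI_div (pI_pow (pI_nat _) _)
  have : (16:ℚ) = 2^4 := by norm_num
  rw [this]
  exact Un_pow (Un_pow (Un_two hp) _) _

lemma aS_dvd {n : ℕ} (hpn : p = 2*n+1) {k : ℕ} (h1 : n < k) (h2 : k < p) :
    p ∣ (2*k).choose k := by
  have hp : p.Prime := Fact.out
  have := hp.dvd_choose_add (a := k) (b := k) h2 h2 (by omega)
  rwa [← two_mul] at this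

lemma aS_vanish {r : ℕ} (hr : r ≤ 3) {n : ℕ} (hpn : p = 2*n+1) (hp : 2 < p) {k : ℕ} (h1 : n < k) (h2 : k < p) :
    iot p r (aS k) = 0 := by
  obtain ⟨c, hc⟩ := aS_dvd hpn h1 h2
  have hU : Un p ((16:ℚ)^k) := by
    have : (16:ℚ) = 2^4 := by norm_num
    rw [this]
    exact Un_pow (Un_pow (Un_two hp) _) _
  have : aS k = ((p^3:ℕ):ℚ) * ((c:ℚ)^3/16^k) := by
    unfold aS; rw [hc]; push_cast; ring
  rw [this, iot_mul (pI_nat _) (pI_div (pI_pow (pI_nat _) _) hU), iot_nat]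
  have h3 : ((p^3:ℕ): ZMod (p^r)) = 0 := by
    push_cast
    rw [← Nat.add_sub_cancel' hr, pow_add, p_pow_zero, zero_mul]
  rw [h3, zero_mul]

lemma seq_pI (t D N : ℕ → ℚ) (n : ℕ) (h0 : t 0 = 1) (hD : ∀ k < n, Un p (D k))
    (hN : ∀ k < n, pI p (N k)) (h : ∀ k < n, t (k+1) * D k = t k * N k) (k : ℕ) (hk : k ≤ n) :
    pI p (t k) := by
  induction k with
  | zero => rw [h0]; exact_mod_cast pI_nat (p := p) 1
  | succ k ih =>
    have : t (k+1) = t k * N k / D k := by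
      rw [eq_div_iff (Un_ne (hD k hk)), h k hk]
    rw [this]
    exact pI_div (pI_mul (ih (by omega)) (hN k hk)) (hD k hk)

lemma tE_rec {n : ℕ} (k : ℕ) (hk : k < n) :
    tE n (k+1) * (2*((k:ℚ)+1)*(((k:ℚ)+1)^2-(2*n+1)^2)) = tE n k * ((2*k+1)*((2*k+1)^2-(2*n+1)^2)) := by
  rw [tE_succ]
  have h : (k:ℚ) < n := by exact_mod_cast hk
  have e0 : (0:ℚ) ≤ k := by positivity
  have e5 : ((k:ℚ)+1) ≠ 0 := by positivity
  have e6 : (2*(n:ℚ)+2+k) ≠ 0 := by positivity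
  have e7 : ((k:ℚ)-2*n) ≠ 0 := by linarith
  apply frac_aux
  · exact mul_ne_zero (mul_ne_zero e5 e6) e7
  ring

lemma tG_rec {n : ℕ} (k : ℕ) (hk : k < n) :
    tF n (1/2) (k+1) * (2*((k:ℚ)+1)^2*(((k:ℚ)+1)-(2*n+1))) = tF n (1/2) k * ((2*k+1)*((2*k+1)-(2*n+1))^2) := by
  rw [tF_succ]
  have h : (k:ℚ) < n := by exact_mod_cast hk
  have e0 : (0:ℚ) ≤ k := by positivity
  have e5 : ((k:ℚ)+1) ≠ 0 := by positivity
  have e6 : (2*(1/2:ℚ)+k) = k+1 := by ring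
  have e7 : (2*((1/2:ℚ)-n-1/2)+k) = k-2*n := by ring
  have e8 : ((k:ℚ)-2*n) ≠ 0 := by linarith
  rw [e6, e7]
  field_simp
  ring

lemma tM_rec {n : ℕ} (k : ℕ) :
    tF n (1/4-n/2) (k+1) * (2*((k:ℚ)+1)*(2*((k:ℚ)+1)-(2*n+1))^2) = tF n (1/4-n/2) k * (((2*k+1)-(2*n+1))*(2*(2*k+1)-(2*n+1))^2) := by
  rw [tF_succ]
  have e5 : ((k:ℚ)+1) ≠ 0 := by positivity
  have e6 : (2*(1/4-n/2:ℚ)+k) = (2*((k:ℚ)+1)-(2*n+1))/2 - 0 := by ring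
  have e7 : (2*((1/2:ℚ)-n-(1/4-n/2))+k) = (2*((k:ℚ)+1)-(2*n+1))/2 := by ring
  have e8 : (2*((k:ℚ)+1)-(2*n+1)) ≠ 0 := by
    have : (2*((k:ℤ)+1)-(2*n+1)) ≠ 0 := by omega
    exact_mod_cast this
  rw [e6, e7, sub_zero]
  apply frac_aux
  · have := div_ne_zero e8 (two_ne_zero)
    exact mul_ne_zero (mul_ne_zero e5 this) this
  ring

lemma Un_d {n : ℕ} (hpn : p = 2*n+1) (k : ℕ) (hk : k < n) : Un p ((k:ℚ)+1) := by
  have := Un_small (p := p) (k := k+1) (by omega) (by omega)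
  exact_mod_cast this

lemma Un_dp {n : ℕ} (hpn : p = 2*n+1) (k : ℕ) (hk : k < n) (c : ℤ) : Un p (((k:ℚ)+1) + c * (2*n+1)) := by
  have := Un_add_p (Un_d hpn k hk) (pI_int c)
  have e : (p:ℚ) = 2*n+1 := by rw [hpn]; push_cast; ring
  rwa [e] at this

lemma pI_c {n : ℕ} (a b c : ℤ) (k : ℕ) : pI p ((a:ℚ)*(2*k+1)+b*(2*n+1) + c) := by
  have := pI_int (p := p) (a*(2*k+1)+b*(2*n+1)+c)
  exact_mod_cast this

lemma Un_D1 {n : ℕ} (hpn : p = 2*n+1) (hp : 2 < p) (k : ℕ) (hk : k < n) :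
    Un p (2*((k:ℚ)+1)*(((k:ℚ)+1)^2-(2*n+1)^2)) := by
  have : (2*((k:ℚ)+1)*(((k:ℚ)+1)^2-(2*n+1)^2)) = 2*((k:ℚ)+1)*((((k:ℚ)+1)+((1:ℤ):ℚ)*(2*n+1))*(((k:ℚ)+1)+((-1:ℤ):ℚ)*(2*n+1))) := by
    push_cast; ring
  rw [this]
  exact Un_mul (Un_mul (Un_two hp) (Un_d hpn k hk)) (Un_mul (Un_dp hpn k hk _) (Un_dp hpn k hk _))

lemma Un_D2 {n : ℕ} (hpn : p = 2*n+1) (hp : 2 < p) (k : ℕ) (hk : k < n) :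
    Un p (2*((k:ℚ)+1)^2*(((k:ℚ)+1)-(2*n+1))) := by
  have : (2*((k:ℚ)+1)^2*(((k:ℚ)+1)-(2*n+1))) = 2*((k:ℚ)+1)^2*((((k:ℚ)+1)+((-1:ℤ):ℚ)*(2*n+1))) := by
    push_cast; ring
  rw [this]
  exact Un_mul (Un_mul (Un_two hp) (Un_pow (Un_d hpn k hk) _)) (Un_dp hpn k hk _)

lemma Un_D3 {n : ℕ} (hpn : p = 2*n+1) (hp : 2 < p) (k : ℕ) (hk : k < n) :
    Un p (2*((k:ℚ)+1)*(2*((k:ℚ)+1)-(2*n+1))^2) := by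
  have h := Un_add_p (Un_mul (Un_two hp) (Un_d hpn k hk)) (pI_int (-1))
  have e : (p:ℚ) = 2*n+1 := by rw [hpn]; push_cast; ring
  rw [e] at h
  have : 2*((k:ℚ)+1) + ((-1:ℤ):ℚ)*(2*n+1) = 2*((k:ℚ)+1)-(2*n+1) := by push_cast; ring
  rw [this] at h
  exact Un_mul (Un_mul (Un_two hp) (Un_d hpn k hk)) (Un_pow h _)

/-- integers cast -/
lemma iot_mul_int {r : ℕ} {x : ℚ} (hx : pI p x) (z : ℤ) : iot p r (x*(z:ℚ)) = iot p r x * z := by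
  rw [iot_mul hx (pI_int _), iot_int]

lemma iot_rec {r : ℕ} {x y : ℚ} (hx : pI p x) (hy : pI p y) (z w : ℤ) (h : x*(z:ℚ) = y*(w:ℚ)) :
    iot p r x * (z : ZMod (p^r)) = iot p r y * w := by
  rw [← iot_mul_int hx, ← iot_mul_int hy, h]

lemma tE_pI {n : ℕ} (hpn : p = 2*n+1) (hp : 2 < p) (k : ℕ) (hk : k ≤ n) : pI p (tE n k) := by
  refine seq_pI _ (fun k => 2*((k:ℚ)+1)*(((k:ℚ)+1)^2-(2*n+1)^2)) (fun k => (2*(k:ℚ)+1)*((2*k+1)^2-(2*n+1)^2)) n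
    (tE_zero n) (Un_D1 hpn hp) (fun k _ => ?_) (tE_rec) k hk
  have := pI_int (p := p) ((2*(k:ℤ)+1)*((2*k+1)^2-(2*n+1)^2))
  exact_mod_cast this

lemma tG_pI {n : ℕ} (hpn : p = 2*n+1) (hp : 2 < p) (k : ℕ) (hk : k ≤ n) : pI p (tF n (1/2) k) := by
  refine seq_pI _ (fun k => 2*((k:ℚ)+1)^2*(((k:ℚ)+1)-(2*n+1))) (fun k => (2*(k:ℚ)+1)*((2*k+1)-(2*n+1))^2) n
    (tF_zero n _) (Un_D2 hpn hp) (fun k _ => ?_) (tG_rec) k hk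
  have := pI_int (p := p) ((2*(k:ℤ)+1)*((2*k+1)-(2*n+1))^2)
  exact_mod_cast this

lemma tM_pI {n : ℕ} (hpn : p = 2*n+1) (hp : 2 < p) (k : ℕ) (hk : k ≤ n) : pI p (tF n (1/4-n/2) k) := by
  refine seq_pI _ (fun k => 2*((k:ℚ)+1)*(2*((k:ℚ)+1)-(2*n+1))^2) (fun k => ((2*(k:ℚ)+1)-(2*n+1))*(2*(2*k+1)-(2*n+1))^2) n
    (tF_zero n _) (Un_D3 hpn hp) (fun k _ => ?_) (fun k _ => tM_rec k) k hk
  have := pI_int (p := p) (((2*(k:ℤ)+1)-(2*n+1))*(2*(2*k+1)-(2*n+1))^2)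
  exact_mod_cast this

lemma pcast {r n : ℕ} (hpn : p = 2*n+1) : ((p:ℕ) : ZMod (p^r)) = 2*n+1 := by
  have : ((p:ℕ) : ZMod (p^r)) = ((2*n+1 : ℕ) : ZMod (p^r)) := congrArg _ hpn
  rw [this]; push_cast; ring

lemma two_unit {r : ℕ} (hp : 2 < p) : IsUnit (2 : ZMod (p^r)) := by
  have := nat_unit' (p := p) (r := r) (k := 2) (by norm_num) hp
  exact_mod_cast this

lemma d_unit {r n : ℕ} (hpn : p = 2*n+1) (k : ℕ) (hk : k < n) : IsUnit ((k:ZMod (p^r))+1) := by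
  have := nat_unit' (p := p) (r := r) (k := k+1) (by omega) (by omega)
  exact_mod_cast this

lemma c_unit {r n : ℕ} (hpn : p = 2*n+1) (k : ℕ) (hk : k < n) : IsUnit (2*(k:ZMod (p^r))+1) := by
  have := nat_unit' (p := p) (r := r) (k := 2*k+1) (by omega) (by omega)
  exact_mod_cast this

lemma aS_recR {r : ℕ} (hp : 2 < p) (k : ℕ) :
    iot p r (aS (k+1)) * (2*((k:ZMod (p^r))+1)^3) = iot p r (aS k) * (2*(k:ZMod (p^r))+1)^3 := by
  have := iot_rec (r := r) (aS_pI hp (k+1)) (aS_pI hp k) (2*((k:ℤ)+1)^3) ((2*(k:ℤ)+1)^3)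
    (by push_cast; exact aS_succ k)
  push_cast at this; exact this

lemma tE_recR {r n : ℕ} (hpn : p = 2*n+1) (hp : 2 < p) (k : ℕ) (hk : k < n) :
    iot p r (tE n (k+1)) * (2*((k:ZMod (p^r))+1)*(((k:ZMod (p^r))+1)^2-(p:ZMod (p^r))^2))
      = iot p r (tE n k) * ((2*(k:ZMod (p^r))+1)*((2*(k:ZMod (p^r))+1)^2-(p:ZMod (p^r))^2)) := by
  have := iot_rec (r := r) (tE_pI hpn hp (k+1) (by omega)) (tE_pI hpn hp k (by omega))
    (2*((k:ℤ)+1)*(((k:ℤ)+1)^2-(2*n+1)^2)) ((2*k+1)*((2*k+1)^2-(2*n+1)^2))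
    (by push_cast; exact tE_rec k hk)
  push_cast at this; rw [pcast hpn]; exact this

lemma tG_recR {r n : ℕ} (hpn : p = 2*n+1) (hp : 2 < p) (k : ℕ) (hk : k < n) :
    iot p r (tF n (1/2) (k+1)) * (2*((k:ZMod (p^r))+1)^2*(((k:ZMod (p^r))+1)-(p:ZMod (p^r))))
      = iot p r (tF n (1/2) k) * ((2*(k:ZMod (p^r))+1)*((2*(k:ZMod (p^r))+1)-(p:ZMod (p^r)))^2) := by
  have := iot_rec (r := r) (tG_pI hpn hp (k+1) (by omega)) (tG_pI hpn hp k (by omega))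
    (2*((k:ℤ)+1)^2*(((k:ℤ)+1)-(2*n+1))) ((2*k+1)*((2*k+1)-(2*n+1))^2)
    (by push_cast; exact tG_rec k hk)
  push_cast at this; rw [pcast hpn]; exact this

lemma tM_recR {r n : ℕ} (hpn : p = 2*n+1) (hp : 2 < p) (k : ℕ) (hk : k < n) :
    iot p r (tF n (1/4-n/2) (k+1)) * (2*((k:ZMod (p^r))+1)*(2*((k:ZMod (p^r))+1)-(p:ZMod (p^r)))^2)
      = iot p r (tF n (1/4-n/2) k) * (((2*(k:ZMod (p^r))+1)-(p:ZMod (p^r)))*(2*(2*(k:ZMod (p^r))+1)-(p:ZMod (p^r)))^2) := by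
  have := iot_rec (r := r) (tM_pI hpn hp (k+1) (by omega)) (tM_pI hpn hp k (by omega))
    (2*((k:ℤ)+1)*(2*((k:ℤ)+1)-(2*n+1))^2) (((2*k+1)-(2*n+1))*(2*(2*k+1)-(2*n+1))^2)
    (by push_cast; exact tM_rec k)
  push_cast at this; rw [pcast hpn]; exact this

lemma termwise3 {n : ℕ} (hpn : p = 2*n+1) (hp : 2 < p) (k : ℕ) (hk : k ≤ n) :
    iot p 3 (aS k) = iot p 3 (tE n k) - 4*(iot p 3 (tF n (1/2) k) - iot p 3 (tF n (1/4-n/2) k)) ∧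
    (∃ t, iot p 3 (tF n (1/2) k) - iot p 3 (tF n (1/4-n/2) k) = (p:ZMod (p^3))^2*t) ∧
    ∃ t, iot p 3 (tF n (1/4-n/2) k) = iot p 3 (aS k) + (p:ZMod (p^3)) * t := by
  obtain ⟨h, hh⟩ := (two_unit (p := p) (r := 3) hp).exists_right_inv
  exact indE_res (p:ZMod (p^3)) h n (fun k => iot p 3 (aS k)) (fun k => iot p 3 (tE n k))
    (fun k => iot p 3 (tF n (1/2) k)) (fun k => iot p 3 (tF n (1/4-n/2) k)) p_pow_zero hh
    (d_unit hpn) (c_unit hpn) (by simp [aS_zero, iot_one]) (by simp [tE_zero, iot_one])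
    (by simp [tF_zero, iot_one]) (by simp [tF_zero, iot_one])
    (fun k _ => aS_recR hp k) (tE_recR hpn hp) (tM_recR hpn hp) (tG_recR hpn hp) k hk

lemma termwise2 {n : ℕ} (hpn : p = 2*n+1) (hp : 2 < p) (k : ℕ) (hk : k ≤ n) :
    iot p 2 (tE n k) = iot p 2 (aS k) := by
  obtain ⟨h, hh⟩ := (two_unit (p := p) (r := 2) hp).exists_right_inv
  exact ind0 (p:ZMod (p^2)) h n (fun k => iot p 2 (aS k)) (fun k => iot p 2 (tE n k))
    p_pow_zero hh
    (d_unit hpn) (by simp [aS_zero, iot_one]) (by simp [tE_zero, iot_one])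
    (fun k _ => aS_recR hp k) (tE_recR hpn hp) k hk

end termwise


section sums
open Finset

variable {p : ℕ} [Fact p.Prime]

def SS (p j : ℕ) : ℚ := ∑ k ∈ range p, (k:ℚ)^j * aS k

lemma SS_pI (hp : 2 < p) (j : ℕ) : pI p (SS p j) :=
  pI_sum _ _ (fun k _ => pI_mul (pI_pow (pI_nat _) _) (aS_pI hp k))

lemma SS_tele (N : ℕ) : ∑ k ∈ range N, (6*(k:ℚ)^3+12*(k:ℚ)^2+6*k+1)*aS k = 2*(N:ℚ)^3*aS N := by
  induction N with
  | zero => simp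
  | succ N ih =>
    rw [sum_range_succ, ih]
    have := aS_succ N
    push_cast
    linear_combination -this

lemma SS_iot {r : ℕ} (hr : r ≤ 3) {n : ℕ} (hpn : p = 2*n+1) (hp : 2 < p) (j : ℕ) :
    iot p r (SS p j) = ∑ k ∈ range (n+1), (k : ZMod (p^r))^j * iot p r (aS k) := by
  unfold SS
  rw [iot_sum _ _ (fun k _ => pI_mul (pI_pow (pI_nat _) _) (aS_pI hp k))]
  have h1 : range (n+1) ⊆ range p := by
    intro k; simp only [mem_range]; omega
  rw [← sum_subset h1]
  · refine sum_congr rfl fun k _ => ?_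
    rw [iot_mul (pI_pow (pI_nat _) _) (aS_pI hp k), iot_pow (pI_nat _), iot_nat]
  · intro k hk hk2
    simp only [mem_range, not_lt] at hk hk2
    rw [iot_mul (pI_pow (pI_nat _) _) (aS_pI hp k), aS_vanish hr hpn hp (by omega) hk, mul_zero]

lemma SS_rel {r : ℕ} (hr : r ≤ 3) (hp : 2 < p) :
    6*iot p r (SS p 3) + 12*iot p r (SS p 2) + 6*iot p r (SS p 1) + iot p r (SS p 0) = 0 := by
  have h : ((6:ℕ):ℚ)*SS p 3 + ((12:ℕ):ℚ)*SS p 2+((6:ℕ):ℚ)*SS p 1+SS p 0 = ((2*p^3:ℕ):ℚ)*aS p := by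
    have := SS_tele p
    push_cast
    rw [← this]
    simp only [SS, mul_sum, ← sum_add_distrib]
    refine sum_congr rfl fun k _ => ?_
    ring
  have h2 := congrArg (iot p r) h
  have q := fun j => SS_pI (p := p) hp j
  rw [iot_add (pI_add (pI_add (pI_mul (pI_nat _) (q _)) (pI_mul (pI_nat _) (q _))) (pI_mul (pI_nat _) (q _))) (q _),
    iot_add (pI_add (pI_mul (pI_nat _) (q _)) (pI_mul (pI_nat _) (q _))) (pI_mul (pI_nat _) (q _)),
    iot_add (pI_mul (pI_nat _) (q _)) (pI_mul (pI_nat _) (q _)),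
    iot_mul (pI_nat _) (q _), iot_mul (pI_nat _) (q _), iot_mul (pI_nat _) (q _),
    iot_mul (pI_nat _) (aS_pI hp _), iot_nat, iot_nat, iot_nat] at h2
  have h3 : ((2*p^3:ℕ): ZMod (p^r)) = 0 := by
    push_cast
    rw [← Nat.add_sub_cancel' hr, pow_add, p_pow_zero]; ring
  rw [h3, zero_mul] at h2
  push_cast at h2
  exact h2

/-- weighted image of a sum -/
lemma wsum_iot {r n : ℕ} (t : ℕ → ℚ) (ht : ∀ k ≤ n, pI p (t k)) (w : ℕ → ℤ) :
    iot p r (∑ k ∈ range (n+1), ((w k : ℤ):ℚ) * t k) = ∑ k ∈ range (n+1), (w k : ZMod (p^r)) * iot p r (t k) := by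
  have : ∀ k ∈ range (n+1), pI p (t k) := fun k hk => ht k (by simp only [mem_range] at hk; omega)
  rw [iot_sum _ _ (fun k hk => pI_mul (pI_int _) (this k hk))]
  refine sum_congr rfl fun k hk => ?_
  rw [iot_mul (pI_int _) (this k hk), iot_int]

lemma tE_w1 {r n : ℕ} (hpn : p = 2*n+1) (hp : 2 < p) :
    ∑ k ∈ range (n+1), (3*(k:ZMod (p^r))+1) * iot p r (tE n k) = p := by
  have h := wsum_iot (p := p) (r := r) (n := n) (tE n) (tE_pI hpn hp) (fun k => 3*(k:ℤ)+1)
  push_cast at h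
  rw [← h, E_b n (by omega), pcast hpn]
  have := iot_nat (p := p) (r := r) (2*n+1)
  push_cast at this
  exact this

lemma tE_w0 {r n : ℕ} (hpn : p = 2*n+1) (hp : 2 < p) :
    ∑ k ∈ range (n+1), iot p r (tE n k) = iot p r ((2*(n:ℚ)+1)*∏ i ∈ range n,(3*(i:ℚ)+2)/(3*i+4)) := by
  have h := wsum_iot (p := p) (r := r) (n := n) (tE n) (tE_pI hpn hp) (fun k => 1)
  simp only [Int.cast_one, one_mul] at h
  rw [← h, E_a n (by omega)]

lemma tE_w2 {r n : ℕ} (hpn : p = 2*n+1) (hp : 2 < p) :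
    ∑ k ∈ range (n+1), ((3*(k:ZMod (p^r))+1)*(3*(k:ZMod (p^r))+2)) * iot p r (tE n k) =
     iot p r (2*(2*(n:ℚ)+1)*∏ i ∈ range n,(3*(i:ℚ)+4)/(3*i+2)) := by
  have h := wsum_iot (p := p) (r := r) (n := n) (tE n) (tE_pI hpn hp) (fun k => (3*(k:ℤ)+1)*(3*k+2))
  push_cast at h
  rw [← h, E_c n (by omega)]

/-- p = 2 mod 3 -/
lemma sums2 {n : ℕ} (hpn : p = 2*n+1) (hp : 2 < p) :
    iot p 2 (SS p 0) = iot p 2 ((2*(n:ℚ)+1)*∏ i ∈ range n,(3*(i:ℚ)+2)/(3*i+4)) ∧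
    3*iot p 2 (SS p 1) + iot p 2 (SS p 0) = p ∧
    9*iot p 2 (SS p 2) + 9*iot p 2 (SS p 1) + 2*iot p 2 (SS p 0) =
      iot p 2 (2*(2*(n:ℚ)+1)*∏ i ∈ range n,(3*(i:ℚ)+4)/(3*i+2)) := by
  have hS : ∀ j, iot p 2 (SS p j) = ∑ k ∈ range (n+1), (k : ZMod (p^2))^j * iot p 2 (tE n k) := by
    intro j
    rw [SS_iot (by norm_num) hpn hp]
    refine sum_congr rfl fun k hk => ?_
    rw [termwise2 hpn hp k (by simp only [mem_range] at hk; omega)]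
  refine ⟨?_, ?_, ?_⟩
  · rw [hS, ← tE_w0 hpn hp]; simp
  · rw [hS, hS, ← tE_w1 hpn hp, mul_sum, ← sum_add_distrib]
    refine sum_congr rfl fun k hk => ?_
    ring
  · rw [hS, hS, hS, ← tE_w2 hpn hp, mul_sum, mul_sum, mul_sum, ← sum_add_distrib, ← sum_add_distrib]
    refine sum_congr rfl fun k hk => ?_
    ring

lemma Fs_iot {r n : ℕ} (x : ℚ) (ht : ∀ k ≤ n, pI p (tF n x k)) (j : ℕ) :
    pI p (Fs j n x) ∧ iot p r (Fs j n x) = ∑ k ∈ range (n+1), (k:ZMod (p^r))^j * iot p r (tF n x k) := by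
  have h := wsum_iot (p := p) (r := r) (n := n) (tF n x) ht (fun k => (k:ℤ)^j)
  push_cast at h
  refine ⟨?_, h⟩
  exact pI_sum _ _ (fun k hk => pI_mul (pI_pow (pI_nat _) _) (ht k (by simp only [mem_range] at hk; omega)))

lemma Fs_w {r m : ℕ} (x : ℚ) (hx : okx x) (ht : ∀ k ≤ 3*m, pI p (tF (3*m) x k)) :
    ∑ k ∈ range (3*m+1), (k:ZMod (p^r)) * iot p r (tF (3*m) x k) = 2*m*iot p r (Fs 0 (3*m) x) ∧
    ∑ k ∈ range (3*m+1), (k:ZMod (p^r))^2 * iot p r (tF (3*m) x k) = 4*m^2*iot p r (Fs 0 (3*m) x) := by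
  have h1 : Fs 1 (3*m) x = 2*m*Fs 0 (3*m) x := by
    have := Fs_all m x hx; tauto
  have h2 : Fs 2 (3*m) x = 4*m^2*Fs 0 (3*m) x := by
    have := Fs_all m x hx; tauto
  have q0 := (Fs_iot (p := p) (r := r) x ht 0).1
  have q1 := (Fs_iot (p := p) (r := r) x ht 1).2
  have q2 := (Fs_iot (p := p) (r := r) x ht 2).2
  constructor
  · simp only [pow_one] at q1
    rw [← q1, h1, iot_mul (by have := pI_nat (p := p) (2*m); exact_mod_cast this) q0]
    have := iot_nat (p := p) (r := r) (2*m)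
    push_cast at this
    rw [this]
  · rw [← q2, h2, iot_mul (by have := pI_nat (p := p) (4*m^2); exact_mod_cast this) q0]
    have := iot_nat (p := p) (r := r) (4*m^2)
    push_cast at this
    rw [this]

/-- p = 1 mod 3 -/
lemma sums1 {m : ℕ} (hpn : p = 2*(3*m)+1) (hp : 2 < p) :
    iot p 3 (SS p 0) = iot p 3 ((2*((3*m:ℕ):ℚ)+1)*∏ i ∈ range (3*m),(3*(i:ℚ)+2)/(3*i+4))
       - 4*(iot p 3 (Fs 0 (3*m) (1/2)) - iot p 3 (Fs 0 (3*m) (1/4-((3*m:ℕ):ℚ)/2))) ∧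
    (∃ t, iot p 3 (Fs 0 (3*m) (1/2)) - iot p 3 (Fs 0 (3*m) (1/4-((3*m:ℕ):ℚ)/2)) = (p:ZMod (p^3))^2*t) ∧
    (∃ t, iot p 3 (Fs 0 (3*m) (1/4-((3*m:ℕ):ℚ)/2)) = iot p 3 (SS p 0) + (p:ZMod (p^3)) * t) ∧
    3*iot p 3 (SS p 1) + iot p 3 (SS p 0) = p ∧
    9*iot p 3 (SS p 2) + 9*iot p 3 (SS p 1) + 2*iot p 3 (SS p 0) =
      iot p 3 (2*(2*((3*m:ℕ):ℚ)+1)*∏ i ∈ range (3*m),(3*(i:ℚ)+4)/(3*i+2)) := by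
  have T := termwise3 hpn hp
  choose! T1 T2 T3 using T
  choose! d hd using T2
  choose! w hw using T3
  set X : ℚ := (1/4-((3*m:ℕ):ℚ)/2) with hX
  have okX : okx X := Or.inr ⟨-(3*m), by rw [hX]; push_cast; ring⟩
  have okh : okx (1/2) := Or.inl rfl
  have pG := tG_pI hpn hp
  have pM := tM_pI hpn hp
  rw [← hX] at pM
  have hS : ∀ j, iot p 3 (SS p j) = ∑ k ∈ range (3*m+1), (k : ZMod (p^3))^j * iot p 3 (tE (3*m) k)
      - 4*(∑ k ∈ range (3*m+1), (k : ZMod (p^3))^j * iot p 3 (tF (3*m) (1/2) k)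
       - ∑ k ∈ range (3*m+1), (k : ZMod (p^3))^j * iot p 3 (tF (3*m) X k)) := by
    intro j
    rw [SS_iot (by norm_num) hpn hp, ← sum_sub_distrib, mul_sum, ← sum_sub_distrib]
    refine sum_congr rfl fun k hk => ?_
    rw [T1 k (by simp only [mem_range] at hk; omega)]
    ring
  have g0 := (Fs_iot (p := p) (r := 3) (1/2) pG 0).2
  have m0 := (Fs_iot (p := p) (r := 3) X pM 0).2
  obtain ⟨g1, g2⟩ := Fs_w (p := p) (r := 3) (1/2) okh pG
  obtain ⟨m1, m2⟩ := Fs_w (p := p) (r := 3) X okX pM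
  have hD : ∃ t, iot p 3 (Fs 0 (3*m) (1/2)) - iot p 3 (Fs 0 (3*m) X) = (p:ZMod (p^3))^2*t := by
    refine ⟨∑ k ∈ range (3*m+1), d k, ?_⟩
    rw [g0, m0, ← sum_sub_distrib, mul_sum]
    refine sum_congr rfl fun k hk => ?_
    rw [← hd k (by simp only [mem_range] at hk; omega)]
    ring
  have z1 : 3*iot p 3 (SS p 1) + iot p 3 (SS p 0) = p - 4*((6*m+1)*(iot p 3 (Fs 0 (3*m) (1/2)) - iot p 3 (Fs 0 (3*m) X))) := by
    have a1 := hS 1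
    have a0 := hS 0
    rw [← g0, ← m0] at a0
    simp only [pow_one] at a1
    rw [g1, m1] at a1
    have b := tE_w1 (r := 3) hpn hp
    have : ∑ k ∈ range (3*m+1), (3*(k:ZMod (p^3))+1) * iot p 3 (tE (3*m) k) =
      3 * ∑ k ∈ range (3*m+1), (k:ZMod (p^3)) * iot p 3 (tE (3*m) k) + ∑ k ∈ range (3*m+1), (k:ZMod (p^3))^0 * iot p 3 (tE (3*m) k) := by
      rw [mul_sum, ← sum_add_distrib]
      refine sum_congr rfl fun k hk => ?_
      ring
    rw [this] at b
    linear_combination 3*a1+a0+b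
  have z2 : 9*iot p 3 (SS p 2) + 9*iot p 3 (SS p 1) + 2*iot p 3 (SS p 0) =
      iot p 3 (2*(2*((3*m:ℕ):ℚ)+1)*∏ i ∈ range (3*m),(3*(i:ℚ)+4)/(3*i+2))
       - 4*((6*m+1)*(6*m+2)*(iot p 3 (Fs 0 (3*m) (1/2)) - iot p 3 (Fs 0 (3*m) X))) := by
    have a2 := hS 2
    have a1 := hS 1
    have a0 := hS 0
    rw [← g0, ← m0] at a0
    simp only [pow_one] at a1
    rw [g1, m1] at a1
    rw [g2, m2] at a2
    have b := tE_w2 (r := 3) hpn hp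
    have : ∑ k ∈ range (3*m+1), ((3*(k:ZMod (p^3))+1)*(3*(k:ZMod (p^3))+2)) * iot p 3 (tE (3*m) k) =
      9 * ∑ k ∈ range (3*m+1), (k:ZMod (p^3))^2 * iot p 3 (tE (3*m) k) + 9 * ∑ k ∈ range (3*m+1), (k:ZMod (p^3)) * iot p 3 (tE (3*m) k) + 2 * ∑ k ∈ range (3*m+1), (k:ZMod (p^3))^0 * iot p 3 (tE (3*m) k) := by
      rw [mul_sum, mul_sum, mul_sum, ← sum_add_distrib, ← sum_add_distrib]
      refine sum_congr rfl fun k hk => ?_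
      ring
    rw [this] at b
    linear_combination 9*a2+9*a1+2*a0+b
  have hpm : (6*(m:ZMod (p^3))+1) = p := by
    rw [pcast hpn]; push_cast; ring
  have hp3 : (p:ZMod (p^3))^3 = 0 := p_pow_zero
  refine ⟨?_, hD, ?_, ?_, ?_⟩
  · rw [hS, ← tE_w0 hpn hp, ← g0, ← m0]; simp
  · refine ⟨∑ k ∈ range (3*m+1), w k, ?_⟩
    rw [m0, SS_iot (by norm_num) hpn hp, mul_sum, ← sum_add_distrib]
    refine sum_congr rfl fun k hk => ?_
    rw [hw k (by simp only [mem_range] at hk; omega)]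
    ring
  · obtain ⟨t, ht⟩ := hD
    rw [z1, ht, hpm]
    linear_combination -4*t*hp3
  · obtain ⟨t, ht⟩ := hD
    rw [z2, ht, hpm]
    linear_combination -4*(6*m+2)*t*hp3
end sums


section prods
open Finset

def FF {R : Type*} [CommRing R] (r : ℕ) (x : R) : R := ∏ j ∈ range r, ((j:R)+1+x)

variable {R : Type*} [CommRing R]

lemma FF_zero (x : R) : FF 0 x = 1 := by simp [FF]
lemma FF_succ (r : ℕ) (x : R) : FF (r+1) x = FF r x * ((r:R)+1+x) := by
  simp [FF, prod_range_succ]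

lemma FF_add (a b : ℕ) (x : R) : FF (a+b) x = FF a x * FF b (x+a) := by
  simp only [FF, prod_range_add]
  congr 1
  refine prod_congr rfl fun j _ => ?_
  push_cast; ring

lemma FF_fact (r : ℕ) : FF r (0:R) = (r.factorial : R) := by
  induction r with
  | zero => simp [FF_zero]
  | succ r ih => rw [FF_succ, ih, Nat.factorial_succ]; push_cast; ring

lemma FF_refl (r : ℕ) (x : R) : FF r x = (-1)^r * FF r (-((r:R)+1)-x) := by
  simp only [FF]
  rw [← prod_range_reflect, ← card_range r, ← prod_const, card_range, ← prod_mul_distrib]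
  refine prod_congr rfl fun j hj => ?_
  simp only [mem_range] at hj
  have : ((r-1-j:ℕ):R) = r - 1 - j := by
    rw [Nat.sub_sub, Nat.cast_sub (by omega)]; push_cast; ring
  rw [this]; ring

lemma FF_split (a b : ℕ) (x : R) : FF (a+b) x = FF a x * ((-1)^b * FF b (-((a:R)+b+1)-x)) := by
  rw [FF_add, FF_refl b]
  congr 3; ring

lemma FF_shift (r : ℕ) (x : R) : FF r (x-1) * (r+x) = FF r x * x := by
  induction r with
  | zero => simp [FF_zero]
  | succ r ih =>
    rw [FF_succ, FF_succ]; push_cast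
    linear_combination (r+1+x)*ih

noncomputable def HH (R : Type*) [CommRing R] (r : ℕ) : R := ∑ j ∈ range r, Ring.inverse ((j:R)+1)
noncomputable def QQ (R : Type*) [CommRing R] (r : ℕ) : R := ∑ j ∈ range r, (Ring.inverse ((j:R)+1))^2

lemma FF_exp (r : ℕ) (hu : ∀ j < r, IsUnit ((j:R)+1)) : ∃ B : R, 2*B = (HH R r)^2 - QQ R r ∧
    ∀ τ c : R, τ^3=0 → FF r (c*τ) = (r.factorial:R)*(1 + c*τ*HH R r + (c*τ)^2*B) := by
  induction r with
  | zero => exact ⟨0, by simp [HH, QQ], fun τ c _ => by simp [FF_zero, HH]⟩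
  | succ r ih =>
    obtain ⟨B, hB, h⟩ := ih (fun j hj => hu j (by omega))
    set v := Ring.inverse ((r:R)+1) with hv
    have hv1 : ((r:R)+1)*v = 1 := Ring.mul_inverse_cancel _ (hu r (by omega))
    have e1 : HH R (r+1) = HH R r + v := by simp [HH, sum_range_succ, hv]
    have e2 : QQ R (r+1) = QQ R r + v^2 := by simp [QQ, sum_range_succ, hv]
    refine ⟨B + v*HH R r, by rw [e1, e2]; linear_combination hB, fun τ c hτ => ?_⟩
    rw [FF_succ, h τ c hτ, e1, Nat.factorial_succ]
    push_cast
    linear_combination (r.factorial:R)*(c^3*B*hτ -(c*τ+(c*τ)^2*HH R r)*hv1)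

lemma fact_unit (r : ℕ) (hu : ∀ j < r, IsUnit ((j:R)+1)) : IsUnit (r.factorial : R) := by
  induction r with
  | zero => simp
  | succ r ih =>
    rw [Nat.factorial_succ]; push_cast
    exact (hu r (by omega)).mul (ih (fun j hj => hu j (by omega)))

lemma FF_dup0 (n : ℕ) (y h : R) (hh : 2*h=1) : FF (2*n) (2*y) = 2^(2*n)*FF n y*FF n (y-h) := by
  induction n with
  | zero => simp [FF_zero]
  | succ n ih =>
    rw [show 2*(n+1) = 2*n+1+1 by ring, FF_succ, FF_succ, ih, FF_succ, FF_succ]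
    push_cast
    have : (2*(n:R)+1+2*y) = 2*((n:R)+1+(y-h)) := by linear_combination hh
    rw [this]; ring

lemma FF_dup1 (n : ℕ) (y h : R) (hh : 2*h=1) : FF (2*n+1) (2*y) = 2^(2*n+1)*FF n y*FF (n+1) (y-h) := by
  rw [FF_succ, FF_dup0 n y h hh, FF_succ]
  push_cast
  have : (2*(n:R)+1+2*y) = 2*((n:R)+1+(y-h)) := by linear_combination hh
  rw [this]; ring

lemma FF_trip1 (n : ℕ) (t : R) (ht : 3*t=1) : FF (3*n+1) (0:R) = 3^(3*n+1)*FF n 0*FF n (-t) * FF (n+1) (-2*t) := by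
  induction n with
  | zero => simp [FF_zero, FF_succ]; linear_combination 2*ht
  | succ n ih =>
    rw [show 3*(n+1)+1 = 3*n+1+1+1+1 by ring, FF_succ, FF_succ, FF_succ, ih, FF_succ n (0:R), FF_succ n (-t), FF_succ (n+1) (-2*t)]
    push_cast
    have e1 : (3*(n:R)+1+1+0) = 3*((n:R)+1+-t) := by linear_combination ht
    have e2 : (3*(n:R)+3+1+0) = 3*((n:R)+1+1+-2*t) := by linear_combination 2*ht
    rw [e1, e2]; ring

end prods

section prodsP
open Finset
variable {p : ℕ} [Fact p.Prime]

lemma sumZ (g : ZMod p → ZMod p) : ∑ x : ZMod p, g x = ∑ k ∈ range p, g (k : ZMod p) := by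
  symm
  refine Finset.sum_nbij' (fun k => (k : ZMod p)) (fun x => x.val) ?_ ?_ ?_ ?_ ?_
  · intros; simp
  · intro x _; simpa using ZMod.val_lt x
  · intro k hk; simp only [mem_range] at hk; exact ZMod.val_cast_of_lt hk
  · intro x _; simp
  · intros; rfl

lemma sum_inv_pow (i : ℕ) (h0 : 0 < i) (hi : i < p - 1) :
    ∑ j ∈ range (p-1), (((j:ZMod p)+1)⁻¹)^i = 0 := by
  have hp : p.Prime := Fact.out
  have h1 : ∑ x : ZMod p, (x⁻¹)^i = 0 := by
    rw [← FiniteField.sum_pow_lt_card_sub_one (ZMod p) i (by rw [ZMod.card]; exact hi)]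
    exact Fintype.sum_bijective (fun x => x⁻¹) inv_involutive.bijective _ _ (fun x => rfl)
  rw [sumZ, show range p = range (p-1+1) by congr 1; have := hp.pos; omega, sum_range_succ'] at h1
  simpa [h0.ne'] using h1

variable {r : ℕ}

lemma u_small (k : ℕ) (hk : k < p-1) : IsUnit ((k:ZMod (p^r))+1) := by
  have := nat_unit' (p := p) (r := r) (k := k+1) (by omega) (by omega)
  exact_mod_cast this

lemma ker_cast (hr : r ≠ 0) (x : ZMod (p^r)) (h : ZMod.castHom (dvd_pow_self p hr) (ZMod p) x = 0) :
    ∃ y, x = p * y := by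
  have hp : p.Prime := Fact.out
  haveI : NeZero (p^r) := ⟨pow_ne_zero _ hp.ne_zero⟩
  have e : x = (x.val : ZMod (p^r)) := by simp
  rw [e, map_natCast, ZMod.natCast_eq_zero_iff] at h
  obtain ⟨c, hc⟩ := h
  exact ⟨c, by rw [e, hc]; push_cast; rfl⟩

lemma cast_inv (hr : r ≠ 0) (x : ZMod (p^r)) (hx : IsUnit x) :
    ZMod.castHom (dvd_pow_self p hr) (ZMod p) (Ring.inverse x) = (ZMod.castHom (dvd_pow_self p hr) (ZMod p) x)⁻¹ := by
  apply eq_inv_of_mul_eq_one_left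
  rw [← map_mul, Ring.inverse_mul_cancel _ hx, map_one]

/-- F_{p-1}(c p) = (p-1)! mod p^3 -/
lemma FF_top (hr : r ≠ 0) (hr3 : r ≤ 3) (hp3 : 3 < p) (c : ZMod (p^r)) :
    FF (p-1) (c * (p:ZMod (p^r))) = ((p-1).factorial : ZMod (p^r)) := by
  have hp : p.Prime := Fact.out
  obtain ⟨B, hB, hF⟩ := FF_exp (R := ZMod (p^r)) (p-1) (u_small)
  have hπ : (p:ZMod (p^r))^3 = 0 := by rw [← Nat.add_sub_cancel' hr3, pow_add, p_pow_zero, zero_mul]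
  have hA0 : ZMod.castHom (dvd_pow_self p hr) (ZMod p) (HH (ZMod (p^r)) (p-1)) = 0 := by
    rw [HH, map_sum, ← sum_inv_pow (p := p) 1 (by norm_num) (by omega)]
    refine sum_congr rfl fun j hj => ?_
    rw [cast_inv hr _ (u_small j (by simpa using hj)), map_add, map_natCast, map_one] <;> try simp
  have hQ0 : ZMod.castHom (dvd_pow_self p hr) (ZMod p) (QQ (ZMod (p^r)) (p-1)) = 0 := by
    have : 2 < p - 1 ∨ p = 3 := by
      rcases hp.eq_two_or_odd with h | h <;> omega
    rw [QQ, map_sum, ← sum_inv_pow (p := p) 2 (by norm_num) (by omega)]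
    refine sum_congr rfl fun j hj => ?_
    rw [map_pow, cast_inv hr _ (u_small j (by simpa using hj)), map_add, map_natCast, map_one] <;> try simp
  obtain ⟨y, hy⟩ := ker_cast hr (2*B) (by rw [hB, map_sub, map_pow, hA0, hQ0]; simp)
  have hB2 : (p:ZMod (p^r))^2*B = 0 := by
    have h2 := (two_unit (p := p) (r := r) (by omega))
    have : 2*((p:ZMod (p^r))^2*B) = 2*0 := by linear_combination (p:ZMod (p^r))^2*hy + y*hπ
    exact h2.mul_left_cancel this
  have hf := fact_unit (R := ZMod (p^r)) (p-1) u_small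
  have h0 := FF_refl (p-1) ((-1)*(p:ZMod (p^r)))
  have e0 : (-(((p-1:ℕ):ZMod (p^r))+1)-(-1)*(p:ZMod (p^r))) = 0 := by
    rw [Nat.cast_sub hp.one_lt.le]; push_cast; ring
  rw [e0, FF_fact, hF _ _ hπ, Even.neg_one_pow (by
    rcases hp.eq_two_or_odd with h | h
    · omega
    · exact (Nat.even_iff.2 (by omega)))] at h0
  have hA : (p:ZMod (p^r)) * HH (ZMod (p^r)) (p-1) = 0 := by
    apply hf.mul_left_cancel
    linear_combination -h0 + ((p-1).factorial : ZMod (p^r))*hB2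
  rw [hF _ _ hπ]
  linear_combination ((p-1).factorial : ZMod (p^r))*(c*hA + c^2*hB2)

lemma FF_iot (k : ℕ) {x : ℚ} (hx : pI p x) : pI p (FF k x) ∧ iot p r (FF k x) = FF k (iot p r x) := by
  have : ∀ j : ℕ, pI p ((j:ℚ)+1+x) := fun j => pI_add (by have := pI_nat (p := p) (j+1); exact_mod_cast this) hx
  refine ⟨pI_prod _ _ (fun j _ => this j), ?_⟩
  unfold FF
  rw [iot_prod _ _ (fun j _ => this j)]
  refine prod_congr rfl fun j _ => ?_
  rw [iot_add (by have := pI_nat (p := p) (j+1); exact_mod_cast this) hx]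
  have := iot_nat (p := p) (r := r) (j+1)
  push_cast at this
  rw [this]

end prodsP


section case2
open Finset
variable {p : ℕ} [Fact p.Prime]

lemma FF_ratio (n : ℕ) : ∏ i ∈ range n, (3*(i:ℚ)+4)/(3*i+2) = FF n (1/3:ℚ) / FF n (-(1/3):ℚ) := by
  unfold FF
  rw [← prod_div_distrib]
  refine prod_congr rfl fun i _ => ?_
  have e1 : (3*(i:ℚ)+4) = 3*((i:ℚ)+1+1/3) := by ring
  have e2 : (3*(i:ℚ)+2) = 3*((i:ℚ)+1+-(1/3)) := by ring
  rw [e1, e2, mul_div_mul_left _ _ (by norm_num)]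

lemma FF_ratio' (n : ℕ) : ∏ i ∈ range n, (3*(i:ℚ)+2)/(3*i+4) = FF n (-(1/3):ℚ) / FF n (1/3:ℚ) := by
  unfold FF
  rw [← prod_div_distrib]
  refine prod_congr rfl fun i _ => ?_
  have e1 : (3*(i:ℚ)+4) = 3*((i:ℚ)+1+1/3) := by ring
  have e2 : (3*(i:ℚ)+2) = 3*((i:ℚ)+1+-(1/3)) := by ring
  rw [e1, e2, mul_div_mul_left _ _ (by norm_num)]

lemma FF_pos1 (n : ℕ) : FF n (1/3:ℚ) ≠ 0 := by
  refine prod_ne_zero_iff.2 fun i _ => ?_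
  positivity
lemma FF_pos2 (n : ℕ) : FF n (-(1/3):ℚ) ≠ 0 := by
  refine prod_ne_zero_iff.2 fun i _ => ?_
  have : (0:ℚ) ≤ i := by positivity
  linarith

lemma E_prod (n : ℕ) (q : ℚ) : (q*∏ i ∈ range n, (3*(i:ℚ)+2)/(3*i+4)) * (2*q*∏ i ∈ range n, (3*(i:ℚ)+4)/(3*i+2)) = 2*q^2 := by
  rw [FF_ratio, FF_ratio']
  have := FF_pos1 n
  have := FF_pos2 n
  field_simp

lemma EC2 (m : ℕ) (q : ℚ) (hq : q = 6*m+5) :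
    (2*q*∏ i ∈ range (3*m+2), (3*(i:ℚ)+4)/(3*i+2)) * ((FF (2*m+2) (-(q/3)))^2*FF m (q/3)) =
      -2*FF (5*m+4) (-(q/3)) := by
  rw [FF_ratio]
  have h1 := FF_add (2*m+2) (3*m+2) (-(q/3))
  have h2 := FF_add (2*m+2) m (-(1/3):ℚ)
  have h3 := FF_refl (2*m+2) (-(1/3):ℚ)
  have h4 := FF_shift (2*m+2) (-(q/3))
  rw [show 2*m+2+(3*m+2) = 5*m+4 by ring, show -(q/3)+((2*m+2:ℕ):ℚ) = 1/3 by rw [hq]; push_cast; ring] at h1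
  rw [show 2*m+2+m = 3*m+2 by ring, show -(1/3:ℚ)+((2*m+2:ℕ):ℚ) = q/3 by rw [hq]; push_cast; ring] at h2
  rw [Even.neg_one_pow ⟨m+1, by ring⟩, one_mul, show (-(((2*m+2:ℕ):ℚ)+1)-(-(1/3))) = -(q/3)-1 by rw [hq]; push_cast; ring] at h3
  rw [← h3, show (((2*m+2:ℕ):ℚ)+(-(q/3))) = 1/3 by rw [hq]; push_cast; ring] at h4
  have hne := FF_pos2 (3*m+2)
  rw [h1, ← mul_div_assoc, div_mul_eq_mul_div, div_eq_iff hne, h2]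
  linear_combination 6*(FF (2*m+2) (-(q/3)) * FF (3*m+2) (1/3)*FF m (q/3))*h4

lemma Un_FF (k : ℕ) (hk : k < p) {c : ℚ} (hc : pI p c) : Un p (FF k (c*p)) := by
  refine Un_prod _ _ fun j hj => ?_
  simp only [mem_range] at hj
  refine Un_add_p ?_ hc
  have := Un_small (p := p) (k := j+1) (by omega) (by omega)
  exact_mod_cast this

lemma Un_three (hp : 3 < p) : Un p (3:ℚ) := by
  have := Un_small (p := p) (k := 3) (by norm_num) hp
  exact_mod_cast this

lemma pI_third (hp : 3 < p) : pI p (1/3:ℚ) := by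
  have := pI_div (pI_nat (p := p) 1) (Un_three hp)
  exact_mod_cast this

lemma Un_EC2 {m : ℕ} (hpm : p = 6*m+5) :
    Un p (2*(p:ℚ)*∏ i ∈ range (3*m+2), (3*(i:ℚ)+4)/(3*i+2)) := by
  have h := EC2 m (p:ℚ) (by rw [hpm]; push_cast; ring)
  have u3 : pI p (1/3:ℚ) := pI_third (by omega)
  have e1 : -((p:ℚ)/3) = (-(1/3))*p := by ring
  have e2 : ((p:ℚ)/3) = (1/3)*p := by ring
  rw [e1, e2] at h
  have w1 := Un_FF (p := p) (2*m+2) (by omega) (pI_neg u3)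
  have w2 := Un_FF (p := p) m (by omega) u3
  have w3 := Un_FF (p := p) (5*m+4) (by omega) (pI_neg u3)
  have w := Un_mul (Un_pow w1 2) w2
  rw [← eq_div_iff (Un_ne w)] at h
  rw [h]
  exact Un_div (Un_mul (Un_neg (Un_two (by omega))) w3) w

lemma iot_third {r : ℕ} (hp : 3 < p) (t : ZMod (p^r)) (ht : 3*t=1) : iot p r ((p:ℚ)/3) = t*p := by
  have h := iot_div (r := r) (pI_nat (p := p) p) (Un_three hp)
  have h3 := iot_nat (p := p) (r := r) 3
  push_cast at h3
  rw [h3, iot_nat] at h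
  linear_combination t*h - iot p r ((p:ℚ)/3)*ht

section ring
/-- the ring computation for p = 2 mod 3 -/
lemma W2 {m n : ℕ} (hpn : p = 2*n+1) (hp3 : 3 < p) (h : ZMod (p^2)) (hh : 2*h=1) :
    ((p-1).factorial : ZMod (p^2)) = (-1)^n*(n.factorial:ZMod (p^2))^2*(1-(p:ZMod (p^2))*HH (ZMod (p^2)) n) ∧
    (2:ZMod (p^2))^(p-1) = 1 - h*(p:ZMod (p^2))*HH (ZMod (p^2)) n := by
  set π : ZMod (p^2) := (p:ZMod (p^2)) with hπd
  have hπ2 : π^2 = 0 := p_pow_zero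
  have hπ : π^3 = 0 := by linear_combination π*hπ2
  have hpc : π = 2*(n:ZMod (p^2))+1 := pcast hpn
  have hu : ∀ j < n, IsUnit ((j:ZMod (p^2))+1) := fun j hj => u_small j (by omega)
  obtain ⟨B, -, hF⟩ := FF_exp (R := ZMod (p^2)) n hu
  have hN := fact_unit n hu
  have h1 := FF_split n n (0:ZMod (p^2))
  rw [FF_fact, FF_fact, show -((n:ZMod (p^2))+n+1)-0 = (-1)*π by rw [hpc]; ring, hF _ _ hπ, show n+n = p-1 by omega] at h1
  have h1' : ((p-1).factorial : ZMod (p^2)) = (-1)^n*(n.factorial:ZMod (p^2))^2*(1-π*HH (ZMod (p^2)) n) := by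
    rw [h1]; linear_combination ((n.factorial:ZMod (p^2))*(-1)^n*n.factorial*B)*hπ2
  refine ⟨h1', ?_⟩
  have h2 := FF_dup0 n (0:ZMod (p^2)) h hh
  rw [FF_refl n (0-h), mul_zero, FF_fact, FF_fact, show -((n:ZMod (p^2))+1)-(0-h) = (-h)*π by rw [hpc]; linear_combination hh*(1+n), hF _ _ hπ, show 2*n = p-1 by omega, h1'] at h2
  have s1 : ((-1:ZMod (p^2))^n)*((-1)^n) = 1 := by
    rw [← mul_pow]; simp
  have h3 : (2:ZMod (p^2))^(p-1)*(1-h*π*HH (ZMod (p^2)) n) = 1 - π*HH (ZMod (p^2)) n := by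
    apply (hN.pow 2).mul_left_cancel
    linear_combination (-1)^n * (-h2) + ((n.factorial:ZMod (p^2))^2*(1-π*HH (ZMod (p^2)) n) - 2^(p-1)*(n.factorial:ZMod (p^2))^2*(1-h*π*HH (ZMod (p^2)) n+h^2*π^2*B))*s1 - 2^(p-1)*(n.factorial:ZMod (p^2))^2*h^2*B*hπ2
  linear_combination (1+h*π*HH (ZMod (p^2)) n)*h3 + (2^(p-1)*h^2*(HH (ZMod (p^2)) n)^2 - h*(HH (ZMod (p^2)) n)^2)*hπ2 + (π*HH (ZMod (p^2)) n)*hh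

lemma W3 {m : ℕ} (hpm : p = 6*m+5) (t : ZMod (p^2)) (ht : 3*t=1) :
    (3:ZMod (p^2))^(p-1) = 1 - 2*t*(p:ZMod (p^2))*HH (ZMod (p^2)) (2*m+1) := by
  set π : ZMod (p^2) := (p:ZMod (p^2)) with hπd
  have hπ2 : π^2 = 0 := p_pow_zero
  have hπ : π^3 = 0 := by linear_combination π*hπ2
  have hpc : π = 6*(m:ZMod (p^2))+5 := by
    have := pcast (p := p) (r := 2) (n := 3*m+2) (by omega)
    rw [hπd, this]; push_cast; ring
  have hu : ∀ j < 2*m+1, IsUnit ((j:ZMod (p^2))+1) := fun j hj => u_small j (by omega)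
  have hup : ∀ j < p-1, IsUnit ((j:ZMod (p^2))+1) := fun j hj => u_small j (by omega)
  obtain ⟨B, -, hF⟩ := FF_exp (R := ZMod (p^2)) (2*m+1) hu
  have hf := fact_unit (2*m+1) hu
  have hP := fact_unit (p-1) hup
  have h1 := FF_trip1 (2*m+1) t ht
  rw [FF_refl (2*m+1) (-t), FF_refl (2*m+1+1), FF_fact, FF_fact] at h1
  have e1 : -(((2*m+1:ℕ):ZMod (p^2))+1)-(-t) = (-t)*π := by
    rw [hpc]; push_cast; linear_combination (2*m+2)*ht
  have e2 : -(((2*m+1+1:ℕ):ZMod (p^2))+1)-(-2*t) = (-2*t)*π + ((2*m+1:ℕ):ZMod (p^2)) := by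
    rw [hpc]; push_cast; linear_combination (4*m+4)*ht
  rw [e1, e2, show 3*(2*m+1)+1 = p-1 by omega] at h1
  have h2 := FF_add (2*m+1) (2*m+1+1) ((-2*t)*π)
  have h3 := FF_split (2*m+1+(2*m+1+1)) (2*m+1) ((-2*t)*π)
  rw [show 2*m+1+(2*m+1+1)+(2*m+1) = p-1 by omega, FF_top (by norm_num) (by norm_num) (by omega)] at h3
  have e3 : -((((2*m+1+(2*m+1+1):ℕ)):ZMod (p^2))+((2*m+1:ℕ):ZMod (p^2))+1)-(-2*t)*π = (-t)*π := by
    rw [hpc]; push_cast; linear_combination (6*m+5)*ht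
  rw [e3] at h3
  have s1 : (-1:ZMod (p^2))^(2*m+1) = -1 := Odd.neg_one_pow ⟨m, rfl⟩
  have s2 : (-1:ZMod (p^2))^(2*m+1+1) = 1 := Even.neg_one_pow ⟨m+1, by ring⟩
  rw [s1] at h1 h3
  rw [s2] at h1
  have h4 : FF (2*m+1) ((-2*t)*π) = 3^(p-1)*((2*m+1).factorial:ZMod (p^2)) := by
    apply hP.mul_left_cancel
    generalize FF (2*m+1) ((-2*t)*π) = X at *
    generalize FF (2*m+1) ((-t)*π) = Y at *
    generalize FF (2*m+1+1) ((-2*t)*π + ((2*m+1:ℕ):ZMod (p^2))) = Z at *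
    rw [h2] at h3
    linear_combination X*h1 - 3^(p-1)*((2*m+1).factorial:ZMod (p^2))*h3
  rw [hF _ _ hπ] at h4
  apply hf.mul_left_cancel
  linear_combination -h4 + ((2*m+1).factorial:ZMod (p^2))*4*t^2*B*hπ2

lemma WL {m : ℕ} (hpm : p = 6*m+5) :
    (p:ZMod (p^2))*(HH (ZMod (p^2)) (2*m+1) + HH (ZMod (p^2)) (3*m+2) - HH (ZMod (p^2)) m) = 0 := by
  obtain ⟨h, hh⟩ := (two_unit (p := p) (r := 2) (by omega)).exists_right_inv
  set π : ZMod (p^2) := (p:ZMod (p^2)) with hπd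
  have hπ2 : π^2 = 0 := p_pow_zero
  have hπ : π^3 = 0 := by linear_combination π*hπ2
  have hpc : π = 6*(m:ZMod (p^2))+5 := by
    have := pcast (p := p) (r := 2) (n := 3*m+2) (by omega)
    rw [hπd, this]; push_cast; ring
  have hu : ∀ j < p-1, IsUnit ((j:ZMod (p^2))+1) := fun j hj => u_small j (by omega)
  obtain ⟨B1, -, F1⟩ := FF_exp (R := ZMod (p^2)) (2*m+1) (fun j hj => u_small j (by omega))
  obtain ⟨B2, -, F2⟩ := FF_exp (R := ZMod (p^2)) m (fun j hj => u_small j (by omega))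
  obtain ⟨B3, -, F3⟩ := FF_exp (R := ZMod (p^2)) (3*m+2) (fun j hj => u_small j (by omega))
  have hf := fact_unit (R := ZMod (p^2)) (2*m+1) (fun j hj => u_small j (by omega))
  have G1 : ∀ c, FF (2*m+1) (c*π) = ((2*m+1).factorial:ZMod (p^2))*(1+c*π*HH (ZMod (p^2)) (2*m+1)) := fun c => by
    rw [F1 _ _ hπ]; linear_combination ((2*m+1).factorial:ZMod (p^2))*c^2*B1*hπ2
  have G2 : ∀ c, FF m (c*π) = (m.factorial:ZMod (p^2))*(1+c*π*HH (ZMod (p^2)) m) := fun c => by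
    rw [F2 _ _ hπ]; linear_combination (m.factorial:ZMod (p^2))*c^2*B2*hπ2
  have G3 : ∀ c, FF (3*m+2) (c*π) = ((3*m+2).factorial:ZMod (p^2))*(1+c*π*HH (ZMod (p^2)) (3*m+2)) := fun c => by
    rw [F3 _ _ hπ]; linear_combination ((3*m+2).factorial:ZMod (p^2))*c^2*B3*hπ2
  have key : ∀ c : ZMod (p^2), FF (2*m+1) ((2*c)*π) * FF (2*m+1) ((-h-c)*π) = 2^(2*m+1)*(-1)^(m+1)*FF m (c*π)*FF (3*m+2) ((-h-c)*π) := by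
    intro c
    have h1 := FF_dup1 m (c*π) h hh
    rw [FF_refl (m+1)] at h1
    have e : -(((m+1:ℕ):ZMod (p^2))+1)-(c*π-h) = (-h-c)*π + ((2*m+1:ℕ):ZMod (p^2)) := by
      rw [hpc]; push_cast; linear_combination (3*m+3)*hh
    have h2 := FF_add (2*m+1) (m+1) ((-h-c)*π)
    rw [show 2*m+1+(m+1) = 3*m+2 by ring] at h2
    rw [h2, show 2*c*π = 2*(c*π) by ring, h1, e]; ring
  have k0 := key 0
  have k1 := key 1
  rw [G1, G1, G2, G3] at k0 k1
  have hU : IsUnit (((2*m+1).factorial:ZMod (p^2))^2*(1-h*π*HH (ZMod (p^2)) (2*m+1))) := by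
    refine (hf.pow 2).mul (IsUnit.of_mul_eq_one (1+h*π*HH (ZMod (p^2)) (2*m+1)) ?_)
    linear_combination -h^2*(HH (ZMod (p^2)) (2*m+1))^2*hπ2
  apply hU.mul_left_cancel
  generalize (((2*m+1).factorial:ZMod (p^2))) = f at *
  generalize ((m).factorial:ZMod (p^2)) = k at *
  generalize ((3*m+2).factorial:ZMod (p^2)) = N at *
  generalize HH (ZMod (p^2)) (2*m+1) = a at *
  generalize HH (ZMod (p^2)) (3*m+2) = g at *
  generalize HH (ZMod (p^2)) m = b at *
  generalize (2:ZMod (p^2))^(2*m+1)*(-1)^(m+1) = K at *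
  clear hU F1 F2 F3 G1 G2 G3 key hu hpc hπ
  clear_value π
  linear_combination k1 - (1+π*(b-g))*k0 + (f^2*h*a^2+2*f^2*a^2-h*g^2*K*k*N-g*b*K*k*N)*hπ2
end ring
end case2


section case2fin
open Finset
variable {p : ℕ} [Fact p.Prime]

lemma R3_six (p : ℕ) (m : ℕ) (hpm : p = 6*m+5) : 6 * R3 p = (((6+12*p+8*(2^(p-1)-1)-9*(3^(p-1)-1)) * ((3*m+2).choose m)^2 : ℤ) : ℚ) := by
  unfold R3
  rw [show (p-1)/2 = 3*m+2 by omega, show p/6 = m by omega]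
  push_cast
  ring

lemma R3_pI {m : ℕ} (hpm : p = 6*m+5) : pI p (R3 p) := by
  have h := R3_six p m hpm
  have u6 : Un p (6:ℚ) := by
    have := Un_mul (Un_two (p := p) (by omega)) (Un_three (by omega))
    norm_num at this; exact this
  rw [mul_comm, ← eq_div_iff (Un_ne u6)] at h
  rw [h]
  exact pI_div (pI_int _) u6

lemma iot_lit {r : ℕ} (k : ℕ) [k.AtLeastTwo] {x : ℚ} (hx : pI p x) :
    iot p r ((OfNat.ofNat k : ℚ)*x) = (OfNat.ofNat k : ZMod (p^r)) * iot p r x := by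
  have h : (OfNat.ofNat k : ℚ) = ((OfNat.ofNat k : ℕ) : ℚ) := by simp
  rw [h, iot_mul (pI_nat _) hx, iot_nat]; simp

lemma R3_iot {m : ℕ} (hpm : p = 6*m+5) (t h : ZMod (p^2)) (ht : 3*t=1) (hh : 2*h=1) :
    iot p 2 (R3 p) = (1+2*(p:ZMod (p^2))+4*t*(2^(p-1)-1)-3*h*(3^(p-1)-1))*((3*m+2).choose m : ZMod (p^2))^2 := by
  have e := congrArg (iot p 2) (R3_six p m hpm)
  rw [iot_int, iot_lit 6 (R3_pI hpm)] at e
  push_cast at e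
  generalize iot p 2 (R3 p) = x at *
  generalize ((3*m+2).choose m : ZMod (p^2)) = c at *
  generalize (2:ZMod (p^2))^(p-1) = a at *
  generalize (3:ZMod (p^2))^(p-1) = b at *
  generalize (p:ZMod (p^2)) = π at *
  have : 6*(t*h) = 1 := by linear_combination ht + 3*t*hh
  linear_combination (t*h)*e - (x - c^2*(1+2*π))*this + c^2*(a-1)*4*t*hh - 3*h*c^2*(b-1)*ht

lemma k_id {R : Type*} [CommRing R] (t h a b g π : R) (ht : 3*t=1) (hh : 2*h=1) (hπ2 : π^2=0)
    (wl : π*(a+g-b)=0) : (1+2*π+4*t*((1-h*π*g)-1)-3*h*((1-2*t*π*a)-1))*(1-t*π*(2*a+b)) = (1+π)^2*(1-π*g) := by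
  grind

lemma case2_ec {m : ℕ} (hpm : p = 6*m+5) :
    iot p 2 (2*(p:ℚ)*∏ i ∈ range (3*m+2), (3*(i:ℚ)+4)/(3*i+2)) = -2 * iot p 2 (R3 p) := by
  have hp3 : 3 < p := by omega
  obtain ⟨h, hh⟩ := (two_unit (p := p) (r := 2) (by omega)).exists_right_inv
  obtain ⟨t, ht⟩ : ∃ t : ZMod (p^2), 3*t = 1 := by
    have := nat_unit' (p := p) (r := 2) (k := 3) (by omega) (by omega)
    obtain ⟨t, ht⟩ := this.exists_right_inv
    exact ⟨t, by exact_mod_cast ht⟩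
  have hx := Un_EC2 hpm
  have h0 := EC2 m (p:ℚ) (by rw [hpm]; push_cast; ring)
  rw [R3_iot hpm t h ht hh, W3 hpm t ht, (W2 (n := 3*m+2) (m := 0) (by omega) hp3 h hh).2]
  have w1 := (W2 (p := p) (n := 3*m+2) (m := 0) (by omega) hp3 h hh).1
  have wl := WL hpm
  have h1 := congrArg (iot p 2) h0
  have p3 : pI p ((p:ℚ)/3) := pI_div (pI_nat _) (Un_three hp3)
  have i3 := iot_third (r := 2) hp3 t ht
  have f1 := FF_iot (p := p) (r := 2) (2*m+2) (pI_neg p3)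
  have f2 := FF_iot (p := p) (r := 2) m p3
  have f3 := FF_iot (p := p) (r := 2) (5*m+4) (pI_neg p3)
  rw [iot_neg p3, i3] at f1 f3
  rw [i3] at f2
  rw [iot_mul hx.pI (pI_mul (pI_pow f1.1 2) f2.1), iot_mul (pI_pow f1.1 2) f2.1, iot_pow f1.1, f1.2, f2.2] at h1
  have hneg : iot p 2 (-2*FF (5*m+4) (-((p:ℚ)/3))) = -2*FF (5*m+4) (-(t*(p:ZMod (p^2)))) := by
    rw [← f3.2, neg_mul, iot_neg (pI_mul (Un_two (by omega)).pI f3.1), iot_lit 2 f3.1]; ring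
  rw [hneg] at h1
  generalize iot p 2 (2*(p:ℚ)*∏ i ∈ range (3*m+2), (3*(i:ℚ)+4)/(3*i+2)) = x at *
  set π : ZMod (p^2) := (p:ZMod (p^2)) with hπd
  have hπ2 : π^2 = 0 := p_pow_zero
  have hπ : π^3 = 0 := by linear_combination π*hπ2
  have hpc : π = 6*(m:ZMod (p^2))+5 := by
    have := pcast (p := p) (r := 2) (n := 3*m+2) (by omega)
    rw [hπd, this]; push_cast; ring
  have hs := FF_split (5*m+4) m ((-t)*π)
  rw [show 5*m+4+m = p-1 by omega, FF_top (by norm_num) (by norm_num) hp3,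
    show -(((5*m+4:ℕ):ZMod (p^2))+m+1)-(-t)*π = (-2*t)*π by rw [hpc]; push_cast; linear_combination (6*m+5)*ht, w1] at hs
  rw [show -(t*π) = (-t)*π by ring, FF_succ (2*m+1), show ((2*m+1:ℕ):ZMod (p^2))+1+(-t)*π = t by rw [hpc]; push_cast; linear_combination -(2*m+2)*ht] at h1
  obtain ⟨B1, -, F1⟩ := FF_exp (R := ZMod (p^2)) (2*m+1) (fun j hj => u_small j (by omega))
  obtain ⟨B2, -, F2⟩ := FF_exp (R := ZMod (p^2)) m (fun j hj => u_small j (by omega))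
  have hf := fact_unit (R := ZMod (p^2)) (2*m+1) (fun j hj => u_small j (by omega))
  have hk := fact_unit (R := ZMod (p^2)) (m) (fun j hj => u_small j (by omega))
  have G1 : ∀ c, FF (2*m+1) (c*π) = ((2*m+1).factorial:ZMod (p^2))*(1+c*π*HH _ (2*m+1)) := fun c => by
    rw [F1 _ _ hπ]; linear_combination ((2*m+1).factorial:ZMod (p^2))*c^2*B1*hπ2
  have G2 : ∀ c, FF m (c*π) = (m.factorial:ZMod (p^2))*(1+c*π*HH _ m) := fun c => by
    rw [F2 _ _ hπ]; linear_combination (m.factorial:ZMod (p^2))*c^2*B2*hπ2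
  rw [G1, G2] at h1
  rw [G2] at hs
  have hC : ((3*m+2).choose m : ZMod (p^2))*(m.factorial : ZMod (p^2))*((t*(1+π))*((2*m+1).factorial:ZMod (p^2))) = ((3*m+2).factorial : ZMod (p^2)) := by
    have c1 := Nat.choose_mul_factorial_mul_factorial (n := 3*m+2) (k := m) (by omega)
    rw [show 3*m+2-m = (2*m+1)+1 by omega, Nat.factorial_succ] at c1
    rw [← c1, hpc]; push_cast
    linear_combination ((3*m+2).choose m : ZMod (p^2))*(m.factorial : ZMod (p^2))*((2*m+1).factorial:ZMod (p^2))*(2*m+2)*ht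
  have s1 : ((-1:ZMod (p^2))^m)*((-1)^m) = 1 := by
    rw [← mul_pow]; simp
  rw [show (-1:ZMod (p^2))^(3*m+2) = (-1)^m by
    rw [show 3*m+2 = m + 2*(m+1) by ring, pow_add, pow_mul (-1) 2]; simp] at hs
  have tU : IsUnit t := IsUnit.of_mul_eq_one 3 (by linear_combination ht)
  generalize (((2*m+1).factorial:ZMod (p^2))) = f at *
  generalize ((m).factorial:ZMod (p^2)) = k at *
  generalize ((3*m+2).factorial:ZMod (p^2)) = N at *
  generalize HH (ZMod (p^2)) (2*m+1) = a at *
  generalize HH (ZMod (p^2)) (3*m+2) = g at *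
  generalize HH (ZMod (p^2)) m = b at *
  generalize ((3*m+2).choose m : ZMod (p^2)) = C at *
  generalize FF (5*m+4) ((-t)*π) = Z at *
  generalize (-1:ZMod (p^2))^m = s at *
  have e0 : N^2*(1-π*g) = Z*(k*(1+-2*t*π*b)) := by
    linear_combination s*hs - (N^2*(1-π*g)-Z*(k*(1+-2*t*π*b)))*s1
  have q0 : (1+-t*π*a)^2*(1+t*π*b)*(1+-2*t*π*b) = 1-t*π*(2*a+b) := by
    linear_combination (t^2*a^2-2*t^2*b^2+2*t^2*a*b + π*(-t^3*a^2*b+4*t^3*a*b^2) -2*t^4*π^2*a^2*b^2)*hπ2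
  have e1 : x*t^2*f^2*k^2*(1-t*π*(2*a+b)) = -2*(N^2*(1-π*g)) := by
    rw [e0, ← q0]
    linear_combination (k*(1+-2*t*π*b))*h1
  have q1 := k_id t h a b g π ht hh hπ2 wl
  have hU : IsUnit (t^2*f^2*k^2*(1+π)^2*(1-t*π*(2*a+b))) := by
    refine ((((tU.pow 2).mul (hf.pow 2)).mul (hk.pow 2)).mul (IsUnit.pow 2 ?_)).mul ?_
    · exact IsUnit.of_mul_eq_one (1-π) (by linear_combination -hπ2)
    · exact IsUnit.of_mul_eq_one (1+t*π*(2*a+b)) (by linear_combination -t^2*(2*a+b)^2*hπ2)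
  apply hU.mul_left_cancel
  have e2 : t^2*f^2*k^2*(1+π)^2*(1-t*π*(2*a+b)) * x = (1+π)^2*(-2*(N^2*(1-π*g))) := by rw [← e1]; ring
  rw [e2, ← hC]
  linear_combination 2*(C*k*(t*(1+π)*f))^2*q1

lemma case2 (hp3 : 3 < p) (h3 : p % 3 = 2) :
    ratCongr p 2 (SS p 2) (-(2/9)*R3 p - (p:ℚ)/3) ∧ ratCongr p 2 (SS p 3) (4/9*R3 p + (p:ℚ)/3) := by
  have hp : p.Prime := Fact.out
  obtain ⟨m, hpm⟩ : ∃ m, p = 6*m+5 := by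
    refine ⟨p/6, ?_⟩
    rcases hp.eq_two_or_odd with h | h <;> omega
  have hpn : p = 2*(3*m+2)+1 := by omega
  obtain ⟨h1, h2, h4⟩ := sums2 hpn (by omega)
  have hpq : 2*((3*m+2:ℕ):ℚ)+1 = p := by rw [hpn]; push_cast; ring
  rw [hpq] at h1 h4
  have hrel := SS_rel (p := p) (r := 2) (by norm_num) (by omega)
  have hU := Un_EC2 hpm
  have hprod := E_prod (3*m+2) (p:ℚ)
  have h0 : iot p 2 (SS p 0) = 0 := by
    rw [h1]
    have hI : pI p ((p:ℚ)*∏ i ∈ range (3*m+2), (3*(i:ℚ)+2)/(3*i+4)) := by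
      rw [← eq_div_iff (Un_ne hU)] at hprod
      rw [hprod]
      exact pI_div (pI_mul (Un_two (by omega)).pI (pI_pow (pI_nat _) _)) hU
    have := congrArg (iot p 2) hprod
    rw [iot_mul hI hU.pI, iot_lit 2 (pI_pow (pI_nat _) _), iot_pow (pI_nat _), iot_nat, p_pow_zero, mul_zero] at this
    exact (iot_unit hU).mul_left_eq_zero.1 this
  rw [case2_ec hpm, h0] at h4
  rw [h0] at h2 hrel
  have hR := R3_pI hpm
  have u3 := Un_three (p := p) hp3
  have p3 : pI p ((p:ℚ)/3) := pI_div (pI_nat _) u3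
  have u9 : Un p (9:ℚ) := by
    have := Un_mul u3 u3
    norm_num at this; exact this
  have p29 : pI p (2/9:ℚ) := pI_div (Un_two (by omega)).pI u9
  have p49 : pI p (4/9:ℚ) := pI_div (by have := pI_nat (p := p) 4; exact_mod_cast this) u9
  have i1 : 3*iot p 2 ((p:ℚ)/3) = p := by
    have := iot_lit (r := 2) 3 p3
    rw [← this, show (3:ℚ)*((p:ℚ)/3) = p by ring, iot_nat]
  have i2 : 9*iot p 2 (2/9*R3 p) = 2*iot p 2 (R3 p) := by
    have := iot_lit (r := 2) 9 (pI_mul p29 hR)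
    rw [← this, show (9:ℚ)*(2/9*R3 p) = 2*R3 p by ring, iot_lit 2 hR]
  have i4 : 9*iot p 2 (4/9*R3 p) = 4*iot p 2 (R3 p) := by
    have := iot_lit (r := 2) 9 (pI_mul p49 hR)
    rw [← this, show (9:ℚ)*(4/9*R3 p) = 4*R3 p by ring, iot_lit 4 hR]
  have n3 : IsUnit (3:ZMod (p^2)) := by
    have := nat_unit' (p := p) (r := 2) (k := 3) (by omega) (by omega)
    exact_mod_cast this
  have n2 := two_unit (p := p) (r := 2) (by omega)
  constructor
  · refine iot_eq_imp (SS_pI (by omega) _) (pI_sub (pI_mul (pI_neg p29) hR) p3) ?_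
    rw [iot_sub (pI_mul (pI_neg p29) hR) p3, neg_mul, iot_neg (pI_mul p29 hR)]
    apply (n3.mul n3).mul_left_cancel
    linear_combination h4 - 3*h2 + i2 + 3*i1
  · refine iot_eq_imp (SS_pI (by omega) _) (pI_add (pI_mul p49 hR) p3) ?_
    rw [iot_add (pI_mul p49 hR) p3]
    apply (n2.mul (n3.mul n3)).mul_left_cancel
    linear_combination 3*hrel - 4*h4 + 6*h2 - 2*i4 - 6*i1

end case2fin


section case1
open Finset
variable {p : ℕ} [Fact p.Prime]

lemma EA1 (m : ℕ) (q : ℚ) (hq : q = 6*m+1) :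
    (q*∏ i ∈ range (3*m), (3*(i:ℚ)+2)/(3*i+4)) * ((FF (2*m) (-(q/3)))^2*FF m (q/3)) =
      FF (5*m) (-(q/3)) := by
  rw [FF_ratio']
  have h1 := FF_add (2*m) (3*m) (-(q/3))
  have h2 := FF_add (2*m) m (1/3:ℚ)
  have h3 := FF_refl (2*m) (1/3:ℚ)
  have h4 := FF_shift (2*m) (-(q/3))
  rw [show 2*m+3*m = 5*m by ring, show -(q/3)+((2*m:ℕ):ℚ) = -(1/3) by rw [hq]; push_cast; ring] at h1
  rw [show 2*m+m = 3*m by ring, show (1/3:ℚ)+((2*m:ℕ):ℚ) = q/3 by rw [hq]; push_cast; ring] at h2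
  rw [Even.neg_one_pow ⟨m, by ring⟩, one_mul, show (-(((2*m:ℕ):ℚ)+1)-(1/3)) = -(q/3)-1 by rw [hq]; push_cast; ring] at h3
  rw [← h3, show (((2*m:ℕ):ℚ)+(-(q/3))) = -(1/3) by rw [hq]; push_cast; ring] at h4
  have hne := FF_pos1 (3*m)
  rw [h1, ← mul_div_assoc, div_mul_eq_mul_div, div_eq_iff hne, h2]
  linear_combination 3*(FF (2*m) (-(q/3)) * FF (3*m) (-(1/3))*FF m (q/3))*h4

lemma FsGM (m : ℕ) (q : ℚ) (hq : q = 6*m+1) :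
    Fs 0 (3*m) (1/2) * (FF m (-(q/2))*FF m 0) = Fs 0 (3*m) (1/4-((3*m:ℕ):ℚ)/2) * (FF m (-(q/4)))^2 := by
  have h1 := Fs_closed m (1/2) (Or.inl rfl)
  have h2 := Fs_closed m (1/4-((3*m:ℕ):ℚ)/2) (Or.inr ⟨-(3*m), by push_cast; ring⟩)
  have a1 : ∏ i ∈ range m, ((1/2:ℚ)+2*m+i) = (-1)^m * FF m (-(q/2)) := by
    have := FF_refl m (2*(m:ℚ)-1/2)
    rw [show -((m:ℚ)+1)-(2*(m:ℚ)-1/2) = -(q/2) by rw [hq]; ring] at this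
    rw [← this]
    exact prod_congr rfl fun i _ => by ring
  have a2 : ∏ i ∈ range m, ((1/2:ℚ)+1/2+i) = FF m 0 := prod_congr rfl fun i _ => by ring
  have a3 : ∏ i ∈ range m, ((1/4-((3*m:ℕ):ℚ)/2)+2*m+i) = (-1)^m * FF m (-(q/4)) := by
    have := FF_refl m ((m:ℚ)/2-3/4)
    rw [show -((m:ℚ)+1)-((m:ℚ)/2-3/4) = -(q/4) by rw [hq]; ring] at this
    rw [← this]
    exact prod_congr rfl fun i _ => by push_cast; ring
  have a4 : ∏ i ∈ range m, ((1/4-((3*m:ℕ):ℚ)/2)+1/2+i) = FF m (-(q/4)) := 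
    prod_congr rfl fun i _ => by rw [hq]; push_cast; ring
  rw [a1, a2] at h1
  rw [a3, a4, ← h1] at h2
  have s : ((-1:ℚ)^m)*(-1)^m = 1 := by rw [← mul_pow]; simp
  generalize (-1:ℚ)^m = e at *
  linear_combination (-e)*h2 + (Fs 0 (3*m) (1/4-((3*m:ℕ):ℚ)/2) * (FF m (-(q/4)))^2 - Fs 0 (3*m) (1/2) * (FF m (-(q/2))*FF m 0))*s

lemma Un_EA1 {m : ℕ} (hpm : p = 6*m+1) (hm : 1 ≤ m) :
    Un p ((p:ℚ)*∏ i ∈ range (3*m), (3*(i:ℚ)+2)/(3*i+4)) := by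
  have h := EA1 m (p:ℚ) (by rw [hpm]; push_cast; ring)
  have u3 : pI p (1/3:ℚ) := pI_third (by omega)
  have e1 : -((p:ℚ)/3) = (-(1/3))*p := by ring
  have e2 : ((p:ℚ)/3) = (1/3)*p := by ring
  rw [e1, e2] at h
  have w1 := Un_FF (p := p) (2*m) (by omega) (pI_neg u3)
  have w2 := Un_FF (p := p) m (by omega) u3
  have w3 := Un_FF (p := p) (5*m) (by omega) (pI_neg u3)
  have w := Un_mul (Un_pow w1 2) w2
  rw [← eq_div_iff (Un_ne w)] at h
  rw [h]
  exact Un_div w3 w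

/-- ring core -/
lemma l_core {R : Type*} [CommRing R] (τ π g μ e0 s0 k A B V U3 Z P s d w F2m8 F4 F3 F6 F2 : R)
    (hτ : τ^3=0) (hπ : π = 12*τ) (hk : IsUnit k)
    (f8 : F2m8 = k*(1+(-8)*τ*A+((-8)*τ)^2*B)) (f4 : F4 = k*(1+4*τ*A+(4*τ)^2*B))
    (f3 : F3 = k*(1+(-3)*τ*A+((-3)*τ)^2*B)) (f6 : F6 = k*(1+(-6)*τ*A+((-6)*τ)^2*B))
    (f2 : F2 = k*(1+(-2)*τ*A+((-2)*τ)^2*B))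
    (h1 : g*(F6*k) = μ*F3^2)
    (hs0 : s0 = e0-4*(g-μ)) (hd : g-μ=π^2*d) (hw : μ = s0+π*w)
    (h3 : e0*(V^2*F4) = Z) (h4 : P = Z*(s*F2m8)) (h5 : P = U3*(s*U3)) (hs : s*s=1) :
    s0*(V*F2)^2 = U3^2 ∧ s0*(1+36*τ^2*(A^2-2*B)) = e0 := by
  have k2 := hk.pow 2
  have g1 : g*(1-6*τ*A+36*τ^2*B) = μ*(1-6*τ*A+τ^2*(9*A^2+18*B)) := by
    apply k2.mul_left_cancel
    rw [f6, f3] at h1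
    linear_combination h1 + k^2*μ*(-54*A*B+81*τ*B^2)*hτ
  have g2 : g - μ = s0*τ^2*(9*A^2-18*B) := by
    have z : (g-μ)*τ = 0 := by rw [hd, hπ]; linear_combination 144*d*hτ
    have y : μ*τ^2 = s0*τ^2 := by rw [hw, hπ]; linear_combination 12*w*hτ
    linear_combination g1 + (6*A-36*τ*B)*z + (9*A^2-18*B)*y
  have g3 : s0*(1+36*τ^2*(A^2-2*B)) = e0 := by
    linear_combination hs0 - 4*g2
  refine ⟨?_, g3⟩
  have e1 : Z*F2m8 = U3^2 := by
    linear_combination s*h5 - s*h4 - (Z*F2m8 - U3^2)*hs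
  have e2 : F4*F2m8*(1+36*τ^2*(A^2-2*B)) = F2^2 := by
    rw [f4, f8, f2]
    clear h1 hs0 hd hw h3 h4 h5 hs g1 g2 g3 e1 f8 f4 f3 f6 f2 hπ k2 hk
    grind
  rw [← e1, ← h3, ← g3]
  linear_combination -s0*V^2*e2

lemma case1_alg {m : ℕ} (hpm : p = 6*m+1) (hm : 1 ≤ m) : ∃ τ : ZMod (p^3), 12*τ = (p:ZMod (p^3)) ∧ τ^3 = 0 ∧
    iot p 3 (SS p 0) * (FF (2*m) ((-4)*τ) * FF m ((-2)*τ))^2 = (FF (3*m) ((-6)*τ))^2 ∧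
    3*iot p 3 (SS p 1) + iot p 3 (SS p 0) = (p:ZMod (p^3)) ∧
    iot p 3 (SS p 0) * (9*iot p 3 (SS p 2) + 9*iot p 3 (SS p 1) + 2*iot p 3 (SS p 0)) = 2*(p:ZMod (p^3))^2 := by
  have hp3 : 3 < p := by omega
  have hpn : p = 2*(3*m)+1 := by omega
  have hpq : 2*((3*m:ℕ):ℚ)+1 = p := by
    rw [hpn]; push_cast; ring
  obtain ⟨H1, ⟨d, hd⟩, ⟨w, hw⟩, H4, H5⟩ := sums1 hpn (by omega)
  rw [hpq] at H1 H5
  have u12 : Un p (12:ℚ) := by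
    have := Un_mul (Un_mul (Un_two (p := p) (by omega)) (Un_three (by omega))) (Un_two (p := p) (by omega))
    norm_num at this; exact this
  have pt : pI p ((p:ℚ)/12) := pI_div (pI_nat _) u12
  have n12 := iot_unit (r := 3) u12
  have l12 : iot p 3 (12:ℚ) = 12 := by
    have := iot_nat (p := p) (r := 3) 12
    exact_mod_cast this
  rw [l12] at n12
  set τ := iot p 3 ((p:ℚ)/12) with hτd
  have hτ1 : 12*τ = (p:ZMod (p^3)) := by
    rw [hτd, ← iot_lit 12 pt, show (12:ℚ)*((p:ℚ)/12) = p by ring, iot_nat]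
  have hπ3 : (p:ZMod (p^3))^3 = 0 := p_pow_zero
  have hτ : τ^3 = 0 := by
    apply (n12.pow 3).mul_left_cancel
    rw [← mul_pow, hτ1, hπ3, mul_zero]
  refine ⟨τ, hτ1, hτ, ?_⟩
  set π : ZMod (p^3) := (p:ZMod (p^3)) with hπd
  have hpc : π = 6*(m:ZMod (p^3))+1 := by
    have := pcast (p := p) (r := 3) (n := 3*m) (by omega)
    rw [hπd, this]; push_cast; ring
  -- iot of FF
  have hFF : ∀ (k c : ℕ), pI p (FF k ((c:ℚ)*((p:ℚ)/12))) ∧ iot p 3 (FF k ((c:ℚ)*((p:ℚ)/12))) = FF k ((c:ZMod (p^3))*τ) := by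
    intro k c
    have := FF_iot (p := p) (r := 3) k (pI_mul (pI_nat (p := p) c) pt)
    rwa [iot_mul (pI_nat c) pt, iot_nat] at this
  have hFFn : ∀ (k c : ℕ), pI p (FF k (-((c:ℚ)*((p:ℚ)/12)))) ∧ iot p 3 (FF k (-((c:ℚ)*((p:ℚ)/12)))) = FF k ((-(c:ZMod (p^3)))*τ) := by
    intro k c
    have := FF_iot (p := p) (r := 3) k (pI_neg (pI_mul (pI_nat (p := p) c) pt))
    rw [neg_mul]
    rwa [iot_neg (pI_mul (pI_nat (p := p) c) pt), iot_mul (pI_nat c) pt, iot_nat] at this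
  have hUE := Un_EA1 hpm hm
  have hEA := EA1 m (p:ℚ) (by rw [hpm]; push_cast; ring)
  rw [show (p:ℚ)/3 = ((4:ℕ):ℚ)*((p:ℚ)/12) by push_cast; ring] at hEA
  have hEA' := congrArg (iot p 3) hEA
  rw [iot_mul hUE.pI (pI_mul (pI_pow (hFFn _ _).1 2) (hFF _ _).1), iot_mul (pI_pow (hFFn _ _).1 2) (hFF _ _).1, iot_pow (hFFn _ _).1,
    (hFF _ _).2, (hFFn _ _).2, (hFFn _ _).2] at hEA'
  have hGM := FsGM m (p:ℚ) (by rw [hpm]; push_cast; ring)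
  rw [show (p:ℚ)/2 = ((6:ℕ):ℚ)*((p:ℚ)/12) by push_cast; ring, show (p:ℚ)/4 = ((3:ℕ):ℚ)*((p:ℚ)/12) by push_cast; ring,
    FF_fact] at hGM
  have hGM' := congrArg (iot p 3) hGM
  have pG := (Fs_iot (p := p) (r := 3) (1/2) (tG_pI hpn (by omega)) 0).1
  have pM := (Fs_iot (p := p) (r := 3) _ (tM_pI hpn (by omega)) 0).1
  rw [iot_mul pG (pI_mul (hFFn _ _).1 (pI_nat _)), iot_mul (hFFn _ _).1 (pI_nat _), iot_mul pM (pI_pow (hFFn _ _).1 _),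
    iot_pow (hFFn _ _).1, (hFFn _ _).2, (hFFn _ _).2, iot_nat] at hGM'
  push_cast at hEA' 
  simp only [Nat.cast_ofNat] at hGM'
  have hP1 := FF_split (5*m) m (-4*τ)
  have hP2 := FF_split (3*m) (3*m) (-6*τ)
  have i12 := n12
  obtain ⟨i, hi⟩ := n12.exists_right_inv
  have hτi : τ = i*π := by linear_combination i*hτ1 - τ*hi
  have top : ∀ c, FF (p-1) (c*τ) = ((p-1).factorial:ZMod (p^3)) := by
    intro c
    rw [hτi, ← mul_assoc]; exact FF_top (by norm_num) (by norm_num) hp3 _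
  rw [show 5*m+m = p-1 by omega, top, show -(((5*m:ℕ):ZMod (p^3))+m+1)-(-4*τ) = (-8)*τ by push_cast; linear_combination hpc + hτ1] at hP1
  rw [show 3*m+3*m = p-1 by omega, top, show -(((3*m:ℕ):ZMod (p^3))+(3*m:ℕ)+1)-(-6*τ) = (-6)*τ by push_cast; linear_combination hpc + hτ1] at hP2
  rw [show (-1:ZMod (p^3))^(3*m) = (-1)^m by
    rw [show 3*m = m + 2*m by ring, pow_add, pow_mul (-1) 2]; simp] at hP2
  obtain ⟨B, -, hF⟩ := FF_exp (R := ZMod (p^3)) m (fun j hj => u_small j (by omega))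
  have hk := fact_unit (R := ZMod (p^3)) m (fun j hj => u_small j (by omega))
  have s1 : ((-1:ZMod (p^3))^m)*((-1)^m) = 1 := by
    rw [← mul_pow]; simp
  obtain ⟨C1, C2⟩ := l_core τ π _ _ _ _ _ _ B _ _ _ _ _ d w _ _ _ _ _ hτ hτ1.symm hk (hF τ (-8) hτ) (hF τ 4 hτ) (hF τ (-3) hτ) (hF τ (-6) hτ)
    (hF τ (-2) hτ) hGM' H1 hd hw hEA' hP1 hP2 s1
  refine ⟨C1, H4, ?_⟩
  rw [H5]
  have hprod := congrArg (iot p 3) (E_prod (3*m) (p:ℚ))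
  have pE : pI p (2*(p:ℚ)*∏ i ∈ range (3*m), (3*(i:ℚ)+4)/(3*i+2)) := by
    have := E_prod (3*m) (p:ℚ)
    rw [mul_comm, ← eq_div_iff (Un_ne hUE)] at this
    rw [this]
    exact pI_div (pI_mul (Un_two (by omega)).pI (pI_pow (pI_nat _) _)) hUE
  rw [iot_mul hUE.pI pE, iot_lit 2 (pI_pow (pI_nat _) _), iot_pow (pI_nat _), iot_nat, ← C2] at hprod
  have uE := iot_unit (r := 3) hUE
  rw [← C2] at uE
  obtain ⟨j, hj⟩ := uE.exists_right_inv
  rw [← hπd] at hprod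
  generalize iot p 3 (2*(p:ℚ)*∏ i ∈ range (3*m), (3*(i:ℚ)+4)/(3*i+2)) = ec at *
  have hec : ec = j*(2*π^2) := by linear_combination j*hprod - ec*hj
  have hecτ : ec*τ^2 = 0 := by
    rw [hec, ← hτ1]; linear_combination j*2*144*τ*hτ
  linear_combination hprod - iot p 3 (SS p 0)*36*(HH (ZMod (p^3)) m ^2-2*B)*hecτ

end case1


section jac
open Finset
variable {p : ℕ} [Fact p.Prime]

lemma gen_exists (p : ℕ) [Fact p.Prime] : ∃ g : ZMod p, g ≠ 0 ∧ (∀ e : ℕ, g^e = 1 ↔ (p-1) ∣ e) ∧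
    ∀ t : ZMod p, t ≠ 0 → ∃ k, k < p-1 ∧ g^k = t := by
  have hp : p.Prime := Fact.out
  obtain ⟨u, hu⟩ := IsCyclic.exists_generator (α := (ZMod p)ˣ)
  have ho : orderOf u = p-1 := by
    rw [orderOf_eq_card_of_forall_mem_zpowers hu, Nat.card_eq_fintype_card, ZMod.card_units]
  refine ⟨u, u.ne_zero, ?_, ?_⟩
  · intro e
    rw [← ho, orderOf_dvd_iff_pow_eq_one, ← Units.val_pow_eq_pow_val, Units.val_eq_one]
  · intro t ht
    have := hu (Units.mk0 t ht)
    rw [← mem_powers_iff_mem_zpowers] at this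
    obtain ⟨k, hk⟩ := this
    refine ⟨k % (p-1), Nat.mod_lt _ (by have := hp.two_le; omega), ?_⟩
    have hk' : u^k = Units.mk0 t ht := hk
    rw [← Units.val_pow_eq_pow_val, ← ho, pow_mod_orderOf, hk']
    rfl

lemma gen_sum {g : ZMod p} (hg : g ≠ 0) (h1 : ∀ e : ℕ, g^e = 1 ↔ (p-1) ∣ e)
    (h2 : ∀ t : ZMod p, t ≠ 0 → ∃ k, k < p-1 ∧ g^k = t) {M : Type*} [AddCommMonoid M] (F : ZMod p → M)
    (h0 : F 0 = 0) :
    ∑ t, F t = ∑ k ∈ range (p-1), F (g^k) := by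
  symm
  have e : ∑ t, F t = ∑ t ∈ univ.filter (fun t : ZMod p => t ≠ 0), F t := by
    rw [sum_filter]
    apply sum_congr rfl
    intro t _
    split_ifs with h
    · rfl
    · push Not at h; rw [h, h0]
  rw [e]
  apply sum_bij (fun k _ => g^k)
  · intro k _; simp [hg]
  · intro a ha b hb hab
    simp only [mem_range] at ha hb
    have key : ∀ a b : ℕ, a ≤ b → b < p-1 → g^a = g^b → a = b := by
      intro a b hle hb hab
      have : g^(b-a) = 1 := by
        have h3 : g^a*g^(b-a) = g^a*1 := by rw [← pow_add, mul_one, hab]; congr 1; omega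
        exact mul_left_cancel₀ (pow_ne_zero _ hg) h3
      rw [h1] at this
      have := Nat.eq_zero_of_dvd_of_lt this (by omega)
      omega
    rcases le_total a b with h | h
    · exact key a b h hb hab
    · exact (key b a h ha hab.symm).symm
  · intro t ht
    obtain ⟨k, hk, rfl⟩ := h2 t (by simpa using ht)
    exact ⟨k, by simpa using hk, rfl⟩
  · intros; rfl

/-- class sums -/
noncomputable def NN (p : ℕ) [Fact p.Prime] (m : ℕ) (g : ZMod p) (i : ℕ) : ℤ :=
  ∑ j ∈ range (2*m), quadraticChar (ZMod p) (1 - g^(3*j+i))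

lemma sum_three {M : Type*} [AddCommMonoid M] (n : ℕ) (F : ℕ → M) :
    ∑ k ∈ range (3*n), F k = ∑ j ∈ range n, (F (3*j) + F (3*j+1) + F (3*j+2)) := by
  induction n with
  | zero => simp
  | succ n ih =>
    rw [show 3*(n+1) = 3*n+1+1+1 by ring, sum_range_succ, sum_range_succ, sum_range_succ, ih, sum_range_succ]
    simp only [add_assoc]

lemma NN_comb {m : ℕ} (g : ZMod p) {R : Type*} [CommRing R] (w : R) (hw : w^3 = 1) :
    ∑ k ∈ range (6*m), w^k * ((quadraticChar (ZMod p) (1 - g^k) : ℤ) : R) =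
      (NN p m g 0 : R) + NN p m g 1 * w + NN p m g 2 * w^2 := by
  rw [show 6*m = 3*(2*m) by ring, sum_three]
  simp only [NN, Int.cast_sum, sum_mul, ← sum_add_distrib]
  apply sum_congr rfl
  intro j _
  have : w^(3*j) = 1 := by rw [pow_mul, hw, one_pow]
  rw [pow_add w, pow_add w, this]; simp only [pow_one, add_zero]; ring

lemma NN_facts {m : ℕ} (hpm : p = 6*m+1) (hm : 1 ≤ m) {g : ZMod p} (hg : g ≠ 0)
    (h1 : ∀ e : ℕ, g^e = 1 ↔ (p-1) ∣ e)
    (h2 : ∀ t : ZMod p, t ≠ 0 → ∃ k, k < p-1 ∧ g^k = t) :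
    NN p m g 0 + NN p m g 1 + NN p m g 2 = -1 ∧ Odd (NN p m g 0) ∧
    (NN p m g 0)^2 + (NN p m g 1)^2 + (NN p m g 2)^2 - NN p m g 0 * NN p m g 1 - NN p m g 0 * NN p m g 2
     - NN p m g 1 * NN p m g 2 = p := by
  have hp : p.Prime := Fact.out
  have hc2 : ringChar (ZMod p) ≠ 2 := by rw [ZMod.ringChar_zmod_n]; omega
  have hq : quadraticChar (ZMod p) ≠ 1 := quadraticChar_ne_one hc2
  have hp1 : p - 1 = 6*m := by omega
  refine ⟨?_, ?_, ?_⟩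
  · have := NN_comb (m := m) g (1:ℤ) (by norm_num)
    simp only [one_pow, one_mul, mul_one, Int.cast_id] at this
    rw [← this, ← hp1]
    have h3 := gen_sum hg h1 h2 (fun t => quadraticChar (ZMod p) (1 - t) - (if t = 0 then 1 else 0)) (by simp)
    have h4 : ∑ k ∈ range (p-1), quadraticChar (ZMod p) (1 - g^k) =
        ∑ k ∈ range (p-1), (fun t => quadraticChar (ZMod p) (1 - t) - (if t = 0 then 1 else 0)) (g^k) := by
      apply sum_congr rfl
      intro k _
      simp [hg]
    rw [h4, ← h3, sum_sub_distrib]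
    have h5 : ∑ t : ZMod p, quadraticChar (ZMod p) (1 - t) = 0 := by
      rw [← quadraticChar_sum_zero hc2]
      exact Fintype.sum_equiv (Equiv.subLeft 1) _ _ (fun t => rfl)
    rw [h5]; simp
  · unfold NN
    obtain ⟨n, hn⟩ : ∃ n, 2*m = n+1 := ⟨2*m-1, by omega⟩
    rw [hn, sum_range_succ']
    simp only [mul_zero, add_zero, pow_zero, sub_self, MulChar.map_zero]
    have hod : Odd n := by rw [← Nat.not_even_iff_odd]; intro h; obtain ⟨c, hc⟩ := h; omega
    have par : ∀ n : ℕ, ∀ f : ℕ → ℤ, (∀ j < n, f j = 1 ∨ f j = -1) → ∃ c, ∑ j ∈ range n, f j = n + 2*c := by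
      intro n f
      induction n with
      | zero => intro _; exact ⟨0, by simp⟩
      | succ n ih =>
        intro h
        obtain ⟨c, hc⟩ := ih (fun j hj => h j (by omega))
        rw [sum_range_succ, hc]
        rcases h n (by omega) with h | h
        · exact ⟨c, by rw [h]; push_cast; ring⟩
        · exact ⟨c-1, by rw [h]; push_cast; ring⟩
    obtain ⟨c, hc⟩ := par n (fun j => quadraticChar (ZMod p) (1 - g^(3*(j+1)))) (by
      intro j hj
      have : (1:ZMod p) - g^(3*(j+1)) ≠ 0 := by
        intro h
        have h6 := (h1 (3*(j+1))).1 (by linear_combination -h)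
        rw [hp1] at h6
        have := Nat.le_of_dvd (by omega) h6
        omega
      exact quadraticChar_dichotomy this)
    rw [hc]
    obtain ⟨d, hd⟩ := hod
    exact ⟨d+c, by rw [hd]; push_cast; ring⟩
  · obtain ⟨χ, hχ⟩ := MulChar.exists_mulChar_orderOf (ZMod p) (n := 3) (by rw [ZMod.card]; omega)
      (Complex.isPrimitiveRoot_exp 3 (by norm_num))
    have hχ3 : χ^3 = 1 := by rw [← hχ]; exact pow_orderOf_eq_one χ
    have hχ1 : χ ≠ 1 := by intro h; rw [h, orderOf_one] at hχ; omega
    set φ : MulChar (ZMod p) ℂ := (quadraticChar (ZMod p)).ringHomComp (Int.castRingHom ℂ) with hφd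
    have hφ : φ ≠ 1 := by
      intro h
      exact hq ((MulChar.ringHomComp_eq_one_iff (f := Int.castRingHom ℂ) Int.cast_injective).1 h)
    have hφ2 : φ^2 = 1 := by
      rw [hφd, MulChar.ringHomComp_pow, (quadraticChar_isQuadratic (ZMod p)).sq_eq_one, MulChar.ringHomComp_one]
    have hφi : φ⁻¹ = φ := by
      rw [inv_eq_iff_mul_eq_one, ← sq, hφ2]
    have hχφ : χ*φ ≠ 1 := by
      intro h
      apply hφ
      have : (χ*φ)^3 = φ := by rw [mul_pow, hχ3, pow_succ, hφ2]; simp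
      rw [← this, h, one_pow]
    have hJ := jacobiSum_mul_jacobiSum_inv (F := ZMod p) (F' := ℂ) (by rw [ZMod.ringChar_zmod_n, ringChar.eq_zero]; omega) hχ1 hφ hχφ
    rw [hφi, ZMod.card] at hJ
    set w := χ g with hw
    have hw3 : w^3 = 1 := by
      rw [hw, ← MulChar.pow_apply' χ (by norm_num), hχ3, MulChar.one_apply hg.isUnit]
    have hw1 : w ≠ 1 := by
      intro h
      apply hχ1
      ext t
      obtain ⟨k, -, hk⟩ := h2 t t.ne_zero
      rw [← hk, map_pow, ← hw, h, one_pow, MulChar.one_apply (hg.isUnit.pow k)]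
    have hw0 : w^2+w+1 = 0 := by
      have : (w-1)*(w^2+w+1) = 0 := by linear_combination hw3
      exact (mul_eq_zero.1 this).resolve_left (sub_ne_zero.2 hw1)
    have hwi : χ⁻¹ g = w^2 := by
      have : χ⁻¹ = χ^2 := by rw [inv_eq_iff_mul_eq_one, ← pow_succ', hχ3]
      rw [this, MulChar.pow_apply' χ (by norm_num)]
    have hs : ∀ (ψ : MulChar (ZMod p) ℂ) (v : ℂ), ψ g = v → v^3 = 1 → jacobiSum ψ φ = (NN p m g 0 : ℂ) + NN p m g 1 * v + NN p m g 2 * v^2 := by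
      intro ψ v hv hv3
      rw [← NN_comb g v hv3, jacobiSum, gen_sum hg h1 h2 _ (by rw [MulChar.map_zero ψ, zero_mul]), hp1]
      apply sum_congr rfl
      intro k _
      rw [map_pow, hv]; rfl
    rw [hs χ w rfl hw3, hs χ⁻¹ (w^2) hwi (by rw [← pow_mul, pow_mul' w 2 3, hw3, one_pow])] at hJ
    have : ((NN p m g 0:ℂ))^2 + (NN p m g 1)^2 + (NN p m g 2)^2 - NN p m g 0 * NN p m g 1 - NN p m g 0 * NN p m g 2
       - NN p m g 1 * NN p m g 2 = p := by
      generalize (NN p m g 0 : ℂ) = a at *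
      generalize (NN p m g 1 : ℂ) = b at *
      generalize (NN p m g 2 : ℂ) = c at *
      rw [← hJ]
      have hw4 : w^4 = w := by linear_combination w*hw3
      have hw5 : w^5 = w^2 := by linear_combination w^2*hw3
      have hw6 : w^6 = 1 := by linear_combination (w^3+1)*hw3
      linear_combination -(a*c*hw4 + b*c*hw5 + b^2*hw3+c^2*hw6+b*c*hw4 + (a*b + a*c + b*c)*hw0)
    exact_mod_cast this

lemma rep_unique {p c b x y : ℤ} (hp : Prime p) (hpos : 0 < p) (h1 : p = c^2+3*b^2) (h2 : p = x^2+3*y^2) : c^2 = x^2 := by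
  have key : ∀ b : ℤ, p = c^2+3*b^2 → p ∣ c*y-b*x → c^2 = x^2 := by
    intro b h1 hd
    obtain ⟨k, hk⟩ := hd
    have h3 : (c*x+3*b*y)^2+3*(p*k)^2 = p^2 := by
      rw [← hk]; nth_rw 1 [sq p]; nth_rw 1 [h1]; rw [h2]; ring
    have hk0 : k = 0 := by
      by_contra hk0
      have : 1 ≤ k^2 := by have := sq_pos_of_ne_zero (a := k) (by simpa using hk0); omega
      nlinarith [sq_nonneg (c*x+3*b*y), mul_pos hpos hpos]
    rw [hk0, mul_zero] at hk
    have h4 : p*(y^2-b^2) = 0 := by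
      have e1 : c*y = b*x := by linarith
      have e2 : (c*y)^2 = (b*x)^2 := by rw [e1]
      calc p*(y^2-b^2) = p*y^2-p*b^2 := by ring
        _ = (c^2+3*b^2)*y^2-(x^2+3*y^2)*b^2 := by rw [← h1, ← h2]
        _ = 0 := by linear_combination e2
    have h5 : y^2 = b^2 := by
      rcases mul_eq_zero.1 h4 with h | h
      · omega
      · linarith
    linarith
  have hd : p ∣ (c*y-b*x)*(c*y-(-b)*x) := by
    refine ⟨y^2-b^2, ?_⟩
    calc (c*y-b*x)*(c*y-(-b)*x) = (c^2+3*b^2)*y^2-(x^2+3*y^2)*b^2 := by ring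
      _ = p*(y^2-b^2) := by rw [← h1, ← h2]; ring
  rcases hp.dvd_or_dvd hd with h | h
  · exact key b h1 h
  · exact key (-b) (by rw [h1]; ring) h

lemma NN_final {m : ℕ} (hpm : p = 6*m+1) (hm : 1 ≤ m) {g : ZMod p} (hg : g ≠ 0)
    (h1 : ∀ e : ℕ, g^e = 1 ↔ (p-1) ∣ e)
    (h2 : ∀ t : ZMod p, t ≠ 0 → ∃ k, k < p-1 ∧ g^k = t) {x y : ℤ} (hxy : (p:ℤ) = x^2+3*y^2) :
    (2*NN p m g 0 - NN p m g 1 - NN p m g 2)^2 = 4*x^2 := by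
  have hp : p.Prime := Fact.out
  obtain ⟨e1, ⟨a, ha⟩, e3⟩ := NN_facts hpm hm hg h1 h2
  generalize NN p m g 0 = n0 at *
  generalize NN p m g 1 = n1 at *
  generalize NN p m g 2 = n2 at *
  have := rep_unique (c := 3*a+2) (b := n1+a+1) (Nat.prime_iff_prime_int.1 hp) (by exact_mod_cast hp.pos)
    (by rw [← e3]; obtain rfl : n2 = -1-n0-n1 := by linarith
        subst ha; ring) hxy
  rw [show 2*n0-n1-n2 = 2*(3*a+2) by linarith, mul_pow, this]; ring

end jac


section jlink
open Finset
variable {p : ℕ} [Fact p.Prime]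

lemma lift_gen {m : ℕ} (hpm : p = 6*m+1) {g : ZMod p} (hg : g ≠ 0) :
    ∃ G : ZMod (p^3), ZMod.castHom (dvd_pow_self p three_ne_zero) (ZMod p) G = g ∧ G^(6*m) = 1 := by
  have hp : p.Prime := Fact.out
  haveI : NeZero p := ⟨hp.ne_zero⟩
  refine ⟨(g.val:ZMod (p^3))^(p^2), ?_, ?_⟩
  · rw [map_pow, map_natCast, ZMod.natCast_val, ZMod.cast_id', id, sq, pow_mul, ZMod.pow_card, ZMod.pow_card]
  · have hcop : Nat.Coprime g.val (p^3) := by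
      apply Nat.Coprime.pow_right
      rw [Nat.coprime_comm, hp.coprime_iff_not_dvd]
      intro h
      have := Nat.eq_zero_of_dvd_of_lt h (ZMod.val_lt g)
      rw [ZMod.val_eq_zero] at this
      exact hg this
    have := ZMod.pow_totient (ZMod.unitOfCoprime _ hcop)
    rw [Nat.totient_prime_pow hp (by norm_num)] at this
    have h2 := congrArg Units.val this
    rw [Units.val_pow_eq_pow_val, ZMod.coe_unitOfCoprime, Units.val_one] at h2
    rw [← pow_mul, ← h2]
    congr 2
    omega

lemma unit_of_cast {x : ZMod (p^3)} (h : ZMod.castHom (dvd_pow_self p three_ne_zero) (ZMod p) x ≠ 0) : IsUnit x := by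
  have hp : p.Prime := Fact.out
  haveI : NeZero (p^3) := ⟨pow_ne_zero _ hp.ne_zero⟩
  have e : x = (x.val : ZMod (p^3)) := by simp
  rw [e, map_natCast, Ne, ZMod.natCast_eq_zero_iff] at h
  rw [e, ZMod.isUnit_iff_coprime]
  apply Nat.Coprime.pow_right
  rw [Nat.coprime_comm, hp.coprime_iff_not_dvd]
  exact h

lemma geo_sum {m : ℕ} (hpm : p = 6*m+1) {g : ZMod p} (h1 : ∀ e : ℕ, g^e = 1 ↔ (p-1) ∣ e) {G : ZMod (p^3)}
    (hG : ZMod.castHom (dvd_pow_self p three_ne_zero) (ZMod p) G = g) (hG1 : G^(6*m) = 1) (e : ℕ) :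
    ∑ k ∈ range (6*m), (G^e)^k = if 6*m ∣ e then ((6*m:ℕ):ZMod (p^3)) else 0 := by
  split_ifs with h
  · obtain ⟨c, rfl⟩ := h
    rw [pow_mul, hG1, one_pow]; simp
  · have hu : IsUnit (G^e-1) := by
      apply unit_of_cast
      rw [map_sub, map_pow, hG, map_one, Ne, sub_eq_zero, h1, show p-1 = 6*m by omega]
      exact h
    apply hu.mul_left_cancel
    rw [mul_zero, mul_geom_sum, ← pow_mul, mul_comm, pow_mul, hG1, one_pow, sub_self]

lemma sum_D {m : ℕ} (hpm : p = 6*m+1) {g : ZMod p} (h1 : ∀ e : ℕ, g^e = 1 ↔ (p-1) ∣ e) {G : ZMod (p^3)}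
    (hG : ZMod.castHom (dvd_pow_self p three_ne_zero) (ZMod p) G = g) (hG1 : G^(6*m) = 1) (D : ℕ) :
    ∑ k ∈ range (6*m), (G^(4*m))^k*(1-G^k)^D =
      ((6*m:ℕ):ZMod (p^3)) * ∑ i ∈ (range (D+1)).filter (fun i => 6*m ∣ 4*m+i), (-1)^i*(D.choose i:ZMod (p^3)) := by
  have e1 : ∀ k ∈ range (6*m), (G^(4*m))^k*(1-G^k)^D = ∑ i ∈ range (D+1), (-1)^i*(D.choose i:ZMod (p^3))*(G^(4*m+i))^k := by
    intro k _
    rw [show 1-G^k = -G^k+1 by ring, add_pow, mul_sum]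
    apply sum_congr rfl
    intro i _
    rw [neg_pow, ← pow_mul, ← pow_mul, ← pow_mul, add_mul, pow_add, one_pow, mul_comm k i]; ring
  rw [sum_congr rfl e1, sum_comm, mul_sum, sum_filter]
  apply sum_congr rfl
  intro i _
  rw [← mul_sum, geo_sum hpm h1 hG hG1]
  split_ifs <;> ring

lemma filt {m D : ℕ} (hm : 1 ≤ m) : 
    ((range (3*m+1)).filter (fun i => 6*m ∣ 4*m+i) = {2*m}) ∧
    ((range (9*m+1)).filter (fun i => 6*m ∣ 4*m+i) = {2*m, 8*m}) ∧
    ((range (15*m+1)).filter (fun i => 6*m ∣ 4*m+i) = {2*m, 8*m, 14*m}) := by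
  have d1 : 6*m ∣ 4*m+2*m := ⟨1, by ring⟩
  have d2 : 6*m ∣ 4*m+8*m := ⟨2, by ring⟩
  have d3 : 6*m ∣ 4*m+14*m := ⟨3, by ring⟩
  have key : ∀ i, i < 15*m+1 → 6*m ∣ 4*m+i → i = 2*m ∨ i = 8*m ∨ i = 14*m := by
    rintro i hi ⟨c, hc⟩
    have : c < 4 := by
      by_contra h
      push Not at h
      have := Nat.mul_le_mul_left (6*m) h
      omega
    interval_cases c <;> omega
  refine ⟨?_, ?_, ?_⟩
  · ext i
    simp only [mem_filter, mem_range, mem_singleton]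
    constructor
    · rintro ⟨h, h'⟩
      have := key i (by omega) h'
      omega
    · rintro rfl; exact ⟨by omega, d1⟩
  · ext i
    simp only [mem_filter, mem_range, mem_singleton, mem_insert]
    constructor
    · rintro ⟨h, h'⟩
      have := key i (by omega) h'
      omega
    · rintro (rfl | rfl)
      · exact ⟨by omega, d1⟩
      · exact ⟨by omega, d2⟩
  · ext i
    simp only [mem_filter, mem_range, mem_singleton, mem_insert]
    constructor
    · rintro ⟨h, h'⟩
      exact key i (by omega) h'
    · rintro (rfl | rfl | rfl)
      · exact ⟨by omega, d1⟩
      · exact ⟨by omega, d2⟩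
      · exact ⟨by omega, d3⟩

lemma quad_link {m : ℕ} (hpm : p = 6*m+1) (hm : 1 ≤ m) (v : ZMod (p^3)) :
    8*((quadraticChar (ZMod p) (ZMod.castHom (dvd_pow_self p three_ne_zero) (ZMod p) v) : ℤ) : ZMod (p^3)) =
      15*v^(3*m)-10*v^(9*m)+3*v^(15*m) := by
  have hc2 : ringChar (ZMod p) ≠ 2 := by rw [ZMod.ringChar_zmod_n]; omega
  set c := ZMod.castHom (dvd_pow_self p three_ne_zero) (ZMod p) with hc
  have hπ : (p:ZMod (p^3))^3 = 0 := by
    have : ((p^3:ℕ):ZMod (p^3)) = 0 := ZMod.natCast_self _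
    exact_mod_cast this
  by_cases h0 : c v = 0
  · obtain ⟨z, hz⟩ := ker_cast three_ne_zero v h0
    have : ∀ k, v^(3*m+k) = 0 := by
      intro k
      rw [hz, mul_pow, show 3*m+k = 3+(3*m+k-3) by omega, pow_add (p:ZMod (p^3)), hπ]; ring
    rw [show 9*m = 3*m+6*m by ring, show 15*m = 3*m+12*m by ring, this, this, h0]
    have := this 0
    rw [add_zero] at this
    rw [this]; simp
  have hE := quadraticChar_eq_pow_of_char_ne_two' hc2 (c v)
  rw [ZMod.card, show p/2 = 3*m by omega] at hE
  set q := quadraticChar (ZMod p) (c v) with hq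
  obtain ⟨y, hy⟩ := ker_cast three_ne_zero (v^(3*m) - (q:ZMod (p^3))) (by
    rw [map_sub, map_pow, map_intCast, hE]; exact sub_self _)
  have h : (q:ZMod (p^3))^2 = 1 := by
    rcases quadraticChar_dichotomy h0 with h | h <;> rw [← hq] at h <;> rw [h] <;> simp
  have hv : v^(3*m) = q + p*y := by linear_combination hy
  rw [show 9*m = 3*m*3 by ring, show 15*m = 3*m*5 by ring, pow_mul v _ 3, pow_mul v _ 5, hv]
  generalize (q:ZMod (p^3)) = Q at *
  generalize (p:ZMod (p^3)) = P at *
  linear_combination -(Q*(3*Q^2-7) + 15*(Q^2-1)*P*y + 30*Q*(P*y)^2)*h - y^3*(-10+30*Q^2+15*Q*P*y+3*P^2*y^2)*hπ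

lemma jac_link {m : ℕ} (hpm : p = 6*m+1) (hm : 1 ≤ m) {x y : ℤ} (hxy : (p:ℤ) = x^2+3*y^2) :
    ∃ J K : ZMod (p^3), J*K = (p:ZMod (p^3)) ∧ (J+K)^2 = 4*(x:ZMod (p^3))^2 ∧
      8*J = ((6*m:ℕ):ZMod (p^3)) * (15*((3*m).choose m:ZMod (p^3)) - 10*(((9*m).choose (2*m):ZMod (p^3)) + ((9*m).choose m:ZMod (p^3)))
        +3*(((15*m).choose (2*m):ZMod (p^3)) + ((15*m).choose (8*m):ZMod (p^3)) + ((15*m).choose m:ZMod (p^3)))) := by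
  have hp : p.Prime := Fact.out
  obtain ⟨g, hg, h1, h2⟩ := gen_exists p
  obtain ⟨G, hG, hG1⟩ := lift_gen hpm hg
  obtain ⟨-, -, e3⟩ := NN_facts hpm hm hg h1 h2
  have e4 := NN_final hpm hm hg h1 h2 hxy
  set w := G^(4*m) with hw
  have hw3 : w^3 = 1 := by
    rw [hw, ← pow_mul, show 4*m*3 = 6*m*2 by ring, pow_mul, hG1, one_pow]
  have hw1 : IsUnit (w-1) := by
    apply unit_of_cast
    rw [map_sub, hw, map_pow, hG, map_one, Ne, sub_eq_zero, h1, show p-1 = 6*m by omega]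
    rintro ⟨c, hc⟩
    rcases c with _ | c
    · omega
    · have : 6*m*(c+1) = 6*m*c+6*m := by ring
      have := Nat.zero_le (6*m*c)
      omega
  have hw0 : w^2+w+1 = 0 := by
    apply hw1.mul_left_cancel
    linear_combination hw3
  have hJ := NN_comb (m := m) g w hw3
  have e3' := congrArg (Int.cast : ℤ → ZMod (p^3)) e3
  have e4' := congrArg (Int.cast : ℤ → ZMod (p^3)) e4
  push_cast at e3' e4'
  refine ⟨∑ k ∈ range (6*m), w^k * ((quadraticChar (ZMod p) (1 - g^k) : ℤ) : ZMod (p^3)),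
    NN p m g 0 + NN p m g 1 * w^2 + NN p m g 2 * w, ?_, ?_, ?_⟩
  · rw [hJ, ← e3']
    generalize (NN p m g 0 : ZMod (p^3)) = a at *
    generalize (NN p m g 1 : ZMod (p^3)) = b at *
    generalize (NN p m g 2 : ZMod (p^3)) = c at *
    have hw4 : w^4 = w := by linear_combination w*hw3
    linear_combination (b*c*hw4 + b^2*hw3+c^2*hw3 + (a*b + a*c + b*c)*hw0)
  · rw [hJ, ← e4']
    congr 1
    linear_combination (NN p m g 1 + NN p m g 2 : ZMod (p^3))*hw0
  · have ev2 : Even (2*m) := ⟨m, by ring⟩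
    have ev8 : Even (8*m) := ⟨4*m, by ring⟩
    have ev14 : Even (14*m) := ⟨7*m, by ring⟩
    have s1 := sum_D hpm h1 hG hG1 (3*m)
    have s2 := sum_D hpm h1 hG hG1 (9*m)
    have s3 := sum_D hpm h1 hG hG1 (15*m)
    obtain ⟨f1, f2, f3⟩ := filt (D := 0) hm
    rw [f1, sum_singleton, ev2.neg_one_pow, one_mul] at s1
    rw [f2, sum_insert (by simp; omega), sum_singleton, ev2.neg_one_pow, ev8.neg_one_pow, one_mul, one_mul] at s2
    rw [f3, sum_insert (by simp; omega), sum_insert (by simp; omega), sum_singleton, ev2.neg_one_pow, ev8.neg_one_pow,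
      ev14.neg_one_pow, one_mul, one_mul, one_mul] at s3
    rw [Nat.choose_symm_of_eq_add (show 3*m = 2*m+m by ring)] at s1
    rw [Nat.choose_symm_of_eq_add (show 9*m = 8*m+m by ring)] at s2
    rw [Nat.choose_symm_of_eq_add (show 15*m = 14*m+m by ring)] at s3
    have e : 8*∑ k ∈ range (6*m), w^k * ((quadraticChar (ZMod p) (1 - g^k) : ℤ) : ZMod (p^3)) =
        15*(∑ k ∈ range (6*m), w^k*(1-G^k)^(3*m)) - 10*(∑ k ∈ range (6*m), w^k*(1-G^k)^(9*m))
          + 3*(∑ k ∈ range (6*m), w^k*(1-G^k)^(15*m)) := by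
      simp only [mul_sum, ← sum_sub_distrib, ← sum_add_distrib]
      apply sum_congr rfl
      intro k _
      have := quad_link hpm hm (1-G^k)
      rw [map_sub, map_one, map_pow, hG] at this
      linear_combination w^k*this
    rw [e, s1, s2, s3]
    ring

end jlink


section binomials
open Finset

lemma o_inv {R : Type*} [CommRing R] (τ a b : R) (hτ : τ^3 = 0) :
    (1+a*τ+b*τ^2)*(1-a*τ+(a^2-b)*τ^2) = 1 := by
  linear_combination (a^3 - 2*a*b + (a^2*b-b^2)*τ)*hτ

lemma o_core {R : Type*} [CommRing R] (τ U u1 u2 u3 u4 u5 A1 A2 A3 B1 B2 B3 : R) (hτ : τ^3 = 0) (h27 : IsUnit (27:R))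
    (h2 : 3*u2*((1+12*A2*τ+144*B2*τ^2)*(36*τ-1)) = U*(1+12*A3*τ+144*B3*τ^2)*(2*(48*τ-1)))
    (h1 : 3*u1*((1+12*A1*τ+144*B1*τ^2)*(36*τ-1)) = U*(1+12*A3*τ+144*B3*τ^2)*(84*τ-1))
    (h5 : 9*u5*((1+24*A2*τ+576*B2*τ^2)*((60*τ-1)*(60*τ-3))) = U*(1+24*A3*τ+576*B3*τ^2)*(4*(84*τ-1)*(84*τ-4)))
    (h3 : 9*u3*((1+24*A1*τ+576*B1*τ^2)*((60*τ-1)*(60*τ-3))) = U*(1+24*A3*τ+576*B3*τ^2)*((156*τ-1)*(156*τ-7)))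
    (h4 : 9*u4*((1+12*A1*τ+144*B1*τ^2)*(1+12*A2*τ+144*B2*τ^2)*((60*τ-1)*(60*τ-3))) = U*(1+24*A3*τ+576*B3*τ^2)*(4*(84*τ-1)*(48*τ-1))) :
    (12*τ-1)*(15*U-10*(u1+u2)+3*(u3+u4+u5))*((1-2*A1*τ+4*B1*τ^2)*(1-4*A2*τ+16*B2*τ^2)) =
      -8*U*(1-6*A3*τ+36*B3*τ^2) := by
  have i1 := o_inv τ (12*A1) (144*B1) hτ
  have i2 := o_inv τ (12*A2) (144*B2) hτ
  have j1 := o_inv τ (24*A1) (576*B1) hτ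
  have j2 := o_inv τ (24*A2) (576*B2) hτ
  have d1 := o_inv τ (-36) 0 hτ
  have d2 := o_inv τ (-80) 1200 hτ
  have e2 : 3*u2 = U*(1+12*A3*τ+144*B3*τ^2)*(2*(1-48*τ))*(1-(12*A2)*τ+((12*A2)^2-144*B2)*τ^2)*(1-(-36)*τ+((-36)^2-0)*τ^2) := by
    linear_combination (-(1-(12*A2)*τ+((12*A2)^2-144*B2)*τ^2)*(1-(-36)*τ+((-36)^2-0)*τ^2))*h2 -3*u2*((1+-36*τ+0*τ^2)*(1-(-36)*τ+((-36)^2-0)*τ^2)) *i2 - 3*u2*d1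
  have e1 : 3*u1 = U*(1+12*A3*τ+144*B3*τ^2)*(1-84*τ)*(1-(12*A1)*τ+((12*A1)^2-144*B1)*τ^2)*(1-(-36)*τ+((-36)^2-0)*τ^2) := by
    linear_combination (-(1-(12*A1)*τ+((12*A1)^2-144*B1)*τ^2)*(1-(-36)*τ+((-36)^2-0)*τ^2))*h1 -3*u1*((1+-36*τ+0*τ^2)*(1-(-36)*τ+((-36)^2-0)*τ^2)) *i1 - 3*u1*d1
  have e5 : 27*u5 = U*(1+24*A3*τ+576*B3*τ^2)*(4*(84*τ-1)*(84*τ-4))*(1-(24*A2)*τ+((24*A2)^2-576*B2)*τ^2)*(1-(-80)*τ+((-80)^2-1200)*τ^2) := by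
    linear_combination ((1-(24*A2)*τ+((24*A2)^2-576*B2)*τ^2)*(1-(-80)*τ+((-80)^2-1200)*τ^2))*h5 -27*u5*((1+-80*τ+1200*τ^2)*(1-(-80)*τ+((-80)^2-1200)*τ^2)) *j2 - 27*u5*d2
  have e3 : 27*u3 = U*(1+24*A3*τ+576*B3*τ^2)*((156*τ-1)*(156*τ-7))*(1-(24*A1)*τ+((24*A1)^2-576*B1)*τ^2)*(1-(-80)*τ+((-80)^2-1200)*τ^2) := by
    linear_combination ((1-(24*A1)*τ+((24*A1)^2-576*B1)*τ^2)*(1-(-80)*τ+((-80)^2-1200)*τ^2))*h3 -27*u3*((1+-80*τ+1200*τ^2)*(1-(-80)*τ+((-80)^2-1200)*τ^2)) *j1 - 27*u3*d2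
  have e4 : 27*u4 = U*(1+24*A3*τ+576*B3*τ^2)*(4*(84*τ-1)*(48*τ-1))*(1-(12*A1)*τ+((12*A1)^2-144*B1)*τ^2)*(1-(12*A2)*τ+((12*A2)^2-144*B2)*τ^2)*(1-(-80)*τ+((-80)^2-1200)*τ^2) := by
    linear_combination ((1-(12*A1)*τ+((12*A1)^2-144*B1)*τ^2)*(1-(12*A2)*τ+((12*A2)^2-144*B2)*τ^2)*(1-(-80)*τ+((-80)^2-1200)*τ^2))*h4 -27*u4*((1+-80*τ+1200*τ^2)*(1-(-80)*τ+((-80)^2-1200)*τ^2))*((1+12*A2*τ+144*B2*τ^2)*(1-(12*A2)*τ+((12*A2)^2-144*B2)*τ^2))*i1 - 27*u4*((1+-80*τ+1200*τ^2)*(1-(-80)*τ+((-80)^2-1200)*τ^2))*i2 - 27*u4*d2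
  have e1' : 3*u1 = U*((1)+(-48)*τ+(12)*τ*A3+(-12)*τ*A1+(-1728)*τ^2+(144)*τ^2*B3+(-144)*τ^2*B1+(-576)*τ^2*A3+(576)*τ^2*A1+(-144)*τ^2*A1*A3+(144)*τ^2*A1^2) := by
    linear_combination e1 + U*((-108864)+(-6912)*B3+(6912)*B1+(-20736)*A3+(-1728)*A3*B1+(20736)*A1+(-1728)*A1*B3+(6912)*A1*A3+(-6912)*A1^2+(1728)*A1^2*A3+(-248832)*τ*B3+(248832)*τ*B1+(-20736)*τ*B1*B3+(-1306368)*τ*A3+(82944)*τ*A3*B1+(1306368)*τ*A1+(82944)*τ*A1*B3+(248832)*τ*A1*A3+(-248832)*τ*A1^2+(20736)*τ*A1^2*B3+(-82944)*τ*A1^2*A3+(-15676416)*τ^2*B3+(15676416)*τ^2*B1+(995328)*τ^2*B1*B3+(2985984)*τ^2*A3*B1+(2985984)*τ^2*A1*B3+(15676416)*τ^2*A1*A3+(-15676416)*τ^2*A1^2+(-995328)*τ^2*A1^2*B3+(-2985984)*τ^2*A1^2*A3+(35831808)*τ^3*B1*B3+(188116992)*τ^3*A3*B1+(188116992)*τ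^3*A1*B3+(-35831808)*τ^3*A1^2*B3+(-188116992)*τ^3*A1^2*A3+(2257403904)*τ^4*B1*B3+(-2257403904)*τ^4*A1^2*B3)*hτ
  have e2' : 3*u2 = U*((2)+(-24)*τ+(24)*τ*A3+(-24)*τ*A2+(-864)*τ^2+(288)*τ^2*B3+(-288)*τ^2*B2+(-288)*τ^2*A3+(288)*τ^2*A2+(-288)*τ^2*A2*A3+(288)*τ^2*A2^2) := by
    linear_combination e2 + U*((-124416)+(-3456)*B3+(3456)*B2+(-10368)*A3+(-3456)*A3*B2+(10368)*A2+(-3456)*A2*B3+(3456)*A2*A3+(-3456)*A2^2+(3456)*A2^2*A3+(-124416)*τ*B3+(124416)*τ*B2+(-41472)*τ*B2*B3+(-1492992)*τ*A3+(41472)*τ*A3*B2+(1492992)*τ*A2+(41472)*τ*A2*B3+(124416)*τ*A2*A3+(-124416)*τ*A2^2+(41472)*τ*A2^2*B3+(-41472)*τ*A2^2*A3+(-17915904)*τ^2*B3+(17915904)*τ^2*B2+(497664)*τ^2*B2*B3+(1492992)*τ^2*A3*B2+(1492992)*τ^2*A2*B3+(17915904)*τ^2*A2*A3+(-17915904)*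τ^2*A2^2+(-497664)*τ^2*A2^2*B3+(-1492992)*τ^2*A2^2*A3+(17915904)*τ^3*B2*B3+(214990848)*τ^3*A3*B2+(214990848)*τ^3*A2*B3+(-17915904)*τ^3*A2^2*B3+(-214990848)*τ^3*A2^2*A3+(2579890176)*τ^4*B2*B3+(-2579890176)*τ^4*A2^2*B3)*hτ
  have e5' : 27*u5 = U*((16)+(-400)*τ+(384)*τ*A3+(-384)*τ*A2+(-22976)*τ^2+(9216)*τ^2*B3+(-9216)*τ^2*B2+(-9600)*τ^2*A3+(9600)*τ^2*A2+(-9216)*τ^2*A2*A3+(9216)*τ^2*A2^2) := by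
    linear_combination e5 + U*((-6478080)+(-230400)*B3+(230400)*B2+(-551424)*A3+(-221184)*A3*B2+(551424)*A2+(-221184)*A2*B3+(230400)*A2*A3+(-230400)*A2^2+(221184)*A2^2*A3+(146764800)*τ+(-13234176)*τ*B3+(13234176)*τ*B2+(-5308416)*τ*B2*B3+(-155473920)*τ*A3+(5529600)*τ*A3*B2+(155473920)*τ*A2+(5529600)*τ*A2*B3+(13234176)*τ*A2*A3+(-13234176)*τ*A2^2+(5308416)*τ*A2^2*B3+(-5529600)*τ*A2^2*A3+(-3731374080)*τ^2*B3+(3731374080)*τ^2*B2+(132710400)*τ^2*B2*B3+(3522355200)*τ^2*A3+(317620224)*τ^2*A3*B2+(-3522355200)*τ^2*A2+(317620224)*τ^2*A2*B3+(3731374080)*τ^2*A2*A3+(-3731374080)*τ^2*A2^2+(-132710400)*τ^2*A2^2*B3+(-317620224)*τ^2*A2^2*A3+(84536524800)*τ^3*B3+(-84536524800)*τ^3*B2+(7622885376)*τ^3*B2*B3+(89552977920)*τ^3*A3*B2+(89552977920)*τ^3*A2*B3+(-84536524800)*τ^3*A2*A3+(84536524800)*τ^3*A2^2+(-7622885376)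*τ^3*A2^2*B3+(-89552977920)*τ^3*A2^2*A3+(2149271470080)*τ^4*B2*B3+(-2028876595200)*τ^4*A3*B2+(-2028876595200)*τ^4*A2*B3+(-2149271470080)*τ^4*A2^2*B3+(2028876595200)*τ^4*A2^2*A3+(-48693038284800)*τ^5*B2*B3+(48693038284800)*τ^5*A2^2*B3)*hτ
  have e3' : 27*u3 = U*((7)+(-688)*τ+(168)*τ*A3+(-168)*τ*A1+(-39104)*τ^2+(4032)*τ^2*B3+(-4032)*τ^2*B1+(-16512)*τ^2*A3+(16512)*τ^2*A1+(-4032)*τ^2*A1*A3+(4032)*τ^2*A1^2) := by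
    linear_combination e3 + U*((-4542720)+(-396288)*B3+(396288)*B1+(-938496)*A3+(-96768)*A3*B1+(938496)*A1+(-96768)*A1*B3+(396288)*A1*A3+(-396288)*A1^2+(96768)*A1^2*A3+(126547200)*τ+(-22523904)*τ*B3+(22523904)*τ*B1+(-2322432)*τ*B1*B3+(-109025280)*τ*A3+(9510912)*τ*A3*B1+(109025280)*τ*A1+(9510912)*τ*A1*B3+(22523904)*τ*A1*A3+(-22523904)*τ*A1^2+(2322432)*τ*A1^2*B3+(-9510912)*τ*A1^2*A3+(-2616606720)*τ^2*B3+(2616606720)*τ^2*B1+(228261888)*τ^2*B1*B3+(3037132800)*τ^2*A3+(540573696)*τ^2*A3*B1+(-3037132800)*τ^2*A1+(540573696)*τ^2*A1*B3+(2616606720)*τ^2*A1*A3+(-2616606720)*τ^2*A1^2+(-228261888)*τ^2*A1^2*B3+(-540573696)*τ^2*A1^2*A3+(72891187200)*τ^3*B3+(-72891187200)*τ^3*B1+(12973768704)*τ^3*B1*B3+(62798561280)*τ^3*A3*B1+(62798561280)*τ^3*A1*B3+(-72891187200)*τ^3*A1*A3+(72891187200)*τ^3*A1^2+(-12973768704)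*τ^3*A1^2*B3+(-62798561280)*τ^3*A1^2*A3+(1507165470720)*τ^4*B1*B3+(-1749388492800)*τ^4*A3*B1+(-1749388492800)*τ^4*A1*B3+(-1507165470720)*τ^4*A1^2*B3+(1749388492800)*τ^4*A1^2*A3+(-41985323827200)*τ^5*B1*B3+(41985323827200)*τ^5*A1^2*B3)*hτ
  have e4' : 27*u4 = U*((4)+(-208)*τ+(96)*τ*A3+(-48)*τ*A2+(-48)*τ*A1+(-5312)*τ^2+(2304)*τ^2*B3+(-576)*τ^2*B2+(-576)*τ^2*B1+(-4992)*τ^2*A3+(2496)*τ^2*A2+(-1152)*τ^2*A2*A3+(576)*τ^2*A2^2+(2496)*τ^2*A1+(-1152)*τ^2*A1*A3+(576)*τ^2*A1*A2+(576)*τ^2*A1^2) := by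
    linear_combination e4 + U*((-1455360)+(-119808)*B3+(29952)*B2+(29952)*B1+(-127488)*A3+(-13824)*A3*B2+(-13824)*A3*B1+(63744)*A2+(-27648)*A2*B3+(6912)*A2*B1+(59904)*A2*A3+(-29952)*A2^2+(13824)*A2^2*A3+(63744)*A1+(-27648)*A1*B3+(6912)*A1*B2+(59904)*A1*A3+(-29952)*A1*A2+(13824)*A1*A2*A3+(-6912)*A1*A2^2+(-29952)*A1^2+(13824)*A1^2*A3+(-6912)*A1^2*A2+(83865600)*τ+(-3059712)*τ*B3+(764928)*τ*B2+(-331776)*τ*B2*B3+(764928)*τ*B1+(-331776)*τ*B1*B3+(82944)*τ*B1*B2+(-34928640)*τ*A3+(718848)*τ*A3*B2+(718848)*τ*A3*B1+(17464320)*τ*A2+(1437696)*τ*A2*B3+(-359424)*τ*A2*B1+(1529856)*τ*A2*A3+(165888)*τ*A2*A3*B1+(-764928)*τ*A2^2+(331776)*τ*A2^2*B3+(-82944)*τ*A2^2*B1+(-718848)*τ*A2^2*A3+(17464320)*τ*A1+(1437696)*τ*A1*B3+(-359424)*τ*A1*B2+(1529856)*τ*A1*A3+(165888)*τ*A1*A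3*B2+(-764928)*τ*A1*A2+(331776)*τ*A1*A2*B3+(-718848)*τ*A1*A2*A3+(359424)*τ*A1*A2^2+(-165888)*τ*A1*A2^2*A3+(-764928)*τ*A1^2+(331776)*τ*A1^2*B3+(-82944)*τ*A1^2*B2+(-718848)*τ*A1^2*A3+(359424)*τ*A1^2*A2+(-165888)*τ*A1^2*A2*A3+(82944)*τ*A1^2*A2^2+(-838287360)*τ^2*B3+(209571840)*τ^2*B2+(17252352)*τ^2*B2*B3+(209571840)*τ^2*B1+(17252352)*τ^2*B1*B3+(-4313088)*τ^2*B1*B2+(2012774400)*τ^2*A3+(18358272)*τ^2*A3*B2+(18358272)*τ^2*A3*B1+(1990656)*τ^2*A3*B1*B2+(-1006387200)*τ^2*A2+(36716544)*τ^2*A2*B3+(-9179136)*τ^2*A2*B1+(3981312)*τ^2*A2*B1*B3+(419143680)*τ^2*A2*A3+(-8626176)*τ^2*A2*A3*B1+(-209571840)*τ^2*A2^2+(-17252352)*τ^2*A2^2*B3+(4313088)*τ^2*A2^2*B1+(-18358272)*τ^2*A2^2*A3+(-1990656)*τ^2*A2^2*A3*B1+(-1006387200)*τ^2*A1+(3671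6544)*τ^2*A1*B3+(-9179136)*τ^2*A1*B2+(3981312)*τ^2*A1*B2*B3+(419143680)*τ^2*A1*A3+(-8626176)*τ^2*A1*A3*B2+(-209571840)*τ^2*A1*A2+(-17252352)*τ^2*A1*A2*B3+(-18358272)*τ^2*A1*A2*A3+(9179136)*τ^2*A1*A2^2+(-3981312)*τ^2*A1*A2^2*B3+(8626176)*τ^2*A1*A2^2*A3+(-209571840)*τ^2*A1^2+(-17252352)*τ^2*A1^2*B3+(4313088)*τ^2*A1^2*B2+(-18358272)*τ^2*A1^2*A3+(-1990656)*τ^2*A1^2*A3*B2+(9179136)*τ^2*A1^2*A2+(-3981312)*τ^2*A1^2*A2*B3+(8626176)*τ^2*A1^2*A2*A3+(-4313088)*τ^2*A1^2*A2^2+(1990656)*τ^2*A1^2*A2^2*A3+(48306585600)*τ^3*B3+(-12076646400)*τ^3*B2+(440598528)*τ^3*B2*B3+(-12076646400)*τ^3*B1+(440598528)*τ^3*B1*B3+(-110149632)*τ^3*B1*B2+(47775744)*τ^3*B1*B2*B3+(5029724160)*τ^3*A3*B2+(5029724160)*τ^3*A3*B1+(-103514112)*τ^3*A3*B1*B2+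(10059448320)*τ^3*A2*B3+(-2514862080)*τ^3*A2*B1+(-207028224)*τ^3*A2*B1*B3+(-24153292800)*τ^3*A2*A3+(-220299264)*τ^3*A2*A3*B1+(12076646400)*τ^3*A2^2+(-440598528)*τ^3*A2^2*B3+(110149632)*τ^3*A2^2*B1+(-47775744)*τ^3*A2^2*B1*B3+(-5029724160)*τ^3*A2^2*A3+(103514112)*τ^3*A2^2*A3*B1+(10059448320)*τ^3*A1*B3+(-2514862080)*τ^3*A1*B2+(-207028224)*τ^3*A1*B2*B3+(-24153292800)*τ^3*A1*A3+(-220299264)*τ^3*A1*A3*B2+(12076646400)*τ^3*A1*A2+(-440598528)*τ^3*A1*A2*B3+(-5029724160)*τ^3*A1*A2*A3+(2514862080)*τ^3*A1*A2^2+(207028224)*τ^3*A1*A2^2*B3+(220299264)*τ^3*A1*A2^2*A3+(12076646400)*τ^3*A1^2+(-440598528)*τ^3*A1^2*B3+(110149632)*τ^3*A1^2*B2+(-47775744)*τ^3*A1^2*B2*B3+(-5029724160)*τ^3*A1^2*A3+(103514112)*τ^3*A1^2*A3*B2+(2514862080)*τ^3*A1^2*A2+(207028224)*τ^3*A1^2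*A2*B3+(220299264)*τ^3*A1^2*A2*A3+(-110149632)*τ^3*A1^2*A2^2+(47775744)*τ^3*A1^2*A2^2*B3+(-103514112)*τ^3*A1^2*A2^2*A3+(120713379840)*τ^4*B2*B3+(120713379840)*τ^4*B1*B3+(-30178344960)*τ^4*B1*B2+(-2484338688)*τ^4*B1*B2*B3+(-289839513600)*τ^4*A3*B2+(-289839513600)*τ^4*A3*B1+(-2643591168)*τ^4*A3*B1*B2+(-579679027200)*τ^4*A2*B3+(144919756800)*τ^4*A2*B1+(-5287182336)*τ^4*A2*B1*B3+(-60356689920)*τ^4*A2*A3*B1+(-120713379840)*τ^4*A2^2*B3+(30178344960)*τ^4*A2^2*B1+(2484338688)*τ^4*A2^2*B1*B3+(289839513600)*τ^4*A2^2*A3+(2643591168)*τ^4*A2^2*A3*B1+(-579679027200)*τ^4*A1*B3+(144919756800)*τ^4*A1*B2+(-5287182336)*τ^4*A1*B2*B3+(-60356689920)*τ^4*A1*A3*B2+(-120713379840)*τ^4*A1*A2*B3+(289839513600)*τ^4*A1*A2*A3+(-144919756800)*τ^4*A1*A2^2+(5287182336)*τ^4*A1*A2^2*B3+(60356689920)*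τ^4*A1*A2^2*A3+(-120713379840)*τ^4*A1^2*B3+(30178344960)*τ^4*A1^2*B2+(2484338688)*τ^4*A1^2*B2*B3+(289839513600)*τ^4*A1^2*A3+(2643591168)*τ^4*A1^2*A3*B2+(-144919756800)*τ^4*A1^2*A2+(5287182336)*τ^4*A1^2*A2*B3+(60356689920)*τ^4*A1^2*A2*A3+(-30178344960)*τ^4*A1^2*A2^2+(-2484338688)*τ^4*A1^2*A2^2*B3+(-2643591168)*τ^4*A1^2*A2^2*A3+(-6956148326400)*τ^5*B2*B3+(-6956148326400)*τ^5*B1*B3+(1739037081600)*τ^5*B1*B2+(-63446188032)*τ^5*B1*B2*B3+(-724280279040)*τ^5*A3*B1*B2+(-1448560558080)*τ^5*A2*B1*B3+(3478074163200)*τ^5*A2*A3*B1+(6956148326400)*τ^5*A2^2*B3+(-1739037081600)*τ^5*A2^2*B1+(63446188032)*τ^5*A2^2*B1*B3+(724280279040)*τ^5*A2^2*A3*B1+(-1448560558080)*τ^5*A1*B2*B3+(3478074163200)*τ^5*A1*A3*B2+(6956148326400)*τ^5*A1*A2*B3+(1448560558080)*τ^5*A1*A2^2*B3+(-3478074163200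)*τ^5*A1*A2^2*A3+(6956148326400)*τ^5*A1^2*B3+(-1739037081600)*τ^5*A1^2*B2+(63446188032)*τ^5*A1^2*B2*B3+(724280279040)*τ^5*A1^2*A3*B2+(1448560558080)*τ^5*A1^2*A2*B3+(-3478074163200)*τ^5*A1^2*A2*A3+(1739037081600)*τ^5*A1^2*A2^2+(-63446188032)*τ^5*A1^2*A2^2*B3+(-724280279040)*τ^5*A1^2*A2^2*A3+(-17382726696960)*τ^6*B1*B2*B3+(41736889958400)*τ^6*A3*B1*B2+(83473779916800)*τ^6*A2*B1*B3+(17382726696960)*τ^6*A2^2*B1*B3+(-41736889958400)*τ^6*A2^2*A3*B1+(83473779916800)*τ^6*A1*B2*B3+(-83473779916800)*τ^6*A1*A2^2*B3+(17382726696960)*τ^6*A1^2*B2*B3+(-41736889958400)*τ^6*A1^2*A3*B2+(-83473779916800)*τ^6*A1^2*A2*B3+(-17382726696960)*τ^6*A1^2*A2^2*B3+(41736889958400)*τ^6*A1^2*A2^2*A3+(1001685359001600)*τ^7*B1*B2*B3+(-1001685359001600)*τ^7*A2^2*B1*B3+(-1001685359001600)*τ^7*A1^2*B2*B3+(1001685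359001600)*τ^7*A1^2*A2^2*B3)*hτ
  have k1 : (12*τ-1)*(15*27*U-10*9*(3*u1+3*u2)+3*(27*u3+27*u4+27*u5)) = U*((-216)+(1296)*τ*A3+(-864)*τ*A2+(-432)*τ*A1+(-7776)*τ^2*B3+(3456)*τ^2*B2+(864)*τ^2*B1+(5184)*τ^2*A2*A3+(-3456)*τ^2*A2^2+(2592)*τ^2*A1*A3+(-1728)*τ^2*A1*A2+(-864)*τ^2*A1^2) := by
    rw [e1', e2', e3', e4', e5']
    linear_combination U*((373248)+(93312)*B3+(-41472)*B2+(-10368)*B1+(-186624)*A3+(124416)*A2+(-62208)*A2*A3+(41472)*A2^2+(62208)*A1+(-31104)*A1*A3+(20736)*A1*A2+(10368)*A1^2)*hτ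
  have k2 : (1-2*A1*τ+4*B1*τ^2)*(1-4*A2*τ+16*B2*τ^2) = (1)+(-4)*τ*A2+(-2)*τ*A1+(16)*τ^2*B2+(4)*τ^2*B1+(8)*τ^2*A1*A2 := by
    linear_combination ((-16)*A2*B1+(-32)*A1*B2+(64)*τ*B1*B2)*hτ
  have key : (12*τ-1)*(15*27*U-10*9*(3*u1+3*u2)+3*(27*u3+27*u4+27*u5))*((1-2*A1*τ+4*B1*τ^2)*(1-4*A2*τ+16*B2*τ^2)) =
      27*(-8*U*(1-6*A3*τ+36*B3*τ^2)) := by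
    rw [k1, k2]
    linear_combination U*((20736)*A3*B2+(5184)*A3*B1+(31104)*A2*B3+(-27648)*A2*B2+(-6912)*A2*B1+(-20736)*A2^2*A3+(13824)*A2^3+(15552)*A1*B3+(-13824)*A1*B2+(-3456)*A1*B1+(-10368)*A1*A2*A3+(6912)*A1*A2^2+(-5184)*A1^2*A3+(3456)*A1^2*A2+(1728)*A1^3+(-124416)*τ*B2*B3+(55296)*τ*B2^2+(-31104)*τ*B1*B3+(27648)*τ*B1*B2+(3456)*τ*B1^2+(82944)*τ*A2*A3*B2+(20736)*τ*A2*A3*B1+(-55296)*τ*A2^2*B2+(-13824)*τ*A2^2*B1+(41472)*τ*A1*A3*B2+(10368)*τ*A1*A3*B1+(-62208)*τ*A1*A2*B3+(41472)*τ*A1*A2^2*A3+(-27648)*τ*A1*A2^3+(-13824)*τ*A1^2*B2+(-3456)*τ*A1^2*B1+(20736)*τ*A1^2*A2*A3+(-13824)*τ*A1^2*A2^2+(-6912)*τ*A1^3*A2)*hτ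
  apply h27.mul_left_cancel
  linear_combination key

end binomials


section binomials2
open Finset

lemma bin_FF {R : Type*} [CommRing R] (a r : ℕ) : ((a+r).choose r : R) * (r.factorial:R) = FF r (a:R) := by
  induction r with
  | zero => simp [FF_zero]
  | succ r ih =>
    rw [FF_succ, ← ih, Nat.factorial_succ]
    have h := congrArg (Nat.cast : ℕ → R) (Nat.add_one_mul_choose_eq (a+r) r)
    push_cast at h ⊢
    rw [← add_assoc]
    linear_combination -(r.factorial:R)*h

lemma FF_sh1 {R : Type*} [CommRing R] (r s : ℕ) (q : R) :
    FF s ((r:R)+q-1) * FF r q * (r+s+q) = FF (r+s) q * (r+q) := by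
  have h1 := FF_shift s ((r:R)+q)
  rw [FF_add, add_comm q]
  linear_combination FF r q*h1

lemma FF_sh2 {R : Type*} [CommRing R] (r s : ℕ) (q : R) :
    FF s ((r:R)+q-2) * FF r q * ((r+s+q)*(r+s+q-1)) = FF (r+s) q * ((r+q)*(r+q-1)) := by
  have h1 := FF_sh1 r s q
  have h2 := FF_shift s ((r:R)+q-1)
  rw [show (r:R)+q-1-1 = r+q-2 by ring] at h2
  linear_combination FF r q*(r+s+q)*h2 + (r+q-1)*h1

lemma bin_mid {m p : ℕ} (hpm : p = 6*m+1) (hm : 1 ≤ m) {R : Type*} [CommRing R] :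
    ((15*m).choose (8*m) : R) * (FF m (p:R) * FF (2*m) (p:R)) * ((3*m+2*p)*(3*m+2*p-1)) =
      2*((2*p-1).choose (p-1):R) * FF (3*m) (2*(p:R)) * ((m+p)*(2*m+p)) := by
  have key : ((15*m).choose (8*m) : ℤ) * (FF m (p:ℤ) * FF (2*m) (p:ℤ)) * ((3*m+2*p)*(3*m+2*p-1)) =
      2*((2*p-1).choose (p-1):ℤ) * FF (3*m) (2*(p:ℤ)) * ((m+p)*(2*m+p)) := by
    have f : ∀ a b : ℕ, ((a+b).factorial:ℤ) = a.factorial * FF b (a:ℤ) := by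
      intro a b
      rw [← FF_fact, ← FF_fact, FF_add, zero_add]
    have a1 := f p m
    have a2 := f p (2*m)
    have a3 := f (2*p) (3*m)
    rw [show p+m = 7*m+1 by omega, Nat.factorial_succ] at a1
    rw [show p+2*m = 8*m+1 by omega, Nat.factorial_succ] at a2
    rw [show 2*p+3*m = 15*m+1+1 by omega, Nat.factorial_succ, Nat.factorial_succ] at a3
    have b1 := congrArg (Nat.cast : ℕ → ℤ) (Nat.choose_mul_factorial_mul_factorial (show 8*m ≤ 15*m by omega))
    rw [show 15*m-8*m = 7*m by omega] at b1
    have b2 := congrArg (Nat.cast : ℕ → ℤ) (Nat.choose_mul_factorial_mul_factorial (show p-1 ≤ 2*p-1 by omega))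
    rw [show 2*p-1-(p-1) = p by omega] at b2
    have b3 : ((2*p).factorial:ℤ) = 2*p*(2*p-1).factorial := by
      rw [← Nat.mul_factorial_pred (show 2*p ≠ 0 by omega)]; push_cast; ring
    have b4 : (p.factorial:ℤ) = p*(p-1).factorial := by
      rw [← Nat.mul_factorial_pred (show p ≠ 0 by omega)]; push_cast; ring
    have hP : (p:ℤ) = 6*m+1 := by rw [hpm]; push_cast; ring
    have hne : ((p.factorial:ℤ))^2 ≠ 0 := pow_ne_zero _ (by exact_mod_cast Nat.factorial_ne_zero p)
    apply mul_left_cancel₀ hne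
    push_cast at a1 a2 a3 b1 b2
    generalize FF m (p:ℤ) = x1 at *
    generalize FF (2*m) (p:ℤ) = x2 at *
    generalize FF (3*m) (2*(p:ℤ)) = x3 at *
    generalize ((15*m).choose (8*m):ℤ) = c1 at *
    generalize ((2*p-1).choose (p-1):ℤ) = c2 at *
    generalize ((7*m).factorial:ℤ) = y1 at *
    generalize ((8*m).factorial:ℤ) = y2 at *
    generalize ((15*m).factorial:ℤ) = y3 at *
    generalize (p.factorial:ℤ) = z at *
    generalize ((p-1).factorial:ℤ) = z1 at *
    generalize ((2*p).factorial:ℤ) = w at *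
    generalize ((2*p-1).factorial:ℤ) = w1 at *
    generalize (m:ℤ) = M at *
    generalize (p:ℤ) = P at *
    have hw : w = 2*c2*z^2 := by linear_combination b3 - 2*P*b2 - 2*c2*z*b4
    rw [hP]
    linear_combination -c1*(15*M+2)*(15*M+1)*z*x2*a1 - c1*(15*M+2)*(15*M+1)*(7*M+1)*y1*a2
      + (15*M+2)*(15*M+1)*(7*M+1)*(8*M+1)*b1 + (7*M+1)*(8*M+1)*a3 + x3*(7*M+1)*(8*M+1)*hw
  have := congrArg (Int.cast : ℤ → R) key
  have hc : ∀ (r : ℕ) (x : ℤ), ((FF r x : ℤ) : R) = FF r (x:R) := by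
    intro r x; simp [FF]
  push_cast [hc] at this
  exact this

variable {p : ℕ} [Fact p.Prime]

lemma b_ident {m : ℕ} (hpm : p = 6*m+1) (hm : 1 ≤ m) (τ : ZMod (p^3)) (h12 : 12*τ = (p:ZMod (p^3))) (hτ : τ^3 = 0) :
    ((6*m:ℕ):ZMod (p^3)) * (15*((3*m).choose m:ZMod (p^3)) - 10*(((9*m).choose (2*m):ZMod (p^3)) + ((9*m).choose m:ZMod (p^3)))
        +3*(((15*m).choose (2*m):ZMod (p^3)) + ((15*m).choose (8*m):ZMod (p^3)) + ((15*m).choose m:ZMod (p^3)))) *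
      (FF (2*m) ((-4)*τ) * FF m ((-2)*τ)) = -8 * FF (3*m) ((-6)*τ) ∧ IsUnit (FF (3*m) ((-6)*τ)) := by
  have hp3 : 3 < p := by omega
  obtain ⟨B1, -, hF1⟩ := FF_exp (R := ZMod (p^3)) m (fun j hj => u_small j (by omega))
  obtain ⟨B2, -, hF2⟩ := FF_exp (R := ZMod (p^3)) (2*m) (fun j hj => u_small j (by omega))
  obtain ⟨B3, -, hF3⟩ := FF_exp (R := ZMod (p^3)) (3*m) (fun j hj => u_small j (by omega))
  have k1 := fact_unit (R := ZMod (p^3)) m (fun j hj => u_small j (by omega))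
  have k2 := fact_unit (R := ZMod (p^3)) (2*m) (fun j hj => u_small j (by omega))
  have k3 := fact_unit (R := ZMod (p^3)) (3*m) (fun j hj => u_small j (by omega))
  have u3 : IsUnit (3:ZMod (p^3)) := by
    have := nat_unit' (p := p) (r := 3) (k := 3) (by norm_num) (by omega)
    exact_mod_cast this
  have u2 : IsUnit (2:ZMod (p^3)) := two_unit (by omega)
  have u27 : IsUnit (27:ZMod (p^3)) := by
    have := u3.pow 3
    norm_num at this; exact this
  have hmτ : 6*(m:ZMod (p^3)) = 12*τ-1 := by
    rw [h12]
    have : (p:ZMod (p^3)) = ((6*m+1:ℕ):ZMod (p^3)) := congrArg _ hpm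
    rw [this]; push_cast; ring
  have c1 : ((2*p-1).choose (p-1):ZMod (p^3)) = 1 := by
    have h := bin_FF (R := ZMod (p^3)) p (p-1)
    have h' := FF_top (p := p) (r := 3) (by norm_num) (by norm_num) hp3 1
    rw [one_mul] at h'
    rw [h', show p+(p-1) = 2*p-1 by omega] at h
    exact (fact_unit (R := ZMod (p^3)) (p-1) u_small).mul_right_cancel (by rw [h, one_mul])
  have r0 := congrArg (Nat.cast : ℕ → ZMod (p^3)) (Nat.choose_mul_factorial_mul_factorial (show m ≤ 3*m by omega))
  rw [show 3*m-m = 2*m by omega] at r0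
  have r4 := bin_mid hpm hm (R := ZMod (p^3))
  rw [c1] at r4
  have r2 := FF_sh1 (2*m) m (p:ZMod (p^3))
  have r1 := FF_sh1 m (2*m) (p:ZMod (p^3))
  have r5 := FF_sh2 (2*m) m (2*(p:ZMod (p^3)))
  have r3 := FF_sh2 m (2*m) (2*(p:ZMod (p^3)))
  have cc : (p:ZMod (p^3)) = 6*m+1 := by rw [← h12]; linear_combination -hmτ
  rw [show ((2*m:ℕ):ZMod (p^3))+p-1 = ((8*m:ℕ):ZMod (p^3)) by push_cast; linear_combination cc, ← bin_FF,
    show 8*m+m = 9*m by ring, show 2*m+m=3*m by ring] at r2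
  rw [show (m:ZMod (p^3))+p-1 = ((7*m:ℕ):ZMod (p^3)) by push_cast; linear_combination cc, ← bin_FF,
    show 7*m+2*m = 9*m by ring, show m+2*m=3*m by ring] at r1
  rw [show ((2*m:ℕ):ZMod (p^3))+2*p-2 = ((14*m:ℕ):ZMod (p^3)) by push_cast; linear_combination 2*cc, ← bin_FF,
    show 14*m+m = 15*m by ring, show 2*m+m=3*m by ring] at r5
  rw [show (m:ZMod (p^3))+2*p-2 = ((13*m:ℕ):ZMod (p^3)) by push_cast; linear_combination 2*cc, ← bin_FF,
    show 13*m+2*m = 15*m by ring, show m+2*m=3*m by ring] at r3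
  push_cast at r0 r1 r2 r3 r4 r5 ⊢
  rw [← h12] at r1 r2 r3 r4 r5
  rw [← mul_assoc 2 (12:ZMod (p^3)), show (2:ZMod (p^3))*12 = 24 by norm_num] at r3 r4 r5
  simp only [hF1 τ _ hτ, hF2 τ _ hτ, hF3 τ _ hτ] at r1 r2 r3 r4 r5 ⊢
  rw [hmτ]
  generalize (m.factorial:ZMod (p^3)) = K1 at *
  generalize ((2*m).factorial:ZMod (p^3)) = K2 at *
  generalize ((3*m).factorial:ZMod (p^3)) = K3 at *
  generalize HH (ZMod (p^3)) m = A1 at *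
  generalize HH (ZMod (p^3)) (2*m) = A2 at *
  generalize HH (ZMod (p^3)) (3*m) = A3 at *
  generalize ((3*m).choose m:ZMod (p^3)) = U at *
  generalize ((9*m).choose m:ZMod (p^3)) = v2 at *
  generalize ((9*m).choose (2*m):ZMod (p^3)) = v1 at *
  generalize ((15*m).choose m:ZMod (p^3)) = v5 at *
  generalize ((15*m).choose (2*m):ZMod (p^3)) = v3 at *
  generalize ((15*m).choose (8*m):ZMod (p^3)) = v4 at *
  generalize (m:ZMod (p^3)) = M at *
  have k12 := k1.mul k2
  subst r0
  have d : 4*((3*M+24*τ)*(3*M+24*τ-1)) = (60*τ-1)*(60*τ-3) := by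
    linear_combination (6*M+12*τ-1+96*τ-2)*hmτ
  have d5 : 9*((2*M+24*τ)*(2*M+24*τ-1)) = (84*τ-1)*(84*τ-4) := by
    linear_combination (6*M+12*τ-1+144*τ-3)*hmτ
  have d3 : 36*((M+24*τ)*(M+24*τ-1)) = (156*τ-1)*(156*τ-7) := by
    linear_combination (6*M+12*τ-1+288*τ-6)*hmτ
  have d4 : 18*((M+12*τ)*(2*M+12*τ)) = (84*τ-1)*(48*τ-1) := by
    linear_combination (6*M+12*τ-1+108*τ)*hmτ
  constructor
  · have := o_core τ U v1 v2 v3 v4 v5 A1 A2 A3 B1 B2 B3 hτ u27 ?_ ?_ ?_ ?_ ?_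
    · linear_combination K1*K2*this
    · apply k12.mul_left_cancel
      linear_combination 6*r2 - 3*K1*K2*v2*(1+12*A2*τ+144*B2*τ^2)*hmτ + 2*K1*K2*U*(1+12*A3*τ+144*B3*τ^2)*hmτ
    · apply k12.mul_left_cancel
      linear_combination 6*r1 - 3*K1*K2*v1*(1+12*A1*τ+144*B1*τ^2)*hmτ + K1*K2*U*(1+12*A3*τ+144*B3*τ^2)*hmτ
    · apply k12.mul_left_cancel
      linear_combination 36*r5 - 9*K1*K2*v5*(1+24*A2*τ+576*B2*τ^2)*d + 4*K1*K2*U*(1+24*A3*τ+576*B3*τ^2)*d5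
    · apply k12.mul_left_cancel
      linear_combination 36*r3 - 9*K1*K2*v3*(1+24*A1*τ+576*B1*τ^2)*d + K1*K2*U*(1+24*A3*τ+576*B3*τ^2)*d3
    · apply k12.mul_left_cancel
      linear_combination 36*r4 - 9*K1*K2*v4*((1+12*A1*τ+144*B1*τ^2)*(1+12*A2*τ+144*B2*τ^2))*d + 4*K1*K2*U*(1+24*A3*τ+576*B3*τ^2)*d4
  · apply k3.mul
    have := o_inv τ (-6*A3) (36*B3) hτ
    exact IsUnit.of_mul_eq_one (1 - -6 * A3 * τ + ((-6 * A3) ^ 2 - 36 * B3) * τ ^ 2) (by linear_combination this)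

end binomials2


section final
open Finset
variable {p : ℕ} [Fact p.Prime]

lemma s_core {R : Type*} [CommRing R] (π J K W U3 s0 X : R) (hπ : π^3 = 0) (h8 : IsUnit (8:R)) (hJK : J*K = π)
    (hX : (J+K)^2 = 4*X^2) (hb : 8*J*W = -8*U3) (hU : IsUnit U3) (hs : s0*W^2 = U3^2) :
    s0 = 4*X^2-2*π-K^2 ∧ K^2*(4*X^2) = π^2 ∧ K^2*s0 = π^2 ∧ IsUnit s0 := by
  have h1 : J*W = -U3 := by
    apply h8.mul_left_cancel
    linear_combination hb
  have hJW : IsUnit (J*W) := by rw [h1]; exact hU.neg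
  have hJ : IsUnit J := isUnit_of_mul_isUnit_left hJW
  have hW : IsUnit W := isUnit_of_mul_isUnit_right hJW
  have hs0 : s0 = J^2 := by
    apply (hW.pow 2).mul_right_cancel
    rw [hs]; linear_combination -(J*W-U3)*h1
  obtain ⟨j, hj⟩ := hJ.exists_right_inv
  have hK : K = j*π := by linear_combination j*hJK - K*hj
  refine ⟨by rw [hs0]; linear_combination hX - 2*hJK, ?_, ?_, ?_⟩
  · rw [← hX]
    have e1 : K^2*π = 0 := by rw [hK]; linear_combination j^2*hπ
    have e2 : K^4 = 0 := by rw [hK]; linear_combination j^4*π*hπ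
    linear_combination (J*K+π)*hJK + 2*K^2*hJK + 2*e1 + e2
  · rw [hs0]; linear_combination (J*K+π)*hJK
  · rw [hs0]; exact hJ.pow 2

lemma case1 (hp3 : 3 < p) (h3 : p % 3 = 1) {x y : ℤ} (hxy : (p:ℤ) = x^2+3*y^2) :
    ratCongr p 3 (SS p 2) (4/9*(x:ℚ)^2 - 5/9*(p:ℚ) + (p:ℚ)^2/(36*(x:ℚ)^2)) ∧
    ratCongr p 3 (SS p 3) (-(2/9)*(x:ℚ)^2 + 4/9*(p:ℚ) - 7*(p:ℚ)^2/(72*(x:ℚ)^2)) := by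
  have hp : p.Prime := Fact.out
  have hodd : p % 2 = 1 := (hp.eq_two_or_odd).resolve_left (by omega)
  obtain ⟨m, hpm⟩ : ∃ m, p = 6*m+1 := ⟨p/6, by omega⟩
  have hm : 1 ≤ m := by omega
  obtain ⟨τ, h12, hτ, C1, C2, C3⟩ := case1_alg hpm hm
  obtain ⟨J, K, hJK, hX, hb⟩ := jac_link hpm hm hxy
  obtain ⟨hB, hU⟩ := b_ident hpm hm τ h12 hτ
  rw [← hb] at hB
  have n2 := two_unit (p := p) (r := 3) (by omega)
  have n3 : IsUnit (3:ZMod (p^3)) := by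
    have := nat_unit' (p := p) (r := 3) (k := 3) (by omega) (by omega)
    exact_mod_cast this
  have n8 : IsUnit (8:ZMod (p^3)) := by
    have := n2.pow 3
    norm_num at this; exact this
  obtain ⟨D1, D2, D3, D4⟩ := s_core (p:ZMod (p^3)) J K _ _ _ (x:ZMod (p^3)) p_pow_zero n8 hJK hX hB hU C1
  have hE : 9*iot p 3 (SS p 2) + 9*iot p 3 (SS p 1) + 2*iot p 3 (SS p 0) = 2*K^2 := by
    apply D4.mul_left_cancel
    rw [C3]; linear_combination -2*D3
  have hrel := SS_rel (p := p) (r := 3) le_rfl (by omega)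
  have hpx : ¬ (p:ℤ) ∣ x := by
    rintro ⟨c, rfl⟩
    have hP := Nat.prime_iff_prime_int.1 hp
    have h : (p:ℤ) ∣ 3*y^2 := ⟨1-p*c^2, by linear_combination -hxy⟩
    have h' : (p:ℤ) ∣ y := by
      rcases hP.dvd_or_dvd h with h | h
      · exfalso
        have := Int.le_of_dvd (by norm_num) h
        omega
      · exact hP.dvd_of_dvd_pow h
    obtain ⟨d, rfl⟩ := h'
    have : (p:ℤ)*1 = p*(p*(c^2+3*d^2)) := by linear_combination hxy
    have := mul_left_cancel₀ hP.ne_zero this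
    have h2 := Int.le_of_dvd (by norm_num) (Dvd.intro _ this.symm)
    omega
  have ux := Un_int hpx
  have u2 := Un_two (p := p) (by omega)
  have u3 := Un_three (p := p) hp3
  have u4x : Un p (4*(x:ℚ)^2) := by
    have := Un_mul (Un_mul u2 u2) (Un_pow ux 2)
    norm_num at this; exact this
  have u9 : Un p (9:ℚ) := by
    have := Un_mul u3 u3
    norm_num at this; exact this
  have u72 : Un p (72:ℚ) := by
    have := Un_mul (Un_pow u2 3) u9
    norm_num at this; exact this
  have hx0 : (x:ℚ) ≠ 0 := Un_ne ux
  set Z : ℚ := (p:ℚ)^2/(4*(x:ℚ)^2) with hZ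
  have pp : pI p ((p:ℚ)^2) := pI_pow (pI_nat _) 2
  have pZ : pI p Z := pI_div pp u4x
  have px2 : pI p ((x:ℚ)^2) := pI_pow (pI_int x) 2
  have iZ : iot p 3 Z = K^2 := by
    apply (iot_unit (r := 3) u4x).mul_right_cancel
    rw [iot_div pp u4x, iot_lit 4 px2, iot_pow (pI_int x), iot_int, D2, iot_pow (pI_nat _), iot_nat]
  have l4 : ∀ k : ℕ, pI p (k:ℚ) := fun k => pI_nat k
  have p4x : pI p (4*(x:ℚ)^2) := u4x.pI
  have p5p : pI p (5*(p:ℚ)) := by have := pI_nat (p := p) (5*p); push_cast at this; exact this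
  have p16x : pI p (16*(x:ℚ)^2) := by
    have := pI_int (p := p) (16*x^2); push_cast at this; exact this
  have p32p : pI p (32*(p:ℚ)) := by have := pI_nat (p := p) (32*p); push_cast at this; exact this
  have p28Z : pI p (28*Z) := by have := pI_mul (pI_nat (p := p) 28) pZ; push_cast at this; exact this
  have t2 : 4/9*(x:ℚ)^2 - 5/9*(p:ℚ) + (p:ℚ)^2/(36*(x:ℚ)^2) = (4*(x:ℚ)^2-5*p+Z)/9 := by
    rw [hZ]; field_simp; ring
  have t3 : -(2/9)*(x:ℚ)^2 + 4/9*(p:ℚ) - 7*(p:ℚ)^2/(72*(x:ℚ)^2) = (-(16*(x:ℚ)^2)+32*p-28*Z)/72 := by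
    rw [hZ]; field_simp; ring
  have q2 : pI p (4*(x:ℚ)^2-5*p+Z) := pI_add (pI_sub p4x p5p) pZ
  have q3 : pI p (-(16*(x:ℚ)^2)+32*p-28*Z) := pI_sub (pI_add (pI_neg p16x) p32p) p28Z
  have w2 : 9*iot p 3 ((4*(x:ℚ)^2-5*p+Z)/9) = 4*(x:ZMod (p^3))^2-5*(p:ZMod (p^3))+K^2 := by
    rw [← iot_lit 9 (pI_div q2 u9), mul_div_cancel₀ _ (by norm_num : (9:ℚ) ≠ 0), iot_add (pI_sub p4x p5p) pZ, iot_sub p4x p5p,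
      iot_lit 4 px2, iot_lit 5 (pI_nat _), iot_pow (pI_int x), iot_int, iot_nat, iZ]
  have w3 : 72*iot p 3 ((-(16*(x:ℚ)^2)+32*p-28*Z)/72) = -(16*(x:ZMod (p^3))^2)+32*(p:ZMod (p^3))-28*K^2 := by
    rw [← iot_lit 72 (pI_div q3 u72), mul_div_cancel₀ _ (by norm_num : (72:ℚ) ≠ 0), iot_sub (pI_add (pI_neg p16x) p32p) p28Z,
      iot_add (pI_neg p16x) p32p, iot_neg p16x,
      iot_lit 16 px2, iot_lit 32 (pI_nat _), iot_lit 28 pZ, iot_pow (pI_int x), iot_int, iot_nat, iZ]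
  rw [t2, t3]
  constructor
  · refine iot_eq_imp (SS_pI (by omega) _) (pI_div q2 u9) ?_
    apply (n3.mul n3).mul_left_cancel
    linear_combination hE - 3*C2 + D1 - w2
  · refine iot_eq_imp (SS_pI (by omega) _) (pI_div q3 u72) ?_
    apply (n8.mul (n3.mul n3)).mul_left_cancel
    linear_combination 12*hrel - 16*hE + 24*C2 - 4*D1 - w3

lemma SS_eq (p j : ℕ) : ∑ k ∈ Finset.range p, (k:ℚ)^j * ((2*k).choose k : ℚ)^3 / 16^k = SS p j := by
  unfold SS aS
  exact sum_congr rfl fun k _ => by rw [mul_div_assoc]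

end final

theorem statement3 (p : ℕ) (hp : p.Prime) (hp3 : 3 < p) :
    (∀ x y : ℤ, p % 3 = 1 → (p : ℤ) = x^2 + 3*y^2 →
      ratCongr p 3
        (∑ k ∈ Finset.range p, (k:ℚ)^2 * ((2*k).choose k : ℚ)^3 / 16^k)
        (4/9*(x:ℚ)^2 - 5/9*(p:ℚ) + (p:ℚ)^2/(36*(x:ℚ)^2)) ∧
      ratCongr p 3
        (∑ k ∈ Finset.range p, (k:ℚ)^3 * ((2*k).choose k : ℚ)^3 / 16^k)
        (-(2/9)*(x:ℚ)^2 + 4/9*(p:ℚ) - 7*(p:ℚ)^2/(72*(x:ℚ)^2))) ∧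
    (p % 3 = 2 →
      ratCongr p 2
        (∑ k ∈ Finset.range p, (k:ℚ)^2 * ((2*k).choose k : ℚ)^3 / 16^k)
        (-(2/9)*R3 p - (p:ℚ)/3) ∧
      ratCongr p 2
        (∑ k ∈ Finset.range p, (k:ℚ)^3 * ((2*k).choose k : ℚ)^3 / 16^k)
        (4/9*R3 p + (p:ℚ)/3)) := by
  haveI : Fact p.Prime := ⟨hp⟩
  simp only [SS_eq]
  exact ⟨fun x y h h' => case1 hp3 h h', fun h => case2 hp3 h⟩
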